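/- arXiv:1911.02820 — 2 statements merged into one kernel-verified Lean document; each statement's English description precedes it below -/
import Mathlib

section
/- Let d ∈ {2,3} and c > 0. Let ψ be a smooth map on the closed half-space {x ∈ ℝ^d : x₁ ≥ 0} satisfying ic ∂_{x₁}ψ + Δψ + (1 − |ψ|²)ψ = 0 on the open half-space ℝ^d_+ = {x : x₁ > 0}, with ψ = 1 on the boundary hyperplane {x₁ = 0}, and with finite energy ∫_{ℝ^d_+} (1/2)|∇ψ|² + (1/4)(1 − |ψ|²)² < ∞. Then ψ is identically equal to 1. -/
/-!
Write `ψ = 1 + w`. The proof has two independent steps.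

*The normal derivative vanishes on the boundary.* Multiplying the equation by `∂₀ψ` the first-order
term `ic∂₀ψ` drops out, and the row
`T_i = ⟨∂_iψ, ∂₀ψ⟩ - δ_{i0} (½|∇ψ|² + ¼(1 - |ψ|²)²)` of the stress tensor is divergence-free. It is
bounded by a multiple of the energy density, so integrating against a cutoff at scale `R` produces
an error `O(1/R)` (`flux_vanish`). On the boundary `ψ = 1` and all tangential derivatives vanish, so
that `T_0 = ½|∂₀ψ|² ≥ 0`; its integral over any ball of the boundary is therefore zero, and `w` has
vanishing Cauchy data (`JetSol.bot1`).

*Unique continuation.* On bounded sets `|Δw|² ≤ K(|w|² + |∂₀w|²)` (`JetSol.lap_le`). A Carleman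
estimate with a quadratic weight (`carleman_pair`, `carleman_box`) shows that `w` vanishes in a cap
around the normal through any point. The weight `(x₀ - 2s)²/2 - |y - y_q|²/8` has no critical point
in the strip `0 ≤ x₀ ≤ s`, is pseudoconvex for the Laplacian where it exceeds `s²/2`, and is at most
`s²/2` on the top face of the strip and on the sides of a wide box, so a single application covers
the point `q`; here `y` are the tangential coordinates and `2s = 2q₀ + 2` (`unique_cont`).

Both steps use only the divergence theorem on boxes, for real functions with partial derivatives
recorded by `HasGrad`.
-/

open MeasureTheory Filter Complex Metric Topology

noncomputable section

abbrev Ed (d : ℕ) := EuclideanSpace ℝ (Fin d)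

/-- Partial derivative of `ψ` in the `i`-th coordinate direction. -/
def pd {d : ℕ} (ψ : Ed d → ℂ) (i : Fin d) (x : Ed d) : ℂ :=
  fderiv ℝ ψ x (EuclideanSpace.single i 1)

/-- Laplacian of `ψ`. -/
def lap {d : ℕ} (ψ : Ed d → ℂ) (x : Ed d) : ℂ :=
  ∑ i : Fin d, fderiv ℝ (fun y => fderiv ℝ ψ y (EuclideanSpace.single i 1)) x
      (EuclideanSpace.single i 1)

/-- The Gross–Pitaevskii traveling wave equation with speed `c` on `ℝ^d`:
`ic ∂_{x₁}ψ + Δψ + (1 - |ψ|²)ψ = 0`. -/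
def GPeq {d : ℕ} [NeZero d] (c : ℝ) (ψ : Ed d → ℂ) : Prop :=
  ∀ x, Complex.I * (c : ℂ) * pd ψ 0 x + lap ψ x + (1 - (‖ψ x‖ : ℂ) ^ 2) * ψ x = 0

/-- `|∇ψ|²`. -/
def gradSq {d : ℕ} (ψ : Ed d → ℂ) (x : Ed d) : ℝ := ∑ i : Fin d, ‖pd ψ i x‖ ^ 2

/-- Energy density `(1/2)|∇ψ|² + (1/4)(1 - |ψ|²)²`. -/
def eDen {d : ℕ} (ψ : Ed d → ℂ) (x : Ed d) : ℝ :=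
  1 / 2 * gradSq ψ x + 1 / 4 * (1 - ‖ψ x‖ ^ 2) ^ 2

/-- Energy `E(ψ)`. -/
def energy {d : ℕ} (ψ : Ed d → ℂ) : ℝ := ∫ x, eDen ψ x

/-- Finite energy. -/
def FiniteEnergy {d : ℕ} (ψ : Ed d → ℂ) : Prop := Integrable (eDen ψ)

/-- Momentum `P(ψ) = -∫ ∂_{x₁}(Im ψ)(Re ψ - 1)`. -/
def mom {d : ℕ} [NeZero d] (ψ : Ed d → ℂ) : ℝ :=
  -∫ x, (pd ψ 0 x).im * ((ψ x).re - 1)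

/-- Lagrangian `I^c(ψ) = E(ψ) - c P(ψ)`. -/
def lagr {d : ℕ} [NeZero d] (c : ℝ) (ψ : Ed d → ℂ) : ℝ := energy ψ - c * mom ψ

/-- `ψ` is not a constant of modulus 1. -/
def Nontriv {d : ℕ} (ψ : Ed d → ℂ) : Prop := ¬∃ z : ℂ, ‖z‖ = 1 ∧ ψ = fun _ => z

/-- The quadratic form `Q` of the second variation of `I^c` at `ψ`:
`Q(φ) = ∫ |∇φ|² - c⟨φ, i∂₁φ⟩ - (1-|ψ|²)|φ|² + 2⟨φ,ψ⟩²` with `⟨z₁,z₂⟩ = Re (z₁ conj z₂)`. -/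
def Qform {d : ℕ} [NeZero d] (c : ℝ) (ψ φ : Ed d → ℂ) : ℝ :=
  ∫ x, (gradSq φ x - c * (φ x * (starRingEnd ℂ) (Complex.I * pd φ 0 x)).re
    - (1 - ‖ψ x‖ ^ 2) * ‖φ x‖ ^ 2 + 2 * ((φ x * (starRingEnd ℂ) (ψ x)).re) ^ 2)

/-- The Morse index of `ψ` is at most `m`: every subspace of smooth compactly supported
functions on which `Q` is negative definite has dimension at most `m`. -/
def MorseIndexLE {d : ℕ} [NeZero d] (c : ℝ) (ψ : Ed d → ℂ) (m : ℕ) : Prop :=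
  ∀ Y : Submodule ℝ (Ed d → ℂ),
    (∀ φ ∈ Y, ContDiff ℝ (⊤ : ℕ∞) φ ∧ HasCompactSupport φ) →
    (∀ φ ∈ Y, φ ≠ 0 → Qform c ψ φ < 0) → Module.rank ℝ Y ≤ m

/-- `C^k_loc` convergence: uniform convergence of all iterated derivatives on every
compact set. -/
def LocCk {d : ℕ} (ψn : ℕ → Ed d → ℂ) (ψ : Ed d → ℂ) : Prop :=
  ∀ (k : ℕ) (K : Set (Ed d)), IsCompact K →
    TendstoUniformlyOn (fun n => iteratedFDeriv ℝ k (ψn n)) (iteratedFDeriv ℝ k ψ) atTop K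

/-! ### Gradients in coordinates and the divergence theorem on boxes -/

/-- `f` is differentiable at `x` with coordinate partial derivatives `f' i`. -/
def HasGrad {n : ℕ} (f : Ed n → ℝ) (f' : Fin n → ℝ) (x : Ed n) : Prop :=
  ∃ L : Ed n →L[ℝ] ℝ, HasFDerivAt f L x ∧ ∀ i, L (EuclideanSpace.single i 1) = f' i

namespace HasGrad

variable {n : ℕ} {f g : Ed n → ℝ} {f' g' : Fin n → ℝ} {x : Ed n}

theorem congr_grad (hf : HasGrad f f' x) (h : ∀ i, f' i = g' i) : HasGrad f g' x := by
  obtain ⟨L, h1, h2⟩ := hf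
  exact ⟨L, h1, fun i => (h2 i).trans (h i)⟩

theorem const (c : ℝ) : HasGrad (fun _ : Ed n => c) (fun _ => 0) x :=
  ⟨0, hasFDerivAt_const c x, fun _ => rfl⟩

theorem coord (i : Fin n) : HasGrad (fun y : Ed n => y i) (fun j => if j = i then 1 else 0) x := by
  refine ⟨EuclideanSpace.proj i, (EuclideanSpace.proj i : Ed n →L[ℝ] ℝ).hasFDerivAt, fun j => ?_⟩
  simp [EuclideanSpace.proj, eq_comm]

theorem add (hf : HasGrad f f' x) (hg : HasGrad g g' x) :
    HasGrad (fun y => f y + g y) (fun i => f' i + g' i) x := by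
  obtain ⟨L, h1, h2⟩ := hf
  obtain ⟨M, h3, h4⟩ := hg
  exact ⟨L + M, h1.add h3, fun i => by simp [h2, h4]⟩

theorem sub (hf : HasGrad f f' x) (hg : HasGrad g g' x) :
    HasGrad (fun y => f y - g y) (fun i => f' i - g' i) x := by
  obtain ⟨L, h1, h2⟩ := hf
  obtain ⟨M, h3, h4⟩ := hg
  exact ⟨L - M, h1.sub h3, fun i => by simp [h2, h4]⟩

theorem mul (hf : HasGrad f f' x) (hg : HasGrad g g' x) :
    HasGrad (fun y => f y * g y) (fun i => f' i * g x + f x * g' i) x := by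
  obtain ⟨L, h1, h2⟩ := hf
  obtain ⟨M, h3, h4⟩ := hg
  exact ⟨_, h1.mul h3, fun i => by simp [h2, h4]; ring⟩

theorem const_mul (c : ℝ) (hf : HasGrad f f' x) :
    HasGrad (fun y => c * f y) (fun i => c * f' i) x :=
  ((const c).mul hf).congr_grad fun i => by ring

theorem sq (hf : HasGrad f f' x) :
    HasGrad (fun y => f y ^ 2) (fun i => 2 * f x * f' i) x := by
  have := hf.mul hf
  simp only [← pow_two] at this
  exact this.congr_grad fun i => by ring

theorem sum {ι : Type*} {s : Finset ι} {F : ι → Ed n → ℝ} {F' : ι → Fin n → ℝ}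
    (h : ∀ j ∈ s, HasGrad (F j) (F' j) x) :
    HasGrad (fun y => ∑ j ∈ s, F j y) (fun i => ∑ j ∈ s, F' j i) x := by
  choose! L h1 h2 using h
  refine ⟨∑ j ∈ s, L j, HasFDerivAt.fun_sum h1, fun i => ?_⟩
  simp only [_root_.sum_apply]
  exact Finset.sum_congr rfl fun j hj => h2 j hj i

theorem comp {θ : ℝ → ℝ} {θ' : ℝ} (hθ : HasDerivAt θ θ' (f x)) (hf : HasGrad f f' x) :
    HasGrad (fun y => θ (f y)) (fun i => θ' * f' i) x := by
  obtain ⟨L, h1, h2⟩ := hf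
  exact ⟨_, hθ.comp_hasFDerivAt x h1, fun i => by simp [h2]⟩

end HasGrad

/-- The closed box with corners `a` and `b`. -/
def cbox {n : ℕ} (a b : Fin n → ℝ) : Set (Ed n) := {x | ∀ i, a i ≤ x i ∧ x i ≤ b i}

/-- The open box with corners `a` and `b`. -/
def obox {n : ℕ} (a b : Fin n → ℝ) : Set (Ed n) := {x | ∀ i, a i < x i ∧ x i < b i}

theorem obox_subset {n : ℕ} (a b : Fin n → ℝ) : obox a b ⊆ cbox a b :=
  fun _ hx i => ⟨(hx i).1.le, (hx i).2.le⟩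

theorem toLp_preimage_cbox {n : ℕ} (a b : Fin n → ℝ) :
    (WithLp.toLp 2 : (Fin n → ℝ) → Ed n) ⁻¹' cbox a b = Set.Icc a b := by
  ext y
  simp [cbox, Pi.le_def, forall_and]

theorem toLp_preimage_obox {n : ℕ} (a b : Fin n → ℝ) :
    (WithLp.toLp 2 : (Fin n → ℝ) → Ed n) ⁻¹' obox a b
      = Set.pi Set.univ fun i => Set.Ioo (a i) (b i) := by
  ext y
  simp [obox]

theorem isCompact_cbox {n : ℕ} (a b : Fin n → ℝ) : IsCompact (cbox a b) := by
  have h : cbox a b = (EuclideanSpace.equiv (Fin n) ℝ).symm '' Set.Icc a b := by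
    rw [ContinuousLinearEquiv.image_symm_eq_preimage]
    ext y
    simp [cbox, Pi.le_def, forall_and]
  rw [h]
  exact isCompact_Icc.image (EuclideanSpace.equiv (Fin n) ℝ).symm.continuous

theorem isOpen_obox {n : ℕ} (a b : Fin n → ℝ) : IsOpen (obox a b) := by
  have : obox a b = ⋂ i, {x : Ed n | a i < x i ∧ x i < b i} := by
    ext; simp [obox]
  rw [this]
  refine isOpen_iInter_of_finite fun i => ?_
  have hc : Continuous fun x : Ed n => x i := by fun_prop
  exact (isOpen_lt continuous_const hc).inter (isOpen_lt hc continuous_const)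

/-- Integrals over a box are the same in `Fin n → ℝ` and in Euclidean space; the boundary of the
box is negligible. -/
theorem setIntegral_obox {n : ℕ} (a b : Fin n → ℝ) (D : Ed n → ℝ) :
    ∫ x in obox a b, D x = ∫ y in Set.Icc a b, D (WithLp.toLp 2 y) := by
  rw [← (PiLp.volume_preserving_toLp (Fin n)).setIntegral_preimage_emb
    (MeasurableEquiv.toLp 2 (Fin n → ℝ)).measurableEmbedding, toLp_preimage_obox]
  exact setIntegral_congr_set Measure.univ_pi_Ioo_ae_eq_Icc

theorem integrableOn_obox {n : ℕ} {a b : Fin n → ℝ} {D : Ed n → ℝ}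
    (hD : ContinuousOn D (cbox a b)) : IntegrableOn D (obox a b) :=
  (hD.integrableOn_compact (isCompact_cbox a b)).mono_set (obox_subset a b)

/-- The divergence theorem on a box for a vector field vanishing on every face except the bottom
one `{x₀ = a₀}`. -/
theorem div_box {n : ℕ} {a b : Fin (n + 1) → ℝ} (hab : a ≤ b)
    (T : Fin (n + 1) → Ed (n + 1) → ℝ) (T' : Fin (n + 1) → Fin (n + 1) → Ed (n + 1) → ℝ)
    (D : Ed (n + 1) → ℝ) (hT : ∀ i, ContinuousOn (T i) (cbox a b))
    (hT' : ∀ i, ∀ x ∈ obox a b, HasGrad (T i) (fun j => T' i j x) x)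
    (hD : ContinuousOn D (cbox a b)) (hDT : ∀ x ∈ obox a b, D x = ∑ i, T' i i x)
    (hup : ∀ i, ∀ x ∈ cbox a b, x i = b i → T i x = 0)
    (hlo : ∀ i, i ≠ 0 → ∀ x ∈ cbox a b, x i = a i → T i x = 0) :
    ∫ x in obox a b, D x =
      - ∫ y in Set.Icc (a ∘ Fin.succ) (b ∘ Fin.succ),
          T 0 (WithLp.toLp 2 (Fin.cons (a 0) y : Fin (n + 1) → ℝ)) := by
  set e : (Fin (n + 1) → ℝ) → Ed (n + 1) := WithLp.toLp 2 with he
  have hecont : Continuous e := PiLp.continuous_toLp 2 _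
  have hecb : Set.MapsTo e (Set.Icc a b) (cbox a b) := by
    intro y hy
    have : y ∈ e ⁻¹' cbox a b := by rw [toLp_preimage_cbox]; exact hy
    exact this
  have heob : ∀ y ∈ Set.pi Set.univ (fun i => Set.Ioo (a i) (b i)), e y ∈ obox a b := by
    intro y hy
    have : y ∈ e ⁻¹' obox a b := by rw [toLp_preimage_obox]; exact hy
    exact this
  choose! L hL1 hL2 using hT'
  let E := (EuclideanSpace.equiv (Fin (n + 1)) ℝ).symm
  have hEe : ∀ y, E y = e y := fun y => rfl
  have hEs : ∀ i : Fin (n + 1), E (Pi.single i 1) = EuclideanSpace.single i 1 := fun i => rfl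
  have hDc : ContinuousOn (fun y => D (e y)) (Set.Icc a b) := hD.comp hecont.continuousOn hecb
  have hae : (Set.pi Set.univ fun i => Set.Ioo (a i) (b i)) =ᵐ[volume] Set.Icc a b :=
    Measure.univ_pi_Ioo_ae_eq_Icc
  have hmeas : MeasurableSet (Set.pi Set.univ fun i => Set.Ioo (a i) (b i)) :=
    MeasurableSet.univ_pi fun i => measurableSet_Ioo
  have hsum : ∀ y ∈ Set.pi Set.univ (fun i => Set.Ioo (a i) (b i)),
      D (e y) = ∑ i, ((L i (e y)).comp (E : (Fin (n + 1) → ℝ) →L[ℝ] Ed (n + 1)))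
        (Pi.single i 1) := by
    intro y hy
    rw [hDT _ (heob y hy)]
    refine Finset.sum_congr rfl fun i _ => ?_
    simp only [ContinuousLinearMap.comp_apply, ContinuousLinearEquiv.coe_coe, hEs]
    exact (hL2 i _ (heob y hy) i).symm
  have key := integral_divergence_of_hasFDerivAt_off_countable' a b hab (fun i y => T i (e y))
    (fun i y => (L i (e y)).comp (E : (Fin (n + 1) → ℝ) →L[ℝ] Ed (n + 1))) ∅
    Set.countable_empty (fun i => (hT i).comp hecont.continuousOn hecb)
    (fun y hy i => (hL1 i (e y) (heob y hy.1)).comp y E.hasFDerivAt)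
    (by
      have h1 : IntegrableOn (fun y => D (e y)) (Set.Icc a b) :=
        hDc.integrableOn_compact isCompact_Icc
      have h2 := h1.congr_set_ae hae
      exact (h2.congr_fun hsum hmeas).congr_set_ae hae.symm)
  rw [setIntegral_obox]
  rw [← setIntegral_congr_set hae] at key ⊢
  rw [setIntegral_congr_fun hmeas hsum, key]
  have hins : ∀ (i : Fin (n + 1)) (t : ℝ), a i ≤ t → t ≤ b i →
      ∀ y ∈ Set.Icc (a ∘ i.succAbove) (b ∘ i.succAbove),
      e (i.insertNth t y) ∈ cbox a b := by
    intro i t h1 h2 y hy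
    refine hecb ?_
    rw [Fin.insertNth_mem_Icc]
    exact ⟨⟨h1, h2⟩, hy⟩
  have hfront : ∀ i : Fin (n + 1), ∫ y in Set.Icc (a ∘ i.succAbove) (b ∘ i.succAbove),
      T i (e (i.insertNth (b i) y)) = 0 := by
    intro i
    refine setIntegral_eq_zero_of_forall_eq_zero fun y hy => ?_
    exact hup i _ (hins i _ (hab i) le_rfl y hy) (by simp [he])
  have hback : ∀ i : Fin (n + 1), i ≠ 0 → ∫ y in Set.Icc (a ∘ i.succAbove) (b ∘ i.succAbove),
      T i (e (i.insertNth (a i) y)) = 0 := by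
    intro i hi
    refine setIntegral_eq_zero_of_forall_eq_zero fun y hy => ?_
    exact hlo i hi _ (hins i _ le_rfl (hab i) y hy) (by simp [he])
  rw [Finset.sum_eq_single 0]
  · rw [hfront, zero_sub]
    simp only [Fin.insertNth_zero', Fin.succAbove_zero]
  · intro i _ hi
    rw [hfront, hback i hi, sub_zero]
  · simp

/-! ### The Carleman identity -/

/-- The flux of the Carleman identity, as a function of the gradient `g` and the (constant,
diagonal) Hessian `H` of the exponent, and of the value `v` and gradient `v1` of the conjugated
function.  The term with `k` shifts the Hessian `H` by a multiple of the identity. -/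
def cflux {n : ℕ} (g H : Fin n → ℝ) (k v : ℝ) (v1 : Fin n → ℝ) (i : Fin n) : ℝ :=
  -4 * (v1 i * ∑ j, g j * v1 j) + 2 * (g i * ∑ j, v1 j ^ 2)
    - (2 * (∑ j, H j) + 4 * k) * (v * v1 i) - 2 * ((∑ j, g j ^ 2) * (g i * v ^ 2))

/-- The partial derivatives of `cflux`. -/
def cfluxD {n : ℕ} (g H : Fin n → ℝ) (k v : ℝ) (v1 : Fin n → ℝ) (v2 : Fin n → Fin n → ℝ)
    (i m : Fin n) : ℝ :=
  -4 * (v2 i m * (∑ j, g j * v1 j) + v1 i * (H m * v1 m + ∑ j, g j * v2 j m))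
    + 2 * ((if m = i then H i else 0) * (∑ j, v1 j ^ 2) + g i * ∑ j, 2 * v1 j * v2 j m)
    - (2 * (∑ j, H j) + 4 * k) * (v1 m * v1 i + v * v2 i m)
    - 2 * ((2 * g m * H m) * (g i * v ^ 2)
      + (∑ j, g j ^ 2) * ((if m = i then H i else 0) * v ^ 2 + g i * (2 * v * v1 m)))

theorem cflux_hasGrad {n : ℕ} {x : Ed n} {g : Fin n → Ed n → ℝ} {H : Fin n → ℝ} (k : ℝ)
    {v : Ed n → ℝ} {v1 : Fin n → Ed n → ℝ} {v2 : Fin n → Fin n → ℝ}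
    (hg : ∀ j, HasGrad (g j) (fun i => if i = j then H j else 0) x)
    (hv : HasGrad v (fun i => v1 i x) x) (hv1 : ∀ j, HasGrad (v1 j) (v2 j) x) (i : Fin n) :
    HasGrad (fun y => cflux (fun j => g j y) H k (v y) (fun j => v1 j y) i)
      (cfluxD (fun j => g j x) H k (v x) (fun j => v1 j x) v2 i) x := by
  have hG := HasGrad.sum (s := Finset.univ) fun j _ => (hg j).mul (hv1 j)
  have hN := HasGrad.sum (s := Finset.univ) fun j _ => (hv1 j).sq
  have hQ := HasGrad.sum (s := Finset.univ) fun j _ => (hg j).sq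
  refine ((((((hv1 i).mul hG).const_mul (-4)).add (((hg i).mul hN).const_mul 2)).sub
    ((hv.mul (hv1 i)).const_mul (2 * (∑ j, H j) + 4 * k))).sub
    ((hQ.mul ((hg i).mul hv.sq)).const_mul 2)).congr_grad fun m => ?_
  simp only [cfluxD, Finset.sum_add_distrib, ite_mul, zero_mul, mul_ite, mul_zero,
    Finset.sum_ite_eq, Finset.mem_univ, if_true]

/-- The commutator identity behind the Carleman estimate: with `S = Λ + |g|²v` the symmetric and
`A = -2g·∇v - (tr H)v` the antisymmetric part of the conjugated Laplacian, the divergence of the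
flux is `2SA` minus the quadratic forms of the Hessian and the divergence of `4kv∇v`. -/
theorem sum_cfluxD {n : ℕ} (g H : Fin n → ℝ) (k v : ℝ) (v1 : Fin n → ℝ)
    (v2 : Fin n → Fin n → ℝ) (hs : ∀ i j, v2 i j = v2 j i) :
    ∑ i, cfluxD g H k v v1 v2 i i =
      2 * ((∑ i, v2 i i) + (∑ j, g j ^ 2) * v) * (-2 * (∑ j, g j * v1 j) - (∑ j, H j) * v)
      - 4 * (∑ j, H j * v1 j ^ 2) - 4 * (∑ j, H j * g j ^ 2) * v ^ 2
      - 4 * k * ((∑ j, v1 j ^ 2) + v * ∑ i, v2 i i) := by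
  have hcross : ∑ i, v1 i * ∑ j, g j * v2 j i = ∑ i, g i * ∑ j, v1 j * v2 j i := by
    simp only [Finset.mul_sum]
    rw [Finset.sum_comm]
    refine Finset.sum_congr rfl fun i _ => Finset.sum_congr rfl fun j _ => ?_
    rw [hs i j]; ring
  have hterm : ∀ i, cfluxD g H k v v1 v2 i i =
      -4 * (∑ j, g j * v1 j) * v2 i i - 4 * (H i * v1 i ^ 2) - 4 * (v1 i * ∑ j, g j * v2 j i)
      + 2 * (∑ j, v1 j ^ 2) * H i + 4 * (g i * ∑ j, v1 j * v2 j i)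
      - (2 * (∑ j, H j) + 4 * k) * v1 i ^ 2 - (2 * (∑ j, H j) + 4 * k) * v * v2 i i
      - 4 * v ^ 2 * (H i * g i ^ 2) - 2 * (∑ j, g j ^ 2) * v ^ 2 * H i
      - 4 * (∑ j, g j ^ 2) * v * (g i * v1 i) := by
    intro i
    have h2 : ∑ j, 2 * v1 j * v2 j i = 2 * ∑ j, v1 j * v2 j i := by
      rw [Finset.mul_sum]; exact Finset.sum_congr rfl fun j _ => by ring
    simp only [cfluxD, if_true, h2]
    ring
  simp only [hterm, Finset.sum_add_distrib, Finset.sum_sub_distrib, ← Finset.mul_sum, hcross]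
  ring

/-- The Carleman identity with the square completed: `2SA - 4kv Λ` is at most
`(S + A)² + 4k²v² + 4k|g|²v²`, and `S + A` is the conjugated Laplacian. -/
theorem sum_cfluxD_le {n : ℕ} (g H : Fin n → ℝ) (k α β v : ℝ) (v1 : Fin n → ℝ)
    (v2 : Fin n → Fin n → ℝ) (hs : ∀ i j, v2 i j = v2 j i)
    (hH : ∀ i, α ≤ H i + k)
    (hHg : (k + β) * (∑ j, g j ^ 2) ≤ ∑ j, H j * g j ^ 2) :
    ∑ i, cfluxD g H k v v1 v2 i i ≤
      ((∑ i, v2 i i) + (∑ j, g j ^ 2) * v - 2 * (∑ j, g j * v1 j) - (∑ j, H j) * v) ^ 2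
      + 4 * k ^ 2 * v ^ 2 - 4 * α * (∑ j, v1 j ^ 2) - 4 * β * (∑ j, g j ^ 2) * v ^ 2 := by
  rw [sum_cfluxD g H k v v1 v2 hs]
  have h1 : α * (∑ j, v1 j ^ 2) ≤ (∑ j, H j * v1 j ^ 2) + k * ∑ j, v1 j ^ 2 := by
    rw [Finset.mul_sum, Finset.mul_sum, ← Finset.sum_add_distrib]
    refine Finset.sum_le_sum fun i _ => ?_
    nlinarith [hH i, sq_nonneg (v1 i)]
  have h2 := mul_le_mul_of_nonneg_right hHg (sq_nonneg v)
  set G := ∑ j, g j * v1 j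
  set N := ∑ j, v1 j ^ 2
  set Q := ∑ j, g j ^ 2
  set Λ := ∑ i, v2 i i
  set L := ∑ j, H j
  set P := ∑ j, H j * g j ^ 2
  nlinarith [sq_nonneg (Λ + Q * v + 2 * k * v), sq_nonneg (-2 * G - L * v)]

/-- Conjugation of the Laplacian by an exponential weight. -/
theorem conj_lap {n : ℕ} (g H : Fin n → ℝ) (e w : ℝ) (w1 : Fin n → ℝ) (w2 : Fin n → Fin n → ℝ) :
    (∑ i, e * (w2 i i + g i * w1 i + g i * w1 i + g i * g i * w + H i * w))
      + (∑ j, g j ^ 2) * (e * w) - 2 * (∑ j, g j * (e * (w1 j + g j * w))) - (∑ j, H j) * (e * w)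
      = e * ∑ i, w2 i i := by
  simp only [Finset.mul_sum, Finset.sum_mul, ← Finset.sum_add_distrib, ← Finset.sum_sub_distrib]
  exact Finset.sum_congr rfl fun i _ => by ring

/-! ### Pointwise Carleman estimate -/

/-- A pair of real functions (indexed by `Fin 2`) on the half-space `{x₀ ≥ 0}` together with their
first and second partial derivatives, all continuous up to the boundary. -/
structure Jet {n : ℕ} (w : Fin 2 → Ed (n + 1) → ℝ) (w1 : Fin 2 → Fin (n + 1) → Ed (n + 1) → ℝ)
    (w2 : Fin 2 → Fin (n + 1) → Fin (n + 1) → Ed (n + 1) → ℝ) : Prop where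
  cont0 : ∀ k, ContinuousOn (w k) {x | 0 ≤ x 0}
  cont1 : ∀ k i, ContinuousOn (w1 k i) {x | 0 ≤ x 0}
  cont2 : ∀ k i j, ContinuousOn (w2 k i j) {x | 0 ≤ x 0}
  grad0 : ∀ k x, 0 < x 0 → HasGrad (w k) (fun j => w1 k j x) x
  grad1 : ∀ k i x, 0 < x 0 → HasGrad (w1 k i) (fun j => w2 k i j x) x
  symm : ∀ k i j x, 0 < x 0 → w2 k i j x = w2 k j i x

/-- The quadratic Carleman weight with diagonal Hessian `h` and critical point `z`. -/
def wt {n : ℕ} (h z : Fin n → ℝ) (x : Ed n) : ℝ := ∑ j, 1 / 2 * (h j * (x j - z j) ^ 2)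

theorem wt_grad {n : ℕ} (h z : Fin n → ℝ) (x : Ed n) :
    HasGrad (wt h z) (fun j => h j * (x j - z j)) x := by
  have := HasGrad.sum (s := Finset.univ) fun j _ =>
    (((((HasGrad.coord (x := x) j).sub (HasGrad.const (z j))).sq).const_mul (h j)).const_mul (1/2))
  refine HasGrad.congr_grad (f := wt h z) this fun i => ?_
  simp only [sub_zero, mul_ite, mul_one, mul_zero, Finset.sum_ite_eq, Finset.mem_univ, if_true]
  ring

theorem wt_slope_grad {n : ℕ} (h z : Fin n → ℝ) (x : Ed n) (j : Fin n) :
    HasGrad (fun y : Ed n => h j * (y j - z j)) (fun i => if i = j then h j else 0) x :=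
  (((HasGrad.coord (x := x) j).sub (HasGrad.const (z j))).const_mul (h j)).congr_grad
    fun i => by simp

theorem wt_continuous {n : ℕ} (h z : Fin n → ℝ) : Continuous (wt h z) := by
  unfold wt; fun_prop

/-- The flux of the function `e * w` for the weight `τ φ`, where `e` stands for `exp (τ φ)` and
`s = 1/τ`, is `e² τ³` times a polynomial in `s`. -/
theorem cflux_scale {n : ℕ} (g H : Fin n → ℝ) (k τ s e w : ℝ) (hs : τ * s = 1) (b : Fin n → ℝ)
    (i : Fin n) :
    cflux (fun j => τ * g j) (fun j => τ * H j) (τ * k) (e * w) (fun j => e * (b j + τ * g j * w)) i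
      = e ^ 2 * τ ^ 3 *
        cflux g (fun j => s * H j) (s * k) w (fun j => s * b j + g j * w) i := by
  obtain ⟨b', hb'⟩ : ∃ b' : Fin n → ℝ, ∀ j, b' j = s * b j + g j * w := ⟨_, fun _ => rfl⟩
  have hb : ∀ j, e * (b j + τ * g j * w) = e * τ * b' j := fun j => by
    rw [hb']; linear_combination (-e * b j) * hs
  simp only [hb, ← hb']
  have e1 : ∑ j, τ * g j * (e * τ * b' j) = e * τ ^ 2 * ∑ j, g j * b' j := by
    rw [Finset.mul_sum]; exact Finset.sum_congr rfl fun j _ => by ring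
  have e2 : ∑ j, (e * τ * b' j) ^ 2 = e ^ 2 * τ ^ 2 * ∑ j, b' j ^ 2 := by
    rw [Finset.mul_sum]; exact Finset.sum_congr rfl fun j _ => by ring
  have e3 : ∑ j, (τ * g j) ^ 2 = τ ^ 2 * ∑ j, g j ^ 2 := by
    rw [Finset.mul_sum]; exact Finset.sum_congr rfl fun j _ => by ring
  simp only [cflux, e1, e2, e3, ← Finset.mul_sum]
  linear_combination ((2 * (∑ j, H j) + 4 * k) * w * e ^ 2 * τ ^ 2 * b' i) * hs

/-- A smooth step: `θ = 0` on `(-∞, 0]`, `θ = 1` on `[1, ∞)`, with bounded derivative. -/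
theorem exists_step : ∃ (θ θ' : ℝ → ℝ) (C : ℝ), (∀ t, HasDerivAt θ (θ' t) t) ∧ Continuous θ' ∧
    Continuous θ ∧ (∀ t, 0 ≤ θ t) ∧ (∀ t, t ≤ 0 → θ t = 0) ∧ (∀ t, 1 ≤ t → θ t = 1) ∧
    (∀ t, 1 ≤ t → θ' t = 0) ∧ (∀ t, |θ' t| ≤ C) := by
  have hcd : ContDiff ℝ 1 Real.smoothTransition := Real.smoothTransition.contDiff (n := 1)
  have hd : Differentiable ℝ Real.smoothTransition := hcd.differentiable one_ne_zero
  have hc : Continuous (deriv Real.smoothTransition) := hcd.continuous_deriv le_rfl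
  have h1 : ∀ t, 1 < t → deriv Real.smoothTransition t = 0 := by
    intro t ht
    have : Real.smoothTransition =ᶠ[𝓝 t] fun _ => 1 := by
      filter_upwards [lt_mem_nhds ht] with s hs using Real.smoothTransition.one_of_one_le hs.le
    rw [this.deriv_eq]; simp
  have h0 : ∀ t, t < 0 → deriv Real.smoothTransition t = 0 := by
    intro t ht
    have : Real.smoothTransition =ᶠ[𝓝 t] fun _ => 0 := by
      filter_upwards [gt_mem_nhds ht] with s hs using Real.smoothTransition.zero_of_nonpos hs.le
    rw [this.deriv_eq]; simp
  obtain ⟨C, hC⟩ := (isCompact_Icc (a := (0 : ℝ)) (b := 1)).exists_bound_of_continuousOn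
    hc.continuousOn
  refine ⟨Real.smoothTransition, deriv Real.smoothTransition, max C 0,
    fun t => (hd t).hasDerivAt, hc, Real.smoothTransition.continuous,
    Real.smoothTransition.nonneg, fun t => Real.smoothTransition.zero_of_nonpos,
    fun t => Real.smoothTransition.one_of_one_le, fun t ht => ?_, fun t => ?_⟩
  · rcases ht.lt_or_eq with h | rfl
    · exact h1 t h
    · have hcl : IsClosed {t | deriv Real.smoothTransition t = 0} :=
        isClosed_eq hc continuous_const
      have hsub : Set.Ioi (1 : ℝ) ⊆ {t | deriv Real.smoothTransition t = 0} := fun t ht => h1 t ht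
      have := hcl.closure_subset_iff.2 hsub
      rw [closure_Ioi] at this
      exact this (Set.self_mem_Ici)
  · rcases lt_or_ge t 0 with h | h
    · rw [h0 t h]; simp
    rcases lt_or_ge 1 t with h' | h'
    · rw [h1 t h']; simp
    · exact (hC t ⟨h, h'⟩).trans (le_max_left _ _)

/-- Pointwise Carleman inequality for one function.  The hypotheses on `p`, `h` say that the weight
is pseudoconvex for the Laplacian. -/
theorem carleman_single {n : ℕ} (p h : Fin (n + 1) → ℝ) (τ e w : ℝ) (w1 : Fin (n + 1) → ℝ)
    (w2 : Fin (n + 1) → Fin (n + 1) → ℝ) (hs : ∀ i j, w2 i j = w2 j i) (hτ : 0 ≤ τ)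
    (hh : ∀ i, -(1 / 4) ≤ h i)
    (hp : 3 / 4 * (∑ j, p j ^ 2) ≤ ∑ j, h j * p j ^ 2) :
    ∑ i, cfluxD (fun j => τ * p j) (fun j => τ * h j) (τ * (1 / 2)) (e * w)
        (fun j => e * (w1 j + τ * p j * w))
        (fun i j => e * (w2 i j + τ * p i * w1 j + τ * p j * w1 i + τ * p i * (τ * p j) * w
          + (if j = i then τ * h i else 0) * w)) i i ≤
      e ^ 2 * (∑ i, w2 i i) ^ 2 + τ ^ 2 * (e * w) ^ 2
        - τ * (∑ j, (e * (w1 j + τ * p j * w)) ^ 2)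
        - τ ^ 3 * (∑ j, p j ^ 2) * (e * w) ^ 2 := by
  have e3 : ∑ j, (τ * p j) ^ 2 = τ ^ 2 * ∑ j, p j ^ 2 := by
    rw [Finset.mul_sum]; exact Finset.sum_congr rfl fun j _ => by ring
  have e4 : ∑ j, τ * h j * (τ * p j) ^ 2 = τ ^ 3 * ∑ j, h j * p j ^ 2 := by
    rw [Finset.mul_sum]; exact Finset.sum_congr rfl fun j _ => by ring
  refine (sum_cfluxD_le (fun j => τ * p j) (fun j => τ * h j) (τ * (1 / 2)) (τ * (1 / 4))
    (τ * (1 / 4)) (e * w) _ _ ?_ ?_ ?_).trans ?_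
  · intro i j
    rw [hs i j]
    by_cases hij : j = i
    · subst hij; simp
    · rw [if_neg hij, if_neg (Ne.symm hij)]; ring
  · intro i
    have := mul_le_mul_of_nonneg_left (hh i) hτ
    linarith
  · rw [e3, e4]
    have := mul_le_mul_of_nonneg_left hp (pow_nonneg hτ 3)
    linarith
  · have hc := conj_lap (fun j => τ * p j) (fun j => τ * h j) e w w1 w2
    simp only [if_true]
    rw [hc, e3]
    apply le_of_eq; ring

/-- Pointwise Carleman inequality for a pair of functions obeying the differential inequality
`|Δw|² ≤ K (|w|² + |∂₀w|²)`: for large `τ` the weighted Laplacian is absorbed. -/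
theorem carleman_pair {n : ℕ} (p h : Fin (n + 1) → ℝ) (τ e K : ℝ) (w : Fin 2 → ℝ)
    (w1 : Fin 2 → Fin (n + 1) → ℝ) (w2 : Fin 2 → Fin (n + 1) → Fin (n + 1) → ℝ)
    (hs : ∀ k i j, w2 k i j = w2 k j i) (hK : 0 ≤ K) (hτ : 3 * K + 2 ≤ τ)
    (hh : ∀ i, -(1 / 4) ≤ h i)
    (hp : 3 / 4 * (∑ j, p j ^ 2) ≤ ∑ j, h j * p j ^ 2) (hp1 : 1 ≤ ∑ j, p j ^ 2)
    (hK' : ∑ k, (∑ i, w2 k i i) ^ 2 ≤ K * ∑ k, (w k ^ 2 + w1 k 0 ^ 2)) :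
    ∑ k, ∑ i, cfluxD (fun j => τ * p j) (fun j => τ * h j) (τ * (1 / 2)) (e * w k)
        (fun j => e * (w1 k j + τ * p j * w k))
        (fun i j => e * (w2 k i j + τ * p i * w1 k j + τ * p j * w1 k i
          + τ * p i * (τ * p j) * w k + (if j = i then τ * h i else 0) * w k)) i i ≤
      - (e ^ 2 * ∑ k, w k ^ 2) := by
  have hτ0 : 0 ≤ τ := by linarith
  have h1 := Finset.sum_le_sum fun k (_ : k ∈ Finset.univ) =>
    carleman_single p h τ e (w k) (w1 k) (w2 k) (hs k) hτ0 hh hp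
  refine h1.trans ?_
  have h2 := mul_le_mul_of_nonneg_left hK' (sq_nonneg e)
  set Q := ∑ j, p j ^ 2 with hQ
  have hp0 : p 0 ^ 2 ≤ Q :=
    Finset.single_le_sum (f := fun j => p j ^ 2) (fun j _ => sq_nonneg _) (Finset.mem_univ 0)
  -- The first-order term is controlled by the gradient of the conjugated function.
  have h3 : ∀ k, e ^ 2 * (w k ^ 2 + w1 k 0 ^ 2) ≤
      (1 + 2 * τ ^ 2 * Q) * (e * w k) ^ 2
        + 2 * ∑ j, (e * (w1 k j + τ * p j * w k)) ^ 2 := by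
    intro k
    have ha : (e * (w1 k 0 + τ * p 0 * w k)) ^ 2 ≤ ∑ j, (e * (w1 k j + τ * p j * w k)) ^ 2 :=
      Finset.single_le_sum (f := fun j => (e * (w1 k j + τ * p j * w k)) ^ 2)
        (fun j _ => sq_nonneg _) (Finset.mem_univ 0)
    have hb : τ ^ 2 * p 0 ^ 2 * (e * w k) ^ 2 ≤ τ ^ 2 * Q * (e * w k) ^ 2 := by gcongr
    nlinarith [sq_nonneg (e * (w1 k 0 + τ * p 0 * w k) + e * (τ * p 0 * w k))]
  have h4 : ∀ k, K * (e ^ 2 * (w k ^ 2 + w1 k 0 ^ 2)) + τ ^ 2 * (e * w k) ^ 2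
        - τ * (∑ j, (e * (w1 k j + τ * p j * w k)) ^ 2)
        - τ ^ 3 * Q * (e * w k) ^ 2 ≤ - (e ^ 2 * w k ^ 2) := by
    intro k
    have ha := mul_le_mul_of_nonneg_left (h3 k) hK
    set N := ∑ j, (e * (w1 k j + τ * p j * w k)) ^ 2
    have hN : 0 ≤ N := Finset.sum_nonneg fun j _ => sq_nonneg _
    have hb : (2 * K - τ) * N ≤ 0 := mul_nonpos_of_nonpos_of_nonneg (by linarith) hN
    have hQ2 : 1 ≤ τ ^ 2 * Q := by nlinarith
    have hc : K * (1 + 2 * τ ^ 2 * Q) + τ ^ 2 - τ ^ 3 * Q ≤ -1 := by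
      have h5 : τ ^ 2 ≤ τ ^ 2 * Q := by nlinarith [sq_nonneg τ]
      have h6 : K ≤ K * (τ ^ 2 * Q) := by nlinarith
      have h7 : (3 * K + 2) * (τ ^ 2 * Q) ≤ τ * (τ ^ 2 * Q) := by gcongr
      nlinarith
    have hd := mul_le_mul_of_nonneg_right hc (sq_nonneg (e * w k))
    nlinarith
  have h5 := Finset.sum_le_sum fun k (_ : k ∈ Finset.univ) => h4 k
  simp only [Fin.sum_univ_two] at h5 h2 ⊢
  linarith

/-! ### Integrated Carleman estimate -/

/-- The Carleman estimate on a box, integrated: with a cutoff `χ` supported in `{wt h z ≥ A}`, the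
only error comes from the layer `A ≤ wt h z ≤ A + 1/4` where `χ` varies, and it is at most
`C τ³ exp(2τ(A + 1/4))`. The bottom face contributes nothing because the Cauchy data vanish there,
the other faces because the weight is at most `A` on them. -/
theorem carleman_box {n : ℕ} {w : Fin 2 → Ed (n + 1) → ℝ}
    {w1 : Fin 2 → Fin (n + 1) → Ed (n + 1) → ℝ}
    {w2 : Fin 2 → Fin (n + 1) → Fin (n + 1) → Ed (n + 1) → ℝ} (J : Jet w w1 w2)
    (hbot : ∀ k x, x 0 = 0 → w k x = 0) (hbot1 : ∀ k i x, x 0 = 0 → w1 k i x = 0)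
    {a b : Fin (n + 1) → ℝ} (hab : a ≤ b) (ha0 : a 0 = 0) {K : ℝ} (hK0 : 0 ≤ K)
    (hK : ∀ x ∈ obox a b, ∑ k, (∑ i, w2 k i i x) ^ 2 ≤ K * ∑ k, (w k x ^ 2 + w1 k 0 x ^ 2))
    (h z : Fin (n + 1) → ℝ) (A : ℝ) (hh : ∀ i, -(1 / 4) ≤ h i)
    (hpc : ∀ x ∈ cbox a b, A ≤ wt h z x →
      3 / 4 * (∑ j, (h j * (x j - z j)) ^ 2) ≤ ∑ j, h j * (h j * (x j - z j)) ^ 2 ∧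
      1 ≤ ∑ j, (h j * (x j - z j)) ^ 2)
    (hup : ∀ i, ∀ x ∈ cbox a b, x i = b i → wt h z x ≤ A)
    (hlo : ∀ i, i ≠ 0 → ∀ x ∈ cbox a b, x i = a i → wt h z x ≤ A) :
    ∃ χ : Ed (n + 1) → ℝ, Continuous χ ∧ (∀ x, 0 ≤ χ x) ∧
      (∀ x, A + 1 / 4 ≤ wt h z x → χ x = 1) ∧ ∃ C τ₀ : ℝ, ∀ τ, τ₀ ≤ τ →
        ∫ x in obox a b, χ x * (Real.exp (τ * wt h z x) ^ 2 * ∑ k, w k x ^ 2)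
          ≤ C * τ ^ 3 * Real.exp (τ * (A + 1 / 4)) ^ 2 := by
  obtain ⟨θ, θ', -, hθ, hθ'c, hθc, hθ0, hθz, hθ1, hθ'1, -⟩ := exists_step
  have hsub : cbox a b ⊆ {x : Ed (n + 1) | 0 ≤ x 0} := fun x hx => ha0 ▸ (hx 0).1
  have hpos : ∀ x ∈ obox a b, 0 < x 0 := fun x hx => ha0 ▸ (hx 0).1
  have hw := fun k => (J.cont0 k).mono hsub
  have hw1 := fun k i => (J.cont1 k i).mono hsub
  have hw2 := fun k i j => (J.cont2 k i j).mono hsub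
  have hφc : Continuous (wt h z) := wt_continuous h z
  set φ := wt h z with hφ
  set p : Fin (n + 1) → Ed (n + 1) → ℝ := fun j x => h j * (x j - z j) with hp
  have hpcont : ∀ j, Continuous (p j) := fun j => by simp only [hp]; fun_prop
  let χ : Ed (n + 1) → ℝ := fun x => θ (4 * (φ x - A))
  let χ1 : Fin (n + 1) → Ed (n + 1) → ℝ := fun i x => θ' (4 * (φ x - A)) * (4 * p i x)
  have hχc : Continuous χ := hθc.comp (by fun_prop)
  have hχ1c : ∀ i, Continuous (χ1 i) := fun i =>
    (hθ'c.comp (by fun_prop)).mul (continuous_const.mul (hpcont i))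
  have hχg : ∀ x, HasGrad χ (fun i => χ1 i x) x := fun x =>
    HasGrad.comp (f := fun x => 4 * (φ x - A)) (hθ _)
      ((((wt_grad h z x).sub (HasGrad.const A)).const_mul 4).congr_grad
        (g' := fun i => 4 * p i x) fun i => by simp [hp])
  -- The boundary layer flux, rescaled by `τ³ exp (2τφ)`, is a polynomial in `1/τ`.
  let Ft : Fin (n + 1) → ℝ × Ed (n + 1) → ℝ := fun i y =>
    ∑ k, cflux (fun j => p j y.2) (fun j => y.1 * h j) (y.1 * (1 / 2)) (w k y.2)
      (fun j => y.1 * w1 k j y.2 + p j y.2 * w k y.2) i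
  have hFt : ContinuousOn (fun y : ℝ × Ed (n + 1) => ∑ i, χ1 i y.2 * Ft i y)
      (Set.Icc 0 1 ×ˢ cbox a b) := by
    have c2 : ContinuousOn (fun y : ℝ × Ed (n + 1) => y.2) (Set.Icc 0 1 ×ˢ cbox a b) :=
      continuousOn_snd
    have m2 : Set.MapsTo (fun y : ℝ × Ed (n + 1) => y.2) (Set.Icc 0 1 ×ˢ cbox a b) (cbox a b) :=
      fun y hy => hy.2
    have d0 : ∀ k, ContinuousOn (fun y : ℝ × Ed (n + 1) => w k y.2) (Set.Icc 0 1 ×ˢ cbox a b) :=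
      fun k => (hw k).comp c2 m2
    have d1 : ∀ k j, ContinuousOn (fun y : ℝ × Ed (n + 1) => w1 k j y.2)
      (Set.Icc 0 1 ×ˢ cbox a b) := fun k j => (hw1 k j).comp c2 m2
    have dp : ∀ j, ContinuousOn (fun y : ℝ × Ed (n + 1) => p j y.2) (Set.Icc 0 1 ×ˢ cbox a b) :=
      fun j => (hpcont j).comp_continuousOn c2
    have dχ : ∀ j, ContinuousOn (fun y : ℝ × Ed (n + 1) => χ1 j y.2) (Set.Icc 0 1 ×ˢ cbox a b) :=
      fun j => (hχ1c j).comp_continuousOn c2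
    have c1 : ContinuousOn (fun y : ℝ × Ed (n + 1) => y.1) (Set.Icc 0 1 ×ˢ cbox a b) :=
      continuousOn_fst
    refine continuousOn_finsetSum _ fun i _ => (dχ i).mul ?_
    refine continuousOn_finsetSum _ fun k _ => ?_
    simp only [cflux]
    fun_prop
  obtain ⟨C, hC⟩ := (isCompact_Icc.prod (isCompact_cbox a b)).exists_bound_of_continuousOn hFt
  have hvolfin : volume (obox a b) < ⊤ :=
    (measure_mono (obox_subset a b)).trans_lt (isCompact_cbox a b).measure_lt_top
  refine ⟨χ, hχc, fun x => hθ0 _, fun x hx => hθ1 _ (by linarith),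
    max C 0 * (volume (obox a b)).toReal, max 1 (3 * K + 2), fun τ hτ => ?_⟩
  have hτ1 : 1 ≤ τ := (le_max_left _ _).trans hτ
  have hτ2 : 3 * K + 2 ≤ τ := (le_max_right _ _).trans hτ
  have hτs : τ * τ⁻¹ = 1 := mul_inv_cancel₀ (by linarith)
  let e : Ed (n + 1) → ℝ := fun x => Real.exp (τ * φ x)
  have hec : Continuous e := Real.continuous_exp.comp (by fun_prop)
  have heg : ∀ x, HasGrad e (fun i => e x * (τ * p i x)) x := fun x =>
    HasGrad.comp (Real.hasDerivAt_exp _) ((wt_grad h z x).const_mul τ)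
  let v : Fin 2 → Ed (n + 1) → ℝ := fun k x => e x * w k x
  let v1 : Fin 2 → Fin (n + 1) → Ed (n + 1) → ℝ := fun k j x =>
    e x * (w1 k j x + τ * p j x * w k x)
  let v2 : Fin 2 → Fin (n + 1) → Fin (n + 1) → Ed (n + 1) → ℝ := fun k i j x =>
    e x * (w2 k i j x + τ * p i x * w1 k j x + τ * p j x * w1 k i x
          + τ * p i x * (τ * p j x) * w k x + (if j = i then τ * h i else 0) * w k x)
  have hvg : ∀ k, ∀ x ∈ obox a b, HasGrad (v k) (fun j => v1 k j x) x := fun k x hx =>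
    ((heg x).mul (J.grad0 k x (hpos x hx))).congr_grad fun i => by simp only [v1]; ring
  have hpg : ∀ j x, HasGrad (fun y => τ * p j y) (fun i => if i = j then τ * h j else 0) x :=
    fun j x => ((wt_slope_grad h z x j).const_mul τ).congr_grad fun i => by simp
  have hv1g : ∀ k j, ∀ x ∈ obox a b, HasGrad (v1 k j) (fun i => v2 k j i x) x := fun k j x hx =>
    ((heg x).mul ((J.grad1 k j x (hpos x hx)).add
      ((hpg j x).mul (J.grad0 k x (hpos x hx))))).congr_grad fun i => by simp only [v2]; ring
  let F : Fin (n + 1) → Ed (n + 1) → ℝ := fun i x =>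
    ∑ k, cflux (fun j => τ * p j x) (fun j => τ * h j) (τ * (1 / 2)) (v k x) (fun j => v1 k j x) i
  let F1 : Fin (n + 1) → Fin (n + 1) → Ed (n + 1) → ℝ := fun i m x =>
    ∑ k, cfluxD (fun j => τ * p j x) (fun j => τ * h j) (τ * (1 / 2)) (v k x)
      (fun j => v1 k j x) (fun i j => v2 k i j x) i m
  have hFg : ∀ i, ∀ x ∈ obox a b, HasGrad (F i) (fun m => F1 i m x) x := fun i x hx =>
    HasGrad.sum fun k _ => cflux_hasGrad _ (fun j => hpg j x) (hvg k x hx)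
      (fun j => hv1g k j x hx) i
  have hvc : ∀ k, ContinuousOn (v k) (cbox a b) := fun k => hec.continuousOn.mul (hw k)
  have hv1c : ∀ k j, ContinuousOn (v1 k j) (cbox a b) := fun k j =>
    hec.continuousOn.mul ((hw1 k j).add
      ((continuous_const.mul (hpcont j)).continuousOn.mul (hw k)))
  have hv2c : ∀ k i j, ContinuousOn (v2 k i j) (cbox a b) := fun k i j => by
    have h1 := fun j => (hpcont j).continuousOn (s := cbox a b)
    have h2 := hec.continuousOn (s := cbox a b)
    simp only [v2]
    fun_prop
  have hFc : ∀ i, ContinuousOn (F i) (cbox a b) := fun i => by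
    have h1 := fun j => (hpcont j).continuousOn (s := cbox a b)
    simp only [F, cflux]
    fun_prop
  have hF1c : ∀ i m, ContinuousOn (F1 i m) (cbox a b) := fun i m => by
    have h1 := fun j => (hpcont j).continuousOn (s := cbox a b)
    simp only [F1, cfluxD]
    fun_prop
  let D : Ed (n + 1) → ℝ := fun x => (∑ i, χ1 i x * F i x) + χ x * ∑ i, F1 i i x
  have hDc : ContinuousOn D (cbox a b) := by
    have h1 := fun j => (hχ1c j).continuousOn (s := cbox a b)
    have h2 := hχc.continuousOn (s := cbox a b)
    simp only [D]
    fun_prop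
  have hχz : ∀ x, φ x ≤ A → χ x = 0 := fun x hx => hθz _ (by linarith)
  have hdiv := div_box hab (fun i x => χ x * F i x)
    (fun i j x => χ1 j x * F i x + χ x * F1 i j x) D
    (fun i => hχc.continuousOn.mul (hFc i)) (fun i x hx => (hχg x).mul (hFg i x hx)) hDc
    (fun x hx => by simp only [D, Finset.sum_add_distrib, Finset.mul_sum])
    (fun i x hx hxi => by simp only [hχz x (hup i x hx hxi), zero_mul])
    (fun i hi x hx hxi => by simp only [hχz x (hlo i hi x hx hxi), zero_mul])
  have hface : ∫ y in Set.Icc (a ∘ Fin.succ) (b ∘ Fin.succ),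
      χ (WithLp.toLp 2 (Fin.cons (a 0) y : Fin (n + 1) → ℝ)) *
        F 0 (WithLp.toLp 2 (Fin.cons (a 0) y : Fin (n + 1) → ℝ)) = 0 := by
    refine setIntegral_eq_zero_of_forall_eq_zero fun y _ => ?_
    have hx0 : (WithLp.toLp 2 (Fin.cons (a 0) y : Fin (n + 1) → ℝ) : Ed (n + 1)) 0 = 0 := by
      simp [ha0]
    simp [F, v, v1, cflux, hbot _ _ hx0, hbot1 _ _ _ hx0]
  simp only [hface, neg_zero] at hdiv
  have hpt : ∀ x ∈ obox a b, χ x * (e x ^ 2 * ∑ k, w k x ^ 2) ≤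
      max C 0 * τ ^ 3 * Real.exp (τ * (A + 1 / 4)) ^ 2 - D x := by
    intro x hx
    have hxc := obox_subset a b hx
    have hsec : χ x * ∑ i, F1 i i x ≤ - (χ x * (e x ^ 2 * ∑ k, w k x ^ 2)) := by
      rcases le_or_gt (φ x) A with hA | hA
      · simp [hχz x hA]
      · have h1 := hpc x hxc hA.le
        have h2 := carleman_pair (fun j => p j x) h τ (e x) K (fun k => w k x)
          (fun k j => w1 k j x) (fun k i j => w2 k i j x)
          (fun k i j => J.symm k i j x (hpos x hx)) hK0 hτ2 hh h1.1 h1.2 (hK x hx)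
        have h3 : ∑ i, F1 i i x ≤ - (e x ^ 2 * ∑ k, w k x ^ 2) := by
          simp only [F1]
          rw [Finset.sum_comm]
          exact h2
        have h4 := mul_le_mul_of_nonneg_left h3 (hθ0 (4 * (φ x - A)))
        rw [mul_neg] at h4
        exact h4
    have hfst : ∑ i, χ1 i x * F i x ≤
        max C 0 * τ ^ 3 * Real.exp (τ * (A + 1 / 4)) ^ 2 := by
      have hR : 0 ≤ max C 0 * τ ^ 3 * Real.exp (τ * (A + 1 / 4)) ^ 2 := by positivity
      rcases le_or_gt (A + 1 / 4) (φ x) with hA | hA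
      · have : ∀ i, χ1 i x = 0 := fun i => by
          simp only [χ1]; rw [hθ'1 _ (by linarith), zero_mul]
        simpa [this] using hR
      · have hFF : ∀ i, F i x = e x ^ 2 * τ ^ 3 * Ft i (τ⁻¹, x) := fun i => by
          simp only [F, Ft, Finset.mul_sum]
          exact Finset.sum_congr rfl fun k _ =>
            cflux_scale (fun j => p j x) h (1 / 2) τ τ⁻¹ (e x) (w k x) hτs (fun j => w1 k j x) i
        have h1 : ∑ i, χ1 i x * F i x = e x ^ 2 * τ ^ 3 * ∑ i, χ1 i x * Ft i (τ⁻¹, x) := by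
          rw [Finset.mul_sum]
          exact Finset.sum_congr rfl fun i _ => by rw [hFF]; ring
        have h2 := hC (τ⁻¹, x) ⟨⟨by positivity, inv_le_one_of_one_le₀ hτ1⟩, hxc⟩
        have h3 : ∑ i, χ1 i x * Ft i (τ⁻¹, x) ≤ max C 0 :=
          (le_abs_self _).trans (h2.trans (le_max_left _ _))
        have h4 : e x ≤ Real.exp (τ * (A + 1 / 4)) :=
          Real.exp_le_exp.2 (mul_le_mul_of_nonneg_left hA.le (by linarith))
        have h5 : 0 ≤ e x := (Real.exp_pos _).le
        rw [h1]
        calc e x ^ 2 * τ ^ 3 * ∑ i, χ1 i x * Ft i (τ⁻¹, x)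
            ≤ e x ^ 2 * τ ^ 3 * max C 0 := by gcongr
          _ ≤ Real.exp (τ * (A + 1 / 4)) ^ 2 * τ ^ 3 * max C 0 := by gcongr
          _ = _ := by ring
    simp only [D]
    linarith
  have hcint : IntegrableOn (fun x => χ x * (e x ^ 2 * ∑ k, w k x ^ 2)) (obox a b) := by
    apply integrableOn_obox
    have h1 := hχc.continuousOn (s := cbox a b)
    have h2 := hec.continuousOn (s := cbox a b)
    fun_prop
  have hconst : IntegrableOn (fun _ : Ed (n + 1) =>
      max C 0 * τ ^ 3 * Real.exp (τ * (A + 1 / 4)) ^ 2) (obox a b) :=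
    integrableOn_const hvolfin.ne
  have hfin := setIntegral_mono_on hcint (hconst.sub (integrableOn_obox hDc))
    (isOpen_obox a b).measurableSet hpt
  simp only [Pi.sub_apply] at hfin
  rw [integral_sub hconst (integrableOn_obox hDc), hdiv, sub_zero, setIntegral_const,
    smul_eq_mul] at hfin
  refine hfin.trans (le_of_eq ?_)
  simp only [Measure.real]
  ring

/-! ### Unique continuation -/

/-- Letting `τ → ∞` in the Carleman estimate: the functions vanish where the weight exceeds
`A + 1/4`. -/
theorem vanish_of_carleman {n : ℕ} {w : Fin 2 → Ed (n + 1) → ℝ} {a b : Fin (n + 1) → ℝ}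
    {φ χ : Ed (n + 1) → ℝ} {A C τ₀ : ℝ} (hφ : Continuous φ) (hχ : Continuous χ)
    (hχ0 : ∀ x, 0 ≤ χ x) (hχ1 : ∀ x, A + 1 / 4 ≤ φ x → χ x = 1)
    (hw : ∀ k, ContinuousOn (w k) (cbox a b))
    (hC : ∀ τ, τ₀ ≤ τ →
        ∫ x in obox a b, χ x * (Real.exp (τ * φ x) ^ 2 * ∑ k, w k x ^ 2)
          ≤ C * τ ^ 3 * Real.exp (τ * (A + 1 / 4)) ^ 2)
    (q : Ed (n + 1)) (hq : q ∈ obox a b) (hqA : A + 1 / 4 < φ q) (k : Fin 2) : w k q = 0 := by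
  by_contra hne
  obtain ⟨B, hB1, hB2⟩ := exists_between hqA
  set f : Ed (n + 1) → ℝ := fun x => ∑ k, w k x ^ 2 with hf
  have hf0 : ∀ x, 0 ≤ f x := fun x => Finset.sum_nonneg fun k _ => sq_nonneg _
  have hfc : ContinuousOn f (cbox a b) := by fun_prop
  have hfq : 0 < f q := by
    refine lt_of_lt_of_le (by positivity : 0 < w k q ^ 2) ?_
    exact Finset.single_le_sum (f := fun k => w k q ^ 2) (fun j _ => sq_nonneg _)
      (Finset.mem_univ k)
  set m := f q / 2 with hm
  have hm0 : 0 < m := by positivity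
  have hfat : ContinuousAt f q := (hfc.mono (obox_subset a b)).continuousAt
    ((isOpen_obox a b).mem_nhds hq)
  have hnhds : {x | x ∈ obox a b ∧ B < φ x ∧ m < f x} ∈ 𝓝 q := by
    filter_upwards [(isOpen_obox a b).mem_nhds hq, hφ.continuousAt.eventually (lt_mem_nhds hB2),
      hfat.eventually (lt_mem_nhds (by simp only [hm]; linarith : m < f q))] with x h1 h2 h3
    exact ⟨h1, h2, h3⟩
  obtain ⟨U, hU, hUo, hqU⟩ := _root_.mem_nhds_iff.1 hnhds
  have hUfin : volume U < ⊤ :=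
    (measure_mono (fun x hx => obox_subset a b (hU hx).1)).trans_lt
      (isCompact_cbox a b).measure_lt_top
  have hUpos : 0 < (volume U).toReal :=
    ENNReal.toReal_pos (hUo.measure_pos volume ⟨q, hqU⟩).ne' hUfin.ne
  set δ := B - (A + 1 / 4) with hδ
  have hδ0 : 0 < δ := by simp only [hδ]; linarith
  have hkey : ∀ τ, max τ₀ 0 ≤ τ → m * (volume U).toReal ≤ C * (τ ^ 3 * Real.exp (-(2 * δ) * τ)) := by
    intro τ hτ
    have hτ0 : 0 ≤ τ := (le_max_right _ _).trans hτ
    have h1 := hC τ ((le_max_left _ _).trans hτ)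
    have hintg : IntegrableOn (fun x => χ x * (Real.exp (τ * φ x) ^ 2 * f x)) (obox a b) := by
      apply integrableOn_obox
      have h1 := hχ.continuousOn (s := cbox a b)
      have h2 : ContinuousOn (fun x => Real.exp (τ * φ x)) (cbox a b) := by fun_prop
      fun_prop
    have h2 : ∫ x in U, χ x * (Real.exp (τ * φ x) ^ 2 * f x) ≤
        ∫ x in obox a b, χ x * (Real.exp (τ * φ x) ^ 2 * f x) :=
      setIntegral_mono_set hintg
        (Eventually.of_forall fun x => mul_nonneg (hχ0 x) (mul_nonneg (sq_nonneg _) (hf0 x)))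
        (Eventually.of_forall fun x hx => (hU hx).1)
    have h3 : ∫ x in U, Real.exp (τ * B) ^ 2 * m ≤
        ∫ x in U, χ x * (Real.exp (τ * φ x) ^ 2 * f x) := by
      refine setIntegral_mono_on (integrableOn_const hUfin.ne)
        (hintg.mono_set fun x hx => (hU hx).1) hUo.measurableSet fun x hx => ?_
      obtain ⟨-, hx2, hx3⟩ := hU hx
      rw [hχ1 x (hB1.le.trans hx2.le), one_mul]
      gcongr
    rw [setIntegral_const, smul_eq_mul] at h3
    have h4 := (h3.trans h2).trans h1
    have h5 : Real.exp (τ * (A + 1 / 4)) ^ 2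
        = Real.exp (τ * B) ^ 2 * Real.exp (-(2 * δ) * τ) := by
      rw [← Real.exp_nat_mul, ← Real.exp_nat_mul, ← Real.exp_add]
      congr 1; simp only [hδ]; push_cast; ring
    rw [h5] at h4
    have h6 : 0 < Real.exp (τ * B) ^ 2 := by positivity
    simp only [Measure.real] at h4
    refine le_of_mul_le_mul_left ?_ h6
    linarith
  have hlim : Tendsto (fun τ : ℝ => C * (τ ^ 3 * Real.exp (-(2 * δ) * τ))) atTop (𝓝 (C * 0)) := by
    refine Tendsto.const_mul C ?_
    have := tendsto_rpow_mul_exp_neg_mul_atTop_nhds_zero 3 (2 * δ) (by positivity)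
    refine this.congr fun τ => ?_
    norm_cast
  rw [mul_zero] at hlim
  have := ge_of_tendsto hlim (eventually_atTop.2 ⟨max τ₀ 0, hkey⟩)
  have hpos : 0 < m * (volume U).toReal := by positivity
  linarith

/-- Unique continuation from the hyperplane `{x₀ = 0}` for a pair of functions with vanishing Cauchy
data obeying `|Δw|² ≤ K (|w|² + |∂₀w|²)` on boxes. -/
theorem unique_cont {n : ℕ} {w : Fin 2 → Ed (n + 1) → ℝ}
    {w1 : Fin 2 → Fin (n + 1) → Ed (n + 1) → ℝ}
    {w2 : Fin 2 → Fin (n + 1) → Fin (n + 1) → Ed (n + 1) → ℝ} (J : Jet w w1 w2)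
    (hbot : ∀ k x, x 0 = 0 → w k x = 0) (hbot1 : ∀ k i x, x 0 = 0 → w1 k i x = 0)
    (hK : ∀ a b : Fin (n + 1) → ℝ, a 0 = 0 → ∃ K, 0 ≤ K ∧
      ∀ x ∈ obox a b, ∑ k, (∑ i, w2 k i i x) ^ 2 ≤ K * ∑ k, (w k x ^ 2 + w1 k 0 x ^ 2))
    (q : Ed (n + 1)) (hq : 0 < q 0) (k : Fin 2) : w k q = 0 := by
  set s := q 0 + 1 with hs
  have hs1 : 1 ≤ s := by linarith
  -- The weight `(x₀ - 2s)²/2 - |y - y_q|²/8` (`y` the tangential coordinates) has as superlevel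
  -- set `{> s²/2}` in `{0 ≤ x₀ ≤ s}` a bounded cap around the normal through `q`.
  let h : Fin (n + 1) → ℝ := Fin.cons 1 fun _ => -(1 / 4)
  let z : Fin (n + 1) → ℝ := Fin.cons (2 * s) fun j => q j.succ
  let a : Fin (n + 1) → ℝ := Fin.cons 0 fun j => q j.succ - 4 * s
  let b : Fin (n + 1) → ℝ := Fin.cons s fun j => q j.succ + 4 * s
  have ha0 : a 0 = 0 := rfl
  have hwt : ∀ x, wt h z x =
      1 / 2 * (x 0 - 2 * s) ^ 2 - 1 / 8 * ∑ j : Fin n, (x j.succ - q j.succ) ^ 2 := by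
    intro x
    simp only [wt, h, z, Fin.sum_univ_succ, Fin.cons_zero, Fin.cons_succ, Finset.mul_sum,
      sub_eq_add_neg _ (∑ j : Fin n, _), ← Finset.sum_neg_distrib]
    congr 1
    · ring
    · exact Finset.sum_congr rfl fun j _ => by ring
  have hB0 : ∀ x : Ed (n + 1), 0 ≤ ∑ j : Fin n, (x j.succ - q j.succ) ^ 2 := fun x =>
    Finset.sum_nonneg fun j _ => sq_nonneg _
  have hbox : ∀ x ∈ cbox a b, 0 ≤ x 0 ∧ x 0 ≤ s := fun x hx => hx 0
  obtain ⟨K, hK0, hK⟩ := hK a b ha0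
  have hside : ∀ x ∈ cbox a b, ∀ j : Fin n, (x j.succ - q j.succ) ^ 2 = (4 * s) ^ 2 →
      wt h z x ≤ s ^ 2 / 2 := by
    intro x hx j hj
    have h1 : (x j.succ - q j.succ) ^ 2 ≤ ∑ j : Fin n, (x j.succ - q j.succ) ^ 2 :=
      Finset.single_le_sum (f := fun j : Fin n => (x j.succ - q j.succ) ^ 2)
        (fun j _ => sq_nonneg _) (Finset.mem_univ j)
    have h2 := hbox x hx
    rw [hwt]
    nlinarith
  obtain ⟨χ, hχc, hχ0, hχ1, C, τ₀, hC⟩ := carleman_box J hbot hbot1 (a := a) (b := b)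
    (by
      intro i
      refine Fin.cases ?_ (fun j => ?_) i
      · simp only [a, b, Fin.cons_zero]; linarith
      · simp only [a, b, Fin.cons_succ]; linarith) ha0 hK0 hK h z (s ^ 2 / 2)
    (by
      intro i
      refine Fin.cases ?_ (fun j => ?_) i
      · simp only [h, Fin.cons_zero]; norm_num
      · simp only [h, Fin.cons_succ]; norm_num)
    (by
      intro x hx hA
      rw [hwt] at hA
      have hB := hB0 x
      have e1 : ∑ j, (h j * (x j - z j)) ^ 2 =
          (x 0 - 2 * s) ^ 2 + 1 / 16 * ∑ j : Fin n, (x j.succ - q j.succ) ^ 2 := by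
        simp only [h, z, Fin.sum_univ_succ, Fin.cons_zero, Fin.cons_succ, Finset.mul_sum]
        congr 1
        · ring
        · exact Finset.sum_congr rfl fun j _ => by ring
      have e2 : ∑ j, h j * (h j * (x j - z j)) ^ 2 =
          (x 0 - 2 * s) ^ 2 + -(1 / 64) * ∑ j : Fin n, (x j.succ - q j.succ) ^ 2 := by
        simp only [h, z, Fin.sum_univ_succ, Fin.cons_zero, Fin.cons_succ, Finset.mul_sum]
        congr 1
        · ring
        · exact Finset.sum_congr rfl fun j _ => by ring
      rw [e1, e2]
      constructor <;> nlinarith)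
    (by
      intro i x hx
      refine Fin.cases (fun hi => ?_) (fun j hi => ?_) i
      · have : x 0 = s := hi
        rw [hwt, this]; nlinarith [hB0 x]
      · have : x j.succ = q j.succ + 4 * s := hi
        exact hside x hx j (by rw [this]; ring))
    (by
      intro i hi0 x hx
      revert hi0
      refine Fin.cases (fun h => absurd rfl h) (fun j _ hi => ?_) i
      have : x j.succ = q j.succ - 4 * s := hi
      exact hside x hx j (by rw [this]; ring))
  refine vanish_of_carleman (wt_continuous h z) hχc hχ0 hχ1
    (fun k => (J.cont0 k).mono fun x hx => (hbox x hx).1) hC q ?_ ?_ k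
  · intro i
    refine Fin.cases ?_ (fun j => ?_) i
    · simp only [a, b, Fin.cons_zero]; exact ⟨hq, by linarith⟩
    · simp only [a, b, Fin.cons_succ]; constructor <;> linarith
  · rw [hwt]
    simp only [sub_self, ne_eq, OfNat.ofNat_ne_zero, not_false_eq_true, zero_pow,
      Finset.sum_const_zero, mul_zero, sub_zero]
    nlinarith

/-! ### Flux of a divergence-free field through the boundary -/

/-- A divergence-free field on the half-space that is dominated by an integrable function and has
nonnegative normal component on the boundary has vanishing normal component there: the flux through
the boundary is the limit of `-∫ ∇χ_R · T`, with `|∇χ_R| = O(1/R)`. -/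
theorem flux_vanish {n : ℕ} (T : Fin (n + 1) → Ed (n + 1) → ℝ)
    (T' : Fin (n + 1) → Fin (n + 1) → Ed (n + 1) → ℝ) (e : Ed (n + 1) → ℝ)
    (hT : ∀ i, ContinuousOn (T i) {x | 0 ≤ x 0})
    (hT' : ∀ i x, 0 < x 0 → HasGrad (T i) (fun j => T' i j x) x)
    (hdiv : ∀ x, 0 < x 0 → ∑ i, T' i i x = 0)
    (he : IntegrableOn e {x : Ed (n + 1) | 0 < x 0})
    (hTe : ∀ i x, 0 < x 0 → |T i x| ≤ e x)
    (hpos : ∀ x, x 0 = 0 → 0 ≤ T 0 x) (p : Ed (n + 1)) (hp : p 0 = 0) : T 0 p = 0 := by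
  by_contra hne
  obtain ⟨θ, θ', C, hθ, hθ'c, hθc, hθ0, hθl, hθr, -, hC⟩ := exists_step
  have hC0 : 0 ≤ C := (abs_nonneg _).trans (hC 0)
  have hHm : MeasurableSet {x : Ed (n + 1) | 0 < x 0} :=
    (isOpen_lt continuous_const (by fun_prop)).measurableSet
  have he0 : ∀ x : Ed (n + 1), 0 < x 0 → 0 ≤ e x := fun x hx =>
    (abs_nonneg _).trans (hTe 0 x hx)
  set ι : (Fin n → ℝ) → Ed (n + 1) := fun y => WithLp.toLp 2 (Fin.cons 0 y : Fin (n + 1) → ℝ)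
    with hι
  have hιc : Continuous ι := by
    refine (PiLp.continuous_toLp 2 _).comp (continuous_pi fun i => ?_)
    refine Fin.cases ?_ (fun j => ?_) i
    · simp only [Fin.cons_zero]; exact continuous_const
    · simp only [Fin.cons_succ]; exact continuous_apply j
  have hι0 : ∀ y, ι y 0 = 0 := fun y => rfl
  set g : (Fin n → ℝ) → ℝ := fun y => T 0 (ι y) with hg
  have hgc : Continuous g := by
    refine continuousOn_univ.1 ((hT 0).comp hιc.continuousOn fun y _ => ?_)
    exact (hι0 y).ge
  have hg0 : ∀ y, 0 ≤ g y := fun y => hpos _ (hι0 y)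
  set y₀ : Fin n → ℝ := fun j => p j.succ with hy₀
  have hgy : g y₀ ≠ 0 := by
    have : ι y₀ = p := by
      ext i
      refine Fin.cases ?_ (fun j => ?_) i
      · exact hp.symm
      · rfl
    simpa only [hg, this] using hne
  set m := ∫ y in ball y₀ 1, g y with hm
  have hm0 : 0 < m := by
    refine (setIntegral_pos_iff_support_of_nonneg_ae (Eventually.of_forall hg0)
      ((hgc.continuousOn.integrableOn_compact (isCompact_closedBall y₀ 1)).mono_set
        ball_subset_closedBall)).2 ?_
    refine IsOpen.measure_pos _ ((hgc.isOpen_support).inter isOpen_ball) ⟨y₀, hgy, ?_⟩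
    exact mem_ball_self one_pos
  set E := ∫ x in {x : Ed (n + 1) | 0 < x 0}, e x with hE
  set N := ‖y₀‖ + 1 with hN
  have hN0 : 0 < N := by positivity
  have hball : ∀ y ∈ ball y₀ 1, ∀ j, |y j| ≤ N := by
    intro y hy j
    rw [mem_ball, dist_eq_norm] at hy
    have h1 : ‖y j‖ ≤ ‖y‖ := norm_le_pi_norm y j
    have h2 : ‖y‖ ≤ ‖y - y₀‖ + ‖y₀‖ := by simpa using norm_add_le (y - y₀) y₀
    rw [Real.norm_eq_abs] at h1
    linarith
  have key : ∀ R : ℝ, (n + 1) * N ≤ R → m * R ≤ (n + 1) * (4 * C) * E := by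
    intro R hR
    have hNR : N ≤ R := by nlinarith [(Nat.cast_nonneg n : (0 : ℝ) ≤ n)]
    have hR0 : 0 < R := hN0.trans_le hNR
    let a : Fin (n + 1) → ℝ := Fin.cons 0 fun _ => -(2 * R)
    let b : Fin (n + 1) → ℝ := fun _ => 2 * R
    have hbox : ∀ x ∈ cbox a b, 0 ≤ x 0 := fun x hx => (hx 0).1
    have hbox' : ∀ x ∈ obox a b, 0 < x 0 := fun x hx => (hx 0).1
    have hboxabs : ∀ x ∈ cbox a b, ∀ i, |x i| ≤ 2 * R := by
      intro x hx i
      rw [abs_le]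
      refine ⟨?_, (hx i).2⟩
      refine Fin.cases ?_ (fun j => ?_) i
      · linarith [hbox x hx]
      · exact (hx j.succ).1
    let u : Ed (n + 1) → ℝ := fun x => 2 - 1 / R ^ 2 * ∑ i, x i ^ 2
    have huc : Continuous u := by fun_prop
    have hu : ∀ x, HasGrad u (fun i => -(2 * x i / R ^ 2)) x := by
      intro x
      refine ((HasGrad.const 2).sub ((HasGrad.sum fun i _ => (HasGrad.coord i).sq).const_mul
        (1 / R ^ 2))).congr_grad fun i => ?_
      simp
      ring
    have hu2 : ∀ x i, |x i| = 2 * R → u x ≤ 0 := by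
      intro x i hi
      have h1 : x i ^ 2 ≤ ∑ i, x i ^ 2 :=
        Finset.single_le_sum (f := fun i => x i ^ 2) (fun j _ => sq_nonneg _) (Finset.mem_univ i)
      rw [← sq_abs, hi] at h1
      have h2 : 1 / R ^ 2 * (2 * R) ^ 2 = 4 := by field_simp; norm_num
      have h3 : 1 / R ^ 2 * (2 * R) ^ 2 ≤ 1 / R ^ 2 * ∑ i, x i ^ 2 := by gcongr
      simp only [u]; linarith
    let D : Ed (n + 1) → ℝ := fun x => ∑ i, θ' (u x) * -(2 * x i / R ^ 2) * T i x
    have hDc : ContinuousOn D (cbox a b) := by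
      refine continuousOn_finsetSum _ fun i _ => ContinuousOn.mul ?_ ((hT i).mono hbox)
      have : Continuous fun x : Ed (n + 1) => θ' (u x) * -(2 * x i / R ^ 2) := by fun_prop
      exact this.continuousOn
    have hdb := div_box (a := a) (b := b)
      (by
        intro i
        refine Fin.cases ?_ (fun j => ?_) i
        · simp only [a, b, Fin.cons_zero]; linarith
        · simp only [a, b, Fin.cons_succ]; linarith)
      (fun i x => θ (u x) * T i x)
      (fun i j x => θ' (u x) * -(2 * x j / R ^ 2) * T i x + θ (u x) * T' i j x) D
      (fun i => (hθc.comp huc).continuousOn.mul ((hT i).mono hbox))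
      (fun i x hx => (HasGrad.comp (hθ _) (hu x)).mul (hT' i x (hbox' x hx))) hDc
      (fun x hx => by
        rw [Finset.sum_add_distrib, ← Finset.mul_sum, hdiv x (hbox' x hx), mul_zero, add_zero])
      (fun i x _ hi => by
        have h : |x i| = 2 * R := by rw [hi, abs_of_pos (by positivity)]
        change θ (u x) * T i x = 0
        rw [hθl _ (hu2 x i h), zero_mul])
      (fun i hi0 x _ hi => by
        have h : |x i| = 2 * R := by
          obtain ⟨j, rfl⟩ := Fin.exists_succ_eq.2 hi0
          rw [hi]; simp only [a, Fin.cons_succ, abs_neg]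
          exact abs_of_pos (by positivity)
        change θ (u x) * T i x = 0
        rw [hθl _ (hu2 x i h), zero_mul])
    have hDle : ∀ x ∈ obox a b, |D x| ≤ (n + 1) * (4 * C / R) * e x := by
      intro x hx
      have h0 := hbox' x hx
      calc |D x| ≤ ∑ i, |θ' (u x) * -(2 * x i / R ^ 2) * T i x| :=
            Finset.abs_sum_le_sum_abs _ _
        _ ≤ ∑ _i : Fin (n + 1), 4 * C / R * e x := by
            refine Finset.sum_le_sum fun i _ => ?_
            rw [abs_mul, abs_mul]
            have h1 : |(-(2 * x i / R ^ 2))| ≤ 4 / R := by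
              rw [abs_neg, abs_div, abs_mul, abs_of_pos (by positivity : 0 < R ^ 2),
                abs_of_pos (by norm_num : (0 : ℝ) < 2)]
              have := hboxabs x (obox_subset _ _ hx) i
              rw [div_le_div_iff₀ (by positivity) hR0]
              nlinarith
            have h2 : |θ' (u x)| * |(-(2 * x i / R ^ 2))| ≤ C * (4 / R) :=
              mul_le_mul (hC _) h1 (abs_nonneg _) hC0
            calc _ ≤ C * (4 / R) * e x :=
                  mul_le_mul h2 (hTe i x h0) (abs_nonneg _) (by positivity)
              _ = _ := by ring
        _ = _ := by simp; ring
    have hDint : |∫ x in obox a b, D x| ≤ (n + 1) * (4 * C / R) * E := by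
      have hei : IntegrableOn e (obox a b) := he.mono_set hbox'
      calc |∫ x in obox a b, D x| ≤ ∫ x in obox a b, |D x| := abs_integral_le_integral_abs
        _ ≤ ∫ x in obox a b, (n + 1) * (4 * C / R) * e x :=
            setIntegral_mono_on (integrableOn_obox hDc).abs (hei.const_mul _)
              (isOpen_obox a b).measurableSet hDle
        _ = (n + 1) * (4 * C / R) * ∫ x in obox a b, e x := integral_const_mul _ _
        _ ≤ _ := by
            gcongr
            refine setIntegral_mono_set he ?_ (Eventually.of_forall hbox')
            exact (ae_restrict_iff' hHm).2 (Eventually.of_forall he0)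
    have hmle : m ≤ ∫ y in Set.Icc (a ∘ Fin.succ) (b ∘ Fin.succ), θ (u (ι y)) * g y := by
      have hcont : Continuous fun y => θ (u (ι y)) * g y := by fun_prop
      have hsub : ball y₀ 1 ⊆ Set.Icc (a ∘ Fin.succ) (b ∘ Fin.succ) := by
        intro y hy
        refine ⟨fun j => ?_, fun j => ?_⟩ <;>
        · have := abs_le.1 (hball y hy j)
          simp only [a, b, Function.comp, Fin.cons_succ]
          linarith
      calc m = ∫ y in ball y₀ 1, θ (u (ι y)) * g y := by
            refine setIntegral_congr_fun isOpen_ball.measurableSet fun y hy => ?_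
            have h1 : ∑ i, ι y i ^ 2 ≤ R ^ 2 := by
              have e1 : ∑ i, ι y i ^ 2 = ∑ j, y j ^ 2 := by
                rw [Fin.sum_univ_succ]; simp [hι]
              have e2 : ∑ j, y j ^ 2 ≤ ∑ _j : Fin n, N ^ 2 :=
                Finset.sum_le_sum fun j _ => sq_le_sq' (abs_le.1 (hball y hy j)).1
                  (abs_le.1 (hball y hy j)).2
              simp only [Finset.sum_const, Finset.card_univ, Fintype.card_fin, nsmul_eq_mul] at e2
              have hn : (0 : ℝ) ≤ n := Nat.cast_nonneg n
              have e3 : ((n + 1) * N) ^ 2 ≤ R ^ 2 := by gcongr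
              rw [e1]
              nlinarith [mul_nonneg hn (sq_nonneg N), mul_nonneg (mul_nonneg hn hn) (sq_nonneg N),
                sq_nonneg N]
            have h2 : 1 ≤ u (ι y) := by
              have : 1 / R ^ 2 * ∑ i, ι y i ^ 2 ≤ 1 := by
                rw [one_div, inv_mul_le_iff₀ (by positivity), mul_one]; exact h1
              simp only [u]; linarith
            simp only [hθr _ h2, one_mul]
        _ ≤ _ := setIntegral_mono_set (hcont.continuousOn.integrableOn_compact isCompact_Icc)
            (Eventually.of_forall fun y => mul_nonneg (hθ0 _) (hg0 y)) (Eventually.of_forall hsub)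
    have h1 : m ≤ (n + 1) * (4 * C / R) * E := by
      refine hmle.trans (le_trans ?_ hDint)
      rw [hdb, abs_neg]
      exact le_abs_self _
    have h2 : (n + 1) * (4 * C / R) * E * R = (n + 1) * (4 * C) * E := by field_simp
    rw [← h2]
    gcongr
  have h1 := key (max ((n + 1) * N) ((n + 1) * (4 * C) * E / m + 1)) (le_max_left _ _)
  have h2 : (n + 1) * (4 * C) * E + m ≤ m * max ((n + 1) * N) ((n + 1) * (4 * C) * E / m + 1) := by
    calc (n + 1) * (4 * C) * E + m = m * ((n + 1) * (4 * C) * E / m + 1) := by field_simp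
      _ ≤ _ := by gcongr; exact le_max_right _ _
  linarith

/-! ### The stress tensor and the real system -/

/-- `1 - |1 + w|²` in terms of the real and imaginary parts of `w`. -/
def defect {n : ℕ} (w : Fin 2 → Ed n → ℝ) (x : Ed n) : ℝ := -(2 * w 0 x + w 0 x ^ 2 + w 1 x ^ 2)

/-- The energy density `½|∇w|² + ¼(1 - |1 + w|²)²`. -/
def jetDen {n : ℕ} (w : Fin 2 → Ed n → ℝ) (w1 : Fin 2 → Fin n → Ed n → ℝ) (x : Ed n) : ℝ :=
  1 / 2 * ∑ k, ∑ l, w1 k l x ^ 2 + 1 / 4 * defect w x ^ 2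

/-- The row of the stress tensor dual to translations in `x₀`. -/
def stress {n : ℕ} (w : Fin 2 → Ed (n + 1) → ℝ) (w1 : Fin 2 → Fin (n + 1) → Ed (n + 1) → ℝ)
    (i : Fin (n + 1)) (x : Ed (n + 1)) : ℝ :=
  ∑ k, w1 k i x * w1 k 0 x - (if i = 0 then 1 else 0) * jetDen w w1 x

theorem abs_stress_le {n : ℕ} (w : Fin 2 → Ed (n + 1) → ℝ)
    (w1 : Fin 2 → Fin (n + 1) → Ed (n + 1) → ℝ) (i : Fin (n + 1)) (x : Ed (n + 1)) :
    |stress w w1 i x| ≤ 3 * jetDen w w1 x := by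
  have hj : ∀ k j, w1 k j x ^ 2 ≤ ∑ l, w1 k l x ^ 2 := fun k j =>
    Finset.single_le_sum (f := fun l => w1 k l x ^ 2) (fun _ _ => sq_nonneg _) (Finset.mem_univ j)
  have hd := sq_nonneg (defect w x)
  have h1 : |∑ k, w1 k i x * w1 k 0 x| ≤ 2 * jetDen w w1 x := by
    refine (Finset.abs_sum_le_sum_abs _ _).trans ?_
    have : ∀ k, |w1 k i x * w1 k 0 x| ≤ ∑ l, w1 k l x ^ 2 := fun k => by
      rw [abs_mul]
      nlinarith [hj k i, hj k 0, sq_abs (w1 k i x), sq_abs (w1 k 0 x),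
        sq_nonneg (|w1 k i x| - |w1 k 0 x|)]
    refine (Finset.sum_le_sum fun k _ => this k).trans ?_
    simp only [jetDen]
    linarith
  have h0 : 0 ≤ jetDen w w1 x := by
    simp only [jetDen]
    positivity
  rw [abs_le] at h1 ⊢
  simp only [stress]
  split_ifs <;> constructor <;> linarith [h1.1, h1.2]

/-- A solution of the equation for `1 + w` with `w = 0` on the boundary, written as a real system;
`w 0` and `w 1` are the real and imaginary parts. -/
structure JetSol {n : ℕ} (c : ℝ) (w : Fin 2 → Ed (n + 1) → ℝ)
    (w1 : Fin 2 → Fin (n + 1) → Ed (n + 1) → ℝ)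
    (w2 : Fin 2 → Fin (n + 1) → Fin (n + 1) → Ed (n + 1) → ℝ) : Prop extends Jet w w1 w2 where
  eq0 : ∀ x, 0 < x 0 → ∑ i, w2 0 i i x = c * w1 1 0 x - defect w x * (1 + w 0 x)
  eq1 : ∀ x, 0 < x 0 → ∑ i, w2 1 i i x = -(c * w1 0 0 x) - defect w x * w 1 x
  bot : ∀ k x, x 0 = 0 → w k x = 0
  tan : ∀ k i x, i ≠ 0 → x 0 = 0 → w1 k i x = 0

section

variable {n : ℕ} {c : ℝ} {w : Fin 2 → Ed (n + 1) → ℝ}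
  {w1 : Fin 2 → Fin (n + 1) → Ed (n + 1) → ℝ}
  {w2 : Fin 2 → Fin (n + 1) → Fin (n + 1) → Ed (n + 1) → ℝ}

/-- Finite energy forces the normal derivative to vanish on the boundary, where
`stress 0 = ½|∂₀w|²`. -/
theorem JetSol.bot1 (J : JetSol c w w1 w2)
    (he : IntegrableOn (jetDen w w1) {x : Ed (n + 1) | 0 < x 0}) (k : Fin 2) (i : Fin (n + 1))
    (x : Ed (n + 1)) (hx : x 0 = 0) : w1 k i x = 0 := by
  have hst : ∀ x : Ed (n + 1), x 0 = 0 → stress w w1 0 x = 1 / 2 * ∑ k, w1 k 0 x ^ 2 := by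
    intro x hx
    have h1 : ∀ k, ∑ l, w1 k l x ^ 2 = w1 k 0 x ^ 2 := fun k => by
      rw [Finset.sum_eq_single 0 (fun l _ hl => by rw [J.tan k l x hl hx]; ring) (by simp)]
    simp only [stress, jetDen, h1, defect, J.bot _ x hx, Fin.sum_univ_two]
    simp
    ring
  have hd : ∀ x : Ed (n + 1), 0 < x 0 → HasGrad (defect w)
      (fun j => -(2 * w1 0 j x + 2 * w 0 x * w1 0 j x + 2 * w 1 x * w1 1 j x)) x := fun x hx => by
    have := ((((J.grad0 0 x hx).const_mul 2).add (J.grad0 0 x hx).sq).add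
      (J.grad0 1 x hx).sq).const_mul (-1)
    simp only [neg_mul, one_mul] at this
    exact this
  have hj : ∀ x : Ed (n + 1), 0 < x 0 → HasGrad (jetDen w w1) (fun j =>
      1 / 2 * ∑ k, ∑ l, 2 * w1 k l x * w2 k l j x + 1 / 4 * (2 * defect w x *
        -(2 * w1 0 j x + 2 * w 0 x * w1 0 j x + 2 * w 1 x * w1 1 j x))) x := fun x hx =>
    ((HasGrad.sum fun k _ => HasGrad.sum fun l _ => (J.grad1 k l x hx).sq).const_mul _).add
      ((hd x hx).sq.const_mul _)
  have hflux := flux_vanish (stress w w1)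
    (fun i j x => ∑ k, (w2 k i j x * w1 k 0 x + w1 k i x * w2 k 0 j x)
      - (if i = 0 then 1 else 0) * (1 / 2 * ∑ k, ∑ l, 2 * w1 k l x * w2 k l j x
        + 1 / 4 * (2 * defect w x *
        -(2 * w1 0 j x + 2 * w 0 x * w1 0 j x + 2 * w 1 x * w1 1 j x))))
    (fun x => 3 * jetDen w w1 x)
    (fun i => by
      have h0 := J.cont0
      have h1 := J.cont1
      unfold stress jetDen defect
      fun_prop)
    (fun i x hx => (HasGrad.sum fun k _ => (J.grad1 k i x hx).mul (J.grad1 k 0 x hx)).sub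
      ((hj x hx).const_mul _))
    (fun x hx => by
      have e1 : ∀ k, ∑ i, w1 k i x * w2 k 0 i x = ∑ i, w1 k i x * w2 k i 0 x := fun k =>
        Finset.sum_congr rfl fun i _ => by rw [J.symm k 0 i x hx]
      have e2 : ∀ k, ∑ l, 2 * w1 k l x * w2 k l 0 x = 2 * ∑ l, w1 k l x * w2 k l 0 x := fun k => by
        rw [Finset.mul_sum]; exact Finset.sum_congr rfl fun i _ => by ring
      rw [Finset.sum_sub_distrib, Finset.sum_comm]
      simp only [Finset.sum_add_distrib, ← Finset.sum_mul, ite_mul, one_mul, zero_mul,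
        Finset.sum_ite_eq', Finset.mem_univ, if_true, Fin.sum_univ_two, e1, e2, J.eq0 x hx,
        J.eq1 x hx]
      ring)
    (he.const_mul 3) (fun i x _ => abs_stress_le w w1 i x)
    (fun x hx => by rw [hst x hx]; positivity) x hx
  by_cases hi : i = 0
  · subst hi
    rw [hst x hx, Fin.sum_univ_two] at hflux
    have : w1 0 0 x ^ 2 = 0 ∧ w1 1 0 x ^ 2 = 0 := by
      constructor <;> nlinarith [sq_nonneg (w1 0 0 x), sq_nonneg (w1 1 0 x)]
    revert k
    rw [Fin.forall_fin_two]
    simpa using this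
  · exact J.tan k i x hi hx

/-- On a box, where `w` is bounded, the equation gives `|Δw|² ≤ K (|w|² + |∂₀w|²)`. -/
theorem JetSol.lap_le (J : JetSol c w w1 w2) (a b : Fin (n + 1) → ℝ) (ha : a 0 = 0) :
    ∃ K, 0 ≤ K ∧ ∀ x ∈ obox a b,
      ∑ k, (∑ i, w2 k i i x) ^ 2 ≤ K * ∑ k, (w k x ^ 2 + w1 k 0 x ^ 2) := by
  have hsub : cbox a b ⊆ {x : Ed (n + 1) | 0 ≤ x 0} := fun x hx => by
    have := (hx 0).1; rwa [ha] at this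
  -- `|Δw|² ≤ 2c²|∂₀w|² + 2W²|1 + w|²` for `W = defect w`, and `W² ≤ |2 + w|²|w|²`.
  have hc0 := J.cont0
  have hcont : ContinuousOn (fun x => 2 * ((2 + w 0 x) ^ 2 + w 1 x ^ 2) *
      ((1 + w 0 x) ^ 2 + w 1 x ^ 2)) {x : Ed (n + 1) | 0 ≤ x 0} := by fun_prop
  obtain ⟨M, hM⟩ := (isCompact_cbox a b).bddAbove_image (hcont.mono hsub)
  refine ⟨2 * c ^ 2 + 2 * |M|, by positivity, fun x hx => ?_⟩
  have hx0 : 0 < x 0 := by have := (hx 0).1; rwa [ha] at this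
  have hMx : 2 * ((2 + w 0 x) ^ 2 + w 1 x ^ 2) * ((1 + w 0 x) ^ 2 + w 1 x ^ 2) ≤ |M| :=
    (hM (Set.mem_image_of_mem _ (obox_subset a b hx))).trans (le_abs_self M)
  rw [Fin.sum_univ_two, Fin.sum_univ_two, J.eq0 x hx0, J.eq1 x hx0]
  set p := w 0 x
  set q := w 1 x
  set r := w1 0 0 x
  set t := w1 1 0 x
  have hW : defect w x = -(2 * p + p ^ 2 + q ^ 2) := rfl
  set W := defect w x
  have h1 : W ^ 2 ≤ ((2 + p) ^ 2 + q ^ 2) * (p ^ 2 + q ^ 2) := by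
    rw [hW]; nlinarith [sq_nonneg (p * q - (2 + p) * q)]
  have h2 : (c * t - W * (1 + p)) ^ 2 + (-(c * r) - W * q) ^ 2
      ≤ 2 * c ^ 2 * (r ^ 2 + t ^ 2) + 2 * (W ^ 2 * ((1 + p) ^ 2 + q ^ 2)) := by
    nlinarith [sq_nonneg (c * t + W * (1 + p)), sq_nonneg (-(c * r) + W * q)]
  have h3 : 2 * (W ^ 2 * ((1 + p) ^ 2 + q ^ 2)) ≤ |M| * (p ^ 2 + q ^ 2) := by
    calc 2 * (W ^ 2 * ((1 + p) ^ 2 + q ^ 2))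
        ≤ 2 * ((((2 + p) ^ 2 + q ^ 2) * (p ^ 2 + q ^ 2)) * ((1 + p) ^ 2 + q ^ 2)) := by gcongr
      _ = 2 * ((2 + p) ^ 2 + q ^ 2) * ((1 + p) ^ 2 + q ^ 2) * (p ^ 2 + q ^ 2) := by ring
      _ ≤ _ := by gcongr
  have h4 : 0 ≤ c ^ 2 * (p ^ 2 + q ^ 2) := by positivity
  have h5 : 0 ≤ |M| * (p ^ 2 + q ^ 2) := by positivity
  have h6 : 0 ≤ |M| * (r ^ 2 + t ^ 2) := by positivity
  nlinarith

theorem JetSol.eq_zero (J : JetSol c w w1 w2)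
    (he : IntegrableOn (jetDen w w1) {x : Ed (n + 1) | 0 < x 0}) (k : Fin 2) (x : Ed (n + 1))
    (hx : 0 ≤ x 0) : w k x = 0 := by
  rcases hx.eq_or_lt with h | h
  · exact J.bot k x h.symm
  · exact unique_cont J.toJet J.bot (J.bot1 he) J.lap_le x h k

end

/-! ### Reduction of the Gross–Pitaevskii equation to the real system -/

/-- The closed half-space. -/
def hs (n : ℕ) : Set (Ed (n + 1)) := {x | 0 ≤ x 0}

/-- One-sided (up to the boundary) partial derivative on the closed half-space. -/
def pdw {n : ℕ} (f : Ed (n + 1) → ℂ) (i : Fin (n + 1)) (x : Ed (n + 1)) : ℂ :=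
  fderivWithin ℝ f (hs n) x (EuclideanSpace.single i 1)

theorem hs_mem_nhds {n : ℕ} {x : Ed (n + 1)} (hx : 0 < x 0) : hs n ∈ 𝓝 x := by
  have h : IsOpen {x : Ed (n + 1) | 0 < x 0} := isOpen_lt continuous_const (by fun_prop)
  exact mem_of_superset (h.mem_nhds hx) fun y (hy : 0 < y 0) => hy.le

theorem uniqueDiffOn_hs (n : ℕ) : UniqueDiffOn ℝ (hs n) := by
  refine uniqueDiffOn_convex ?_ ⟨EuclideanSpace.single 0 1, ?_⟩
  · intro x hx y hy s t hs ht _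
    have hx' : 0 ≤ x 0 := hx
    have hy' : 0 ≤ y 0 := hy
    change 0 ≤ s * x 0 + t * y 0
    positivity
  · exact mem_interior_iff_mem_nhds.2 (hs_mem_nhds (by simp))

theorem contDiffOn_pdw {n : ℕ} {f : Ed (n + 1) → ℂ} (hf : ContDiffOn ℝ (⊤ : ℕ∞) f (hs n))
    (i : Fin (n + 1)) : ContDiffOn ℝ (⊤ : ℕ∞) (pdw f i) (hs n) :=
  (hf.fderivWithin (uniqueDiffOn_hs n) (by norm_cast)).clm_apply contDiffOn_const

theorem pdw_eq {n : ℕ} (f : Ed (n + 1) → ℂ) (i : Fin (n + 1)) {x : Ed (n + 1)} (hx : 0 < x 0) :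
    pdw f i x = fderiv ℝ f x (EuclideanSpace.single i 1) := by
  rw [pdw, fderivWithin_of_mem_nhds (hs_mem_nhds hx)]

theorem pdw_pdw_eq {n : ℕ} (f : Ed (n + 1) → ℂ) (i j : Fin (n + 1)) {x : Ed (n + 1)}
    (hx : 0 < x 0) : pdw (pdw f i) j x =
      fderiv ℝ (fun y => fderiv ℝ f y (EuclideanSpace.single i 1)) x
        (EuclideanSpace.single j 1) := by
  rw [pdw_eq _ _ hx]
  congr 1
  refine Filter.EventuallyEq.fderiv_eq ?_
  have h : IsOpen {x : Ed (n + 1) | 0 < x 0} := isOpen_lt continuous_const (by fun_prop)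
  filter_upwards [h.mem_nhds hx] with y hy using pdw_eq f i hy

theorem hasFDerivAt_hs {n : ℕ} {f : Ed (n + 1) → ℂ} (hf : ContDiffOn ℝ (⊤ : ℕ∞) f (hs n))
    {x : Ed (n + 1)} (hx : 0 < x 0) : HasFDerivAt f (fderivWithin ℝ f (hs n) x) x :=
  ((hf.differentiableOn (by simp)) x (le_of_lt hx)).hasFDerivWithinAt.hasFDerivAt (hs_mem_nhds hx)

theorem hasGrad_re {n : ℕ} {f : Ed (n + 1) → ℂ} (hf : ContDiffOn ℝ (⊤ : ℕ∞) f (hs n))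
    {x : Ed (n + 1)} (hx : 0 < x 0) :
    HasGrad (fun y => (f y).re) (fun j => (pdw f j x).re) x :=
  ⟨_, Complex.reCLM.hasFDerivAt.comp x (hasFDerivAt_hs hf hx), fun _ => rfl⟩

theorem hasGrad_im {n : ℕ} {f : Ed (n + 1) → ℂ} (hf : ContDiffOn ℝ (⊤ : ℕ∞) f (hs n))
    {x : Ed (n + 1)} (hx : 0 < x 0) :
    HasGrad (fun y => (f y).im) (fun j => (pdw f j x).im) x :=
  ⟨_, Complex.imCLM.hasFDerivAt.comp x (hasFDerivAt_hs hf hx), fun _ => rfl⟩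

theorem pdw_symm {n : ℕ} {f : Ed (n + 1) → ℂ} (hf : ContDiffOn ℝ (⊤ : ℕ∞) f (hs n))
    (i j : Fin (n + 1)) {x : Ed (n + 1)} (hx : 0 < x 0) :
    pdw (pdw f i) j x = pdw (pdw f j) i x := by
  have hc : ContDiffAt ℝ (⊤ : ℕ∞) f x := hf.contDiffAt (hs_mem_nhds hx)
  have hs : IsSymmSndFDerivAt ℝ f x := hc.isSymmSndFDerivAt (by
    rw [minSmoothness_of_isRCLikeNormedField]; exact WithTop.coe_le_coe.2 (le_top (a := (2 : ℕ∞))))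
  have hd : DifferentiableAt ℝ (fderiv ℝ f) x :=
    (hc.fderiv_right (m := 1) (WithTop.coe_le_coe.2 (le_top (a := (1 + 1 : ℕ∞))))).differentiableAt one_ne_zero
  have h : ∀ i j : Fin (n + 1), pdw (pdw f i) j x =
      fderiv ℝ (fderiv ℝ f) x (EuclideanSpace.single j 1) (EuclideanSpace.single i 1) := by
    intro i j
    rw [pdw_pdw_eq f i j hx, fderiv_clm_apply hd (differentiableAt_const _)]
    simp
  rw [h, h]
  exact hs _ _

/-- Tangential derivatives vanish on the boundary when the boundary value is constant. -/
theorem pdw_tangential {n : ℕ} {f : Ed (n + 1) → ℂ} (hf : ContDiffOn ℝ (⊤ : ℕ∞) f (hs n))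
    {z : ℂ} (hbd : ∀ x : Ed (n + 1), x 0 = 0 → f x = z) (i : Fin (n + 1)) (hi : i ≠ 0)
    (x : Ed (n + 1)) (hx : x 0 = 0) : pdw f i x = 0 := by
  have hl0 : ∀ t : ℝ, (x + t • EuclideanSpace.single i (1 : ℝ)) 0 = 0 := fun t => by
    simp [hx, hi.symm]
  have h1 : HasFDerivWithinAt f (fderivWithin ℝ f (hs n) x) (hs n)
      (x + (0 : ℝ) • EuclideanSpace.single i (1 : ℝ)) := by
    rw [zero_smul, add_zero]
    exact ((hf.differentiableOn (by simp)) x hx.ge).hasFDerivWithinAt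
  have h2 : HasDerivAt (fun t : ℝ => x + t • EuclideanSpace.single i (1 : ℝ))
      (EuclideanSpace.single i (1 : ℝ)) 0 := by
    simpa using ((hasDerivAt_id (0 : ℝ)).smul_const (EuclideanSpace.single i (1 : ℝ))).const_add x
  have h3 := h1.comp_hasDerivAt (0 : ℝ) h2 (Eventually.of_forall fun t => (hl0 t).ge)
  have h4 : (f ∘ fun t : ℝ => x + t • EuclideanSpace.single i (1 : ℝ)) = fun _ => z :=
    funext fun t => hbd _ (hl0 t)
  rw [h4] at h3
  exact h3.unique (hasDerivAt_const _ _)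

/-- The real and imaginary parts of `ψ - 1` form a solution of the real system. -/
theorem jetSol_of_gp {n : ℕ} {c : ℝ} {ψ : Ed (n + 1) → ℂ}
    (hsm : ContDiffOn ℝ (⊤ : ℕ∞) ψ (hs n))
    (heq : ∀ x : Ed (n + 1), 0 < x 0 →
      Complex.I * (c : ℂ) * pd ψ 0 x + lap ψ x + (1 - (‖ψ x‖ : ℂ) ^ 2) * ψ x = 0)
    (hbd : ∀ x : Ed (n + 1), x 0 = 0 → ψ x = 1) :
    JetSol c ![fun x => (ψ x).re - 1, fun x => (ψ x).im]
      ![fun i x => (pdw ψ i x).re, fun i x => (pdw ψ i x).im]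
      ![fun i j x => (pdw (pdw ψ i) j x).re, fun i j x => (pdw (pdw ψ i) j x).im] := by
  have hre : ∀ {f : Ed (n + 1) → ℂ}, ContDiffOn ℝ (⊤ : ℕ∞) f (hs n) →
      ContinuousOn (fun x => (f x).re) (hs n) := fun hf =>
    Complex.continuous_re.comp_continuousOn hf.continuousOn
  have him : ∀ {f : Ed (n + 1) → ℂ}, ContDiffOn ℝ (⊤ : ℕ∞) f (hs n) →
      ContinuousOn (fun x => (f x).im) (hs n) := fun hf =>
    Complex.continuous_im.comp_continuousOn hf.continuousOn
  have h1 := contDiffOn_pdw hsm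
  have h2 := fun i => contDiffOn_pdw (h1 i)
  have heq' : ∀ x : Ed (n + 1), 0 < x 0 →
      Complex.I * (c : ℂ) * pdw ψ 0 x + ∑ i, pdw (pdw ψ i) i x
        + ((-(2 * ((ψ x).re - 1) + ((ψ x).re - 1) ^ 2 + (ψ x).im ^ 2) : ℝ) : ℂ) * ψ x = 0 := by
    intro x hx
    rw [← heq x hx, pdw_eq _ _ hx, pd, lap]
    congr 2
    · exact Finset.sum_congr rfl fun i _ => pdw_pdw_eq ψ i i hx
    · have : ‖ψ x‖ ^ 2 = (ψ x).re ^ 2 + (ψ x).im ^ 2 := by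
        rw [← Complex.normSq_eq_norm_sq, Complex.normSq_apply]; ring
      rw [← Complex.ofReal_pow, this]
      push_cast
      ring
  refine ⟨⟨?_, ?_, ?_, ?_, ?_, ?_⟩, ?_, ?_, ?_, ?_⟩
  · exact Fin.forall_fin_two.2 ⟨(hre hsm).sub continuousOn_const, him hsm⟩
  · exact Fin.forall_fin_two.2 ⟨fun i => hre (h1 i), fun i => him (h1 i)⟩
  · exact Fin.forall_fin_two.2 ⟨fun i j => hre (h2 i j), fun i j => him (h2 i j)⟩
  · exact Fin.forall_fin_two.2 ⟨fun x hx => ((hasGrad_re hsm hx).sub (HasGrad.const 1)).congr_grad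
      fun i => by simp, fun x hx => hasGrad_im hsm hx⟩
  · exact Fin.forall_fin_two.2 ⟨fun i x hx => hasGrad_re (h1 i) hx,
      fun i x hx => hasGrad_im (h1 i) hx⟩
  · exact Fin.forall_fin_two.2 ⟨fun i j x hx => congrArg Complex.re (pdw_symm hsm i j hx),
      fun i j x hx => congrArg Complex.im (pdw_symm hsm i j hx)⟩
  · intro x hx
    have := congrArg Complex.re (heq' x hx)
    rw [Complex.add_re, Complex.add_re, Complex.re_ofReal_mul, Complex.re_sum] at this
    simp [defect] at this ⊢
    linarith
  · intro x hx
    have := congrArg Complex.im (heq' x hx)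
    rw [Complex.add_im, Complex.add_im, Complex.im_ofReal_mul, Complex.im_sum] at this
    simp [defect] at this ⊢
    linarith
  · exact Fin.forall_fin_two.2 ⟨fun x hx => by simp [hbd x hx], fun x hx => by simp [hbd x hx]⟩
  · have h := pdw_tangential hsm hbd
    exact Fin.forall_fin_two.2 ⟨fun i x hi hx => by simp [h i hi x hx],
      fun i x hi hx => by simp [h i hi x hx]⟩

theorem jetDen_eq_eDen {n : ℕ} (ψ : Ed (n + 1) → ℂ) {x : Ed (n + 1)} (hx : 0 < x 0) :
    jetDen ![fun x => (ψ x).re - 1, fun x => (ψ x).im]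
      ![fun i x => (pdw ψ i x).re, fun i x => (pdw ψ i x).im] x = eDen ψ x := by
  have h : ∀ z : ℂ, ‖z‖ ^ 2 = z.re ^ 2 + z.im ^ 2 := fun z => by
    rw [← Complex.normSq_eq_norm_sq, Complex.normSq_apply]; ring
  simp only [jetDen, eDen, gradSq, h, Fin.sum_univ_two, defect, pd, ← pdw_eq ψ _ hx,
    Finset.sum_add_distrib]
  simp
  ring

/-- the only finite energy solution of the Gross–Pitaevskii traveling
wave equation on the half-space `{x₁ > 0}` with boundary value 1 is `ψ ≡ 1`. -/
theorem statement11 (d : ℕ) [NeZero d] (hd : d = 2 ∨ d = 3) (c : ℝ) (hc : 0 < c)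
    (ψ : Ed d → ℂ)
    (hsm : ContDiffOn ℝ (⊤ : ℕ∞) ψ {x : Ed d | 0 ≤ x 0})
    (heq : ∀ x : Ed d, 0 < x 0 →
      Complex.I * (c : ℂ) * pd ψ 0 x + lap ψ x + (1 - (‖ψ x‖ : ℂ) ^ 2) * ψ x = 0)
    (hbd : ∀ x : Ed d, x 0 = 0 → ψ x = 1)
    (hfe : IntegrableOn (eDen ψ) {x : Ed d | 0 < x 0}) :
    ∀ x : Ed d, 0 ≤ x 0 → ψ x = 1 := by
  cases d with
  | zero => omega
  | succ n =>
    have J := jetSol_of_gp (c := c) hsm heq hbd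
    have hm : MeasurableSet {x : Ed (n + 1) | 0 < x 0} :=
      (isOpen_lt continuous_const (by fun_prop)).measurableSet
    have h := J.eq_zero (hfe.congr_fun (fun x hx => (jetDen_eq_eDen ψ hx).symm) hm)
    intro x hx
    have h0 : (ψ x).re - 1 = 0 := h 0 x hx
    have h1 : (ψ x).im = 0 := h 1 x hx
    exact Complex.ext (by simpa using sub_eq_zero.1 h0) (by simpa using h1)
end
end

section
/- Let d ∈ {2,3}, let c_n ∈ (0, √2) with c_n → c ∈ (0, √2), and let ψ_n be nontrivial finite energy solutions of the Gross–Pitaevskii traveling wave equation with speed c_n on ℝ^d. Then there exist points ξ_n ∈ ℝ^d and a subsequence such that the translates ψ_n(· − ξ_n) converge, uniformly together with all derivatives up to any fixed order on every compact subset of ℝ^d, to a nontrivial smooth solution ψ₀ of the Gross–Pitaevskii traveling wave equation with speed c (ψ₀ may have infinite energy). -/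
/-!
# Local compactness of subsonic travelling waves

Two independent facts give the result: travelling waves with speeds in `(0, √2)` are bounded together
with all their derivatives, uniformly in the wave, and the modulus of a nontrivial finite energy wave must
drop below one somewhere, by an amount depending only on the distance of the speed from `√2`.

*Uniform bounds* (`UB_waves`). For a wave `ψ`, the function `u = exp(icx₁/2) ψ` solves
`Δu = (|u|² - 1 - c²/4) u`. Hence `w = |u|² - 3/2` satisfies `Δw ≥ 2w²` where it is positive, and a
Keller–Osserman comparison bounds `u` by a dimensional constant (`sup_bound`). A gradient estimate
in terms of sup norms (`grad_est`), obtained from the maximum principle and applied to the iterated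
derivatives of `u`, then bounds the derivatives of every order by induction (`UB_bootstrap`).

*Modulus below one* (`trivial_of_close`). Suppose `r = |ψ|² > 1 - δ` everywhere with
`c² + 4δ < 2`, and put `η = 1 - r`. With the momentum density `J = Im (conj ψ ∇ψ)`, the imaginary
part of the equation says that `W = J - (c/2) η e₁` is divergence free, while `V = J / r` is the
gradient of the phase, hence curl free. Both fields are square integrable because the energy is
finite, so `∫ W · V = 0` (`orth`); this is proved by translating `V` to infinity, without
constructing a potential. Also `∫ div (η ∇η) = 0` (`integral_div_eq_zero`). A combination of the two
integrands is a quadratic expression in `∇η`, `η` and `V` that is nonnegative precisely because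
`c` is subsonic (`coercive`), so it vanishes identically and `ψ` is a constant of modulus one.

Translating each wave so that `|ψ|² ≤ 1 - δ` at the origin and extracting a diagonal subsequence by
Arzelà–Ascoli (`exists_subseq_LocCk`) gives a smooth limit. The equation passes to the limit, and so
does the bound at the origin, which makes the limit nontrivial.
-/

open MeasureTheory Filter Complex Metric Topology

noncomputable section

/-! ### Directional derivatives and the Laplacian -/

/-- The derivative of `f` in the `i`-th coordinate direction, for values in any normed space;
for complex values it is `pd`. -/
def D {d : ℕ} {F : Type*} [NormedAddCommGroup F] [NormedSpace ℝ F]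
    (i : Fin d) (f : Ed d → F) (x : Ed d) : F :=
  fderiv ℝ f x (EuclideanSpace.single i 1)

/-- The Laplacian for values in any normed space; for complex values it is `lap`. -/
def Lap {d : ℕ} {F : Type*} [NormedAddCommGroup F] [NormedSpace ℝ F]
    (f : Ed d → F) (x : Ed d) : F := ∑ i : Fin d, D i (D i f) x

/-- Smoothness, in the form used in the theorem. -/
abbrev Sm {d : ℕ} {F : Type*} [NormedAddCommGroup F] [NormedSpace ℝ F] (f : Ed d → F) : Prop :=
  ContDiff ℝ (⊤ : ℕ∞) f

section calculus

variable {d : ℕ} {F G : Type*} [NormedAddCommGroup F] [NormedSpace ℝ F]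
  [NormedAddCommGroup G] [NormedSpace ℝ G]

lemma Sm.da {f : Ed d → F} (hf : Sm f) (x : Ed d) : DifferentiableAt ℝ f x :=
  (hf.differentiable (by simp)) x

lemma Sm.fd {f : Ed d → F} (hf : Sm f) : Sm (fderiv ℝ f) :=
  hf.fderiv_right (by simp)

lemma Sm.D {f : Ed d → F} (hf : Sm f) (i : Fin d) : Sm (D i f) :=
  hf.fd.clm_apply contDiff_const

lemma Sm.Lap {f : Ed d → F} (hf : Sm f) : Sm (Lap f) :=
  ContDiff.sum fun i _ => (hf.D i).D i

lemma D_comm {f : Ed d → F} (hf : Sm f) (i j : Fin d) (x : Ed d) :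
    D i (D j f) x = D j (D i f) x := by
  have h := hf.contDiffAt (x := x) |>.isSymmSndFDerivAt
    (by simp only [minSmoothness_of_isRCLikeNormedField]; exact WithTop.coe_le_coe.2 le_top)
  have key : ∀ k l : Fin d, D k (D l f) x = fderiv ℝ (fderiv ℝ f) x
      (EuclideanSpace.single k 1) (EuclideanSpace.single l 1) := by
    intro k l
    change fderiv ℝ (fun y => fderiv ℝ f y (EuclideanSpace.single l 1)) x _ = _
    rw [fderiv_clm_apply (hf.fd.da x) (differentiableAt_const _)]
    simp
  rw [key, key]
  exact h _ _

lemma D_add {f g : Ed d → F} (hf : Sm f) (hg : Sm g) (i : Fin d) (x : Ed d) :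
    D i (fun y => f y + g y) x = D i f x + D i g x := by
  simp [D, fderiv_fun_add (hf.da x) (hg.da x)]

lemma D_sub {f g : Ed d → F} (hf : Sm f) (hg : Sm g) (i : Fin d) (x : Ed d) :
    D i (fun y => f y - g y) x = D i f x - D i g x := by
  simp [D, fderiv_fun_sub (hf.da x) (hg.da x)]

lemma D_const (c : F) (i : Fin d) (x : Ed d) : D i (fun _ => c) x = 0 := by
  simp [D]

lemma D_sum {ι : Type*} {s : Finset ι} {f : ι → Ed d → F} (hf : ∀ k, Sm (f k)) (i : Fin d)
    (x : Ed d) : D i (fun y => ∑ k ∈ s, f k y) x = ∑ k ∈ s, D i (f k) x := by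
  simp [D, fderiv_fun_sum (fun k _ => (hf k).da x)]

lemma D_mul {A : Type*} [NormedCommRing A] [NormedAlgebra ℝ A] {f g : Ed d → A}
    (hf : Sm f) (hg : Sm g) (i : Fin d) (x : Ed d) :
    D i (fun y => f y * g y) x = f x * D i g x + g x * D i f x := by
  simp [D, fderiv_fun_mul (hf.da x) (hg.da x)]

lemma D_clm (l : F →L[ℝ] G) {f : Ed d → F} (hf : Sm f) (i : Fin d) (x : Ed d) :
    D i (fun y => l (f y)) x = l (D i f x) := by
  change fderiv ℝ (l ∘ f) x _ = _
  rw [fderiv_comp x l.differentiableAt (hf.da x)]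
  simp [D]

lemma Sm.clm (l : F →L[ℝ] G) {f : Ed d → F} (hf : Sm f) : Sm (fun y => l (f y)) :=
  l.contDiff.comp hf

lemma Lap_clm (l : F →L[ℝ] G) {f : Ed d → F} (hf : Sm f) (x : Ed d) :
    Lap (fun y => l (f y)) x = l (Lap f x) := by
  have : ∀ i : Fin d, D i (fun y => l (f y)) = fun y => l (D i f y) :=
    fun i => funext fun y => D_clm l hf i y
  simp only [Lap, this, map_sum]
  exact Finset.sum_congr rfl fun i _ => D_clm l (hf.D i) i x

lemma D_comp_add {f : Ed d → F} (a : Ed d) (i : Fin d) (x : Ed d) :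
    D i (fun y => f (y + a)) x = D i f (x + a) := by
  simp [D, fderiv_comp_add_right]

lemma Sm.comp_add {f : Ed d → F} (hf : Sm f) (a : Ed d) : Sm (fun y => f (y + a)) :=
  hf.comp (contDiff_id.add contDiff_const)

lemma hasDerivAt_line {f : Ed d → F} (hf : Sm f) (i : Fin d) (x : Ed d) (t : ℝ) :
    HasDerivAt (fun s : ℝ => f (x + s • EuclideanSpace.single i (1:ℝ)))
      (D i f (x + t • EuclideanSpace.single i (1:ℝ))) t := by
  have h1 : HasDerivAt (fun s : ℝ => x + s • EuclideanSpace.single i (1:ℝ))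
      (EuclideanSpace.single i (1:ℝ)) t := by
    simpa using ((hasDerivAt_id t).smul_const (EuclideanSpace.single i (1:ℝ))).const_add x
  exact (hf.da _).hasFDerivAt.comp_hasDerivAt t h1

lemma D_coord (i j : Fin d) (x : Ed d) :
    D i (fun y : Ed d => y j) x = if i = j then (1:ℝ) else 0 := by
  have := D_clm (EuclideanSpace.proj j : Ed d →L[ℝ] ℝ) (f := fun y : Ed d => y)
    contDiff_id i x
  refine (this :).trans ?_
  simp [D, eq_comm]

lemma Sm_coord (j : Fin d) : Sm (fun y : Ed d => y j) :=
  (EuclideanSpace.proj j : Ed d →L[ℝ] ℝ).contDiff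

lemma D_normsq (i : Fin d) (x : Ed d) : D i (fun y : Ed d => ‖y‖ ^ 2) x = 2 * x i := by
  have h : (fun y : Ed d => ‖y‖ ^ 2) = fun y => ∑ j, y j * y j := by
    funext y; rw [EuclideanSpace.real_norm_sq_eq]; simp [sq]
  rw [h, D_sum (fun k => (Sm_coord k).mul (Sm_coord k))]
  simp only [D_mul (Sm_coord _) (Sm_coord _), D_coord]
  have : ∀ k, (x k * (if i = k then (1:ℝ) else 0) + x k * (if i = k then (1:ℝ) else 0))
      = if i = k then 2 * x k else 0 := by
    intro k; split_ifs <;> ring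
  simp only [this, Finset.sum_ite_eq, Finset.mem_univ, if_true]

lemma Sm_normsq : Sm (fun y : Ed d => ‖y‖ ^ 2) := contDiff_norm_sq ℝ

/-! ### Maximum principle -/

/-- A second derivative test: at a local maximum the Laplacian is nonpositive. -/
lemma Lap_nonpos_of_isLocalMax {f : Ed d → ℝ} (hf : Sm f) {x : Ed d} (hx : IsLocalMax f x) :
    Lap f x ≤ 0 := by
  refine Finset.sum_nonpos fun i _ => ?_
  by_contra! hpos
  set g : ℝ → ℝ := fun s => f (x + s • EuclideanSpace.single i (1:ℝ)) with hg
  have hd : deriv g = fun s => D i f (x + s • EuclideanSpace.single i (1:ℝ)) :=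
    funext fun t => (hasDerivAt_line hf i x t).deriv
  have hdd : deriv (deriv g) = fun s => D i (D i f) (x + s • EuclideanSpace.single i (1:ℝ)) := by
    rw [hd]; exact funext fun t => (hasDerivAt_line (hf.D i) i x t).deriv
  have hc : Tendsto (fun s : ℝ => x + s • EuclideanSpace.single i (1:ℝ)) (𝓝 0) (𝓝 x) := by
    have : Continuous (fun s : ℝ => x + s • EuclideanSpace.single i (1:ℝ)) := by fun_prop
    simpa using this.tendsto 0
  have hmax : IsLocalMax g 0 := by
    have := hc.eventually hx
    simpa [IsLocalMax, IsMaxFilter, hg] using this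
  have hmin : IsLocalMin g 0 := by
    refine isLocalMin_of_deriv_deriv_pos ?_ hmax.deriv_eq_zero ?_
    · rw [hdd]; simpa using hpos
    · exact (hasDerivAt_line hf i x 0).continuousAt
  -- A local maximum that is also a local minimum makes `g` locally constant.
  have hconst : g =ᶠ[𝓝 0] fun _ => g 0 := by
    filter_upwards [hmax, hmin] with s h1 h2 using le_antisymm h1 h2
  have h0 : deriv (deriv g) 0 = 0 := by
    rw [hconst.deriv.deriv_eq]; simp
  rw [hdd] at h0
  simp at h0
  linarith

/-- Weak maximum principle: a smooth function whose positivity points in a compact set `K` are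
interior points of strict subharmonicity is nonpositive on `K`. -/
lemma max_principle {K : Set (Ed d)} (hK : IsCompact K) {z : Ed d → ℝ} (hz : Sm z)
    (h : ∀ x ∈ K, 0 < z x → K ∈ 𝓝 x ∧ 0 < Lap z x) : ∀ x ∈ K, z x ≤ 0 := by
  intro x hx
  by_contra! hpos
  obtain ⟨y, hy, hmax⟩ := hK.exists_isMaxOn ⟨x, hx⟩ hz.continuous.continuousOn
  have hy0 : 0 < z y := lt_of_lt_of_le hpos (hmax hx)
  obtain ⟨h1, h2⟩ := h y hy hy0
  exact absurd (Lap_nonpos_of_isLocalMax hz (hmax.isLocalMax h1)) (not_le.2 h2)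

end calculus

/-! ### The a priori bound (Keller–Osserman) -/

section bounds

variable {d : ℕ}

lemma Lap_sq_add_sq {a b : Ed d → ℝ} (ha : Sm a) (hb : Sm b) (x : Ed d) :
    Lap (fun y => a y * a y + b y * b y) x =
      2 * (∑ i, ((D i a x) ^ 2 + (D i b x) ^ 2) + a x * Lap a x + b x * Lap b x) := by
  have h1 : ∀ i : Fin d, D i (fun y => a y * a y + b y * b y) =
      fun y => (a y * D i a y + a y * D i a y) + (b y * D i b y + b y * D i b y) := by
    intro i; funext y
    rw [D_add (ha.mul ha) (hb.mul hb), D_mul ha ha, D_mul hb hb]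
  have h2 : ∀ {f : Ed d → ℝ} (_ : Sm f) (i : Fin d), Sm (fun y => f y * D i f y) :=
    fun hf i => hf.mul (hf.D i)
  simp only [Lap, h1, Finset.mul_sum, ← Finset.sum_add_distrib]
  refine Finset.sum_congr rfl fun i _ => ?_
  rw [D_add ((h2 ha i).add (h2 ha i)) ((h2 hb i).add (h2 hb i)), D_add (h2 ha i) (h2 ha i),
    D_add (h2 hb i) (h2 hb i), D_mul ha (ha.D i), D_mul hb (hb.D i)]
  ring

lemma Lap_sub_const {f : Ed d → ℝ} (hf : Sm f) (c : ℝ) (x : Ed d) :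
    Lap (fun y => f y - c) x = Lap f x := by
  have : ∀ i : Fin d, D i (fun y => f y - c) = D i f := by
    intro i; funext y
    rw [D_sub hf contDiff_const, D_const, sub_zero]
  simp only [Lap, this]

/-- Keller–Osserman estimate at the origin: if `Δw ≥ 2w²` where `w > 0`, then `w 0` is bounded by a
dimensional constant. The weight `(1 - |x|²)²` is the reciprocal of the usual barrier. -/
lemma keller_osserman_zero {w : Ed d → ℝ} (hw : Sm w)
    (h : ∀ x, 0 < w x → 2 * (w x) ^ 2 ≤ Lap w x) : w 0 ≤ 12 + 2 * d := by
  set s : Ed d → ℝ := fun y => 1 - ‖y‖ ^ 2 with hs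
  have hsS : Sm s := contDiff_const.sub Sm_normsq
  have hDs : ∀ (i : Fin d) y, D i s y = -2 * y i := by
    intro i y
    rw [hs, D_sub contDiff_const Sm_normsq, D_const, D_normsq]; ring
  set P : Ed d → ℝ := fun y => w y * (s y * s y) with hP
  have hPS : Sm P := hw.mul (hsS.mul hsS)
  have hDP : ∀ i : Fin d, D i P = fun y => w y * (-4 * (s y * y i)) + (s y * s y) * D i w y := by
    intro i; funext y
    rw [hP, D_mul hw (hsS.mul hsS), D_mul hsS hsS, hDs]; ring
  have hDDP : ∀ (i : Fin d) y, D i (D i P) y =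
      w y * (8 * (y i) ^ 2 - 4 * s y) - 8 * (s y * y i) * D i w y
        + (s y * s y) * D i (D i w) y := by
    intro i y
    have e1 : Sm (fun y : Ed d => s y * y i) := hsS.mul (Sm_coord i)
    have e2 : Sm (fun y : Ed d => -4 * (s y * y i)) := contDiff_const.mul e1
    rw [hDP, D_add (hw.mul e2) ((hsS.mul hsS).mul (hw.D i)), D_mul hw e2,
      D_mul contDiff_const e1, D_mul hsS (Sm_coord i), D_mul (hsS.mul hsS) (hw.D i),
      D_mul hsS hsS, hDs, D_const, D_coord]
    simp only [if_true]; ring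
  have hK : IsCompact (closedBall (0 : Ed d) 1) := isCompact_closedBall _ _
  obtain ⟨y, hy, hmax⟩ := hK.exists_isMaxOn ⟨0, by simp⟩ hPS.continuous.continuousOn
  have hw0 : w 0 ≤ P y := by
    have : P 0 ≤ P y := hmax (by simp)
    simpa [hP, hs] using this
  refine hw0.trans ?_
  by_contra! hbig
  have hd0 : (0:ℝ) ≤ d := Nat.cast_nonneg d
  have hPpos : 0 < P y := by linarith
  have hny : ‖y‖ ≤ 1 := by simpa using hy
  have hs0 : 0 ≤ s y := by simp only [hs]; nlinarith [norm_nonneg y]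
  have hspos : 0 < s y := by
    rcases hs0.eq_or_lt with h0 | h0
    · simp [hP, ← h0] at hPpos
    · exact h0
  have hwpos : 0 < w y := by
    by_contra! hneg
    have : P y ≤ 0 := mul_nonpos_of_nonpos_of_nonneg hneg (by positivity)
    linarith
  have hnb : closedBall (0 : Ed d) 1 ∈ 𝓝 y := by
    refine mem_of_superset (isOpen_ball.mem_nhds ?_) ball_subset_closedBall
    have : ‖y‖ ^ 2 < 1 := by simp only [hs] at hspos; linarith
    simp only [mem_ball, dist_zero_right]
    nlinarith [norm_nonneg y]
  have hloc := hmax.isLocalMax hnb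
  have hL := Lap_nonpos_of_isLocalMax hPS hloc
  have hgrad : ∀ i : Fin d, s y * D i w y = 4 * (w y * y i) := by
    intro i
    have h0 : D i P y = 0 := by simp [D, hloc.fderiv_eq_zero]
    rw [hDP] at h0
    have : s y * (s y * D i w y - 4 * (w y * y i)) = 0 := by linarith
    rcases mul_eq_zero.1 this with h | h
    · exact absurd h hspos.ne'
    · linarith
  have hsum : Lap P y = (s y * s y) * Lap w y - w y * (24 * ‖y‖ ^ 2 + 4 * d * s y) := by
    have : ∀ i : Fin d, D i (D i P) y = (s y * s y) * D i (D i w) y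
        - 24 * w y * (y i) ^ 2 - 4 * w y * s y := by
      intro i
      rw [hDDP]
      linear_combination (-8 * y i) * hgrad i
    simp only [Lap, this, Finset.sum_sub_distrib, ← Finset.mul_sum, EuclideanSpace.real_norm_sq_eq]
    simp; ring
  have h1 := h y hwpos
  have h2 : w y * (P y * 2 - (24 * ‖y‖ ^ 2 + 4 * d * s y)) ≤ 0 := by
    have : (s y * s y) * (2 * w y ^ 2) ≤ (s y * s y) * Lap w y :=
      mul_le_mul_of_nonneg_left h1 (by positivity)
    simp only [hP]
    nlinarith
  have h3 : P y * 2 ≤ 24 * ‖y‖ ^ 2 + 4 * d * s y := by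
    by_contra! hc
    have := mul_pos hwpos (sub_pos.2 hc)
    linarith
  have h4 : ‖y‖ ^ 2 ≤ 1 := by nlinarith [norm_nonneg y]
  have h5 : s y ≤ 1 := by simp only [hs]; nlinarith [norm_nonneg y]
  nlinarith [mul_le_mul_of_nonneg_left h5 hd0]

lemma Lap_comp_add {F : Type*} [NormedAddCommGroup F] [NormedSpace ℝ F] {f : Ed d → F}
    (a x : Ed d) :
    Lap (fun y => f (y + a)) x = Lap f (x + a) := by
  have : ∀ i : Fin d, D i (fun y => f (y + a)) = fun y => D i f (y + a) :=
    fun i => funext fun y => D_comp_add a i y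
  simp only [Lap, this, D_comp_add]

lemma Sm.re {ψ : Ed d → ℂ} (h : Sm ψ) : Sm (fun x => (ψ x).re) := h.clm Complex.reCLM
lemma Sm.im {ψ : Ed d → ℂ} (h : Sm ψ) : Sm (fun x => (ψ x).im) := h.clm Complex.imCLM

lemma D_re {ψ : Ed d → ℂ} (h : Sm ψ) (i : Fin d) (x : Ed d) :
    D i (fun y => (ψ y).re) x = (D i ψ x).re := D_clm Complex.reCLM h i x
lemma D_im {ψ : Ed d → ℂ} (h : Sm ψ) (i : Fin d) (x : Ed d) :
    D i (fun y => (ψ y).im) x = (D i ψ x).im := D_clm Complex.imCLM h i x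
lemma Lap_re {ψ : Ed d → ℂ} (h : Sm ψ) (x : Ed d) :
    Lap (fun y => (ψ y).re) x = (Lap ψ x).re := Lap_clm Complex.reCLM h x
lemma Lap_im {ψ : Ed d → ℂ} (h : Sm ψ) (x : Ed d) :
    Lap (fun y => (ψ y).im) x = (Lap ψ x).im := Lap_clm Complex.imCLM h x

/-- Entire solutions of `Δu = (|u|² - α)u` with `α ≤ 3/2` are bounded by a constant depending only
on the dimension. -/
lemma sup_bound {u : Ed d → ℂ} (hu : Sm u) {α : ℝ} (hα : α ≤ 3 / 2)
    (heq : ∀ x, Lap u x = ((‖u x‖ ^ 2 - α : ℝ) : ℂ) * u x) (x : Ed d) :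
    ‖u x‖ ^ 2 ≤ 14 + 2 * d := by
  have hnorm : ∀ y, ‖u y‖ ^ 2 = (u y).re * (u y).re + (u y).im * (u y).im := by
    intro y; rw [← Complex.normSq_eq_norm_sq, Complex.normSq_apply]
  set g : Ed d → ℝ := fun y => (u y).re * (u y).re + (u y).im * (u y).im with hg
  have hgS : Sm g := (hu.re.mul hu.re).add (hu.im.mul hu.im)
  have hLg : ∀ y, 2 * ((g y - α) * g y) ≤ Lap g y := by
    intro y
    rw [hg, Lap_sq_add_sq hu.re hu.im, Lap_re hu, Lap_im hu, heq, hnorm, Complex.re_ofReal_mul,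
      Complex.im_ofReal_mul]
    have : 0 ≤ ∑ i, ((D i (fun x => (u x).re) y) ^ 2 + (D i (fun x => (u x).im) y) ^ 2) :=
      Finset.sum_nonneg fun i _ => by positivity
    simp only
    nlinarith
  have := keller_osserman_zero (w := fun y => g (y + x) - 3 / 2)
    ((hgS.comp_add x).sub contDiff_const) (fun y hy => by
      rw [Lap_sub_const (hgS.comp_add x), Lap_comp_add]
      refine le_trans ?_ (hLg (y + x))
      nlinarith)
  rw [hnorm]
  simp only [zero_add] at this
  change g x ≤ _
  linarith

/-! ### The gradient estimate -/

/-- Reflection in the hyperplane `x i = 0`. -/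
def reflc (i : Fin d) : Ed d →L[ℝ] Ed d :=
  ContinuousLinearMap.id ℝ (Ed d) -
    ((2:ℝ) • (EuclideanSpace.proj i : Ed d →L[ℝ] ℝ)).smulRight (EuclideanSpace.single i (1:ℝ))

lemma refl_apply (i : Fin d) (x : Ed d) :
    reflc i x = x - (2 * x i) • EuclideanSpace.single i (1:ℝ) := by
  simp [reflc]

lemma refl_single (i j : Fin d) : reflc i (EuclideanSpace.single j (1:ℝ)) =
    (if i = j then (-1:ℝ) else 1) • EuclideanSpace.single j (1:ℝ) := by
  rw [refl_apply]
  split_ifs with h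
  · subst h; simp; module
  · simp [h]

lemma D_refl {u : Ed d → ℝ} (hu : Sm u) (i j : Fin d) (x : Ed d) :
    D j (fun y => u (reflc i y)) x = (if i = j then (-1:ℝ) else 1) * D j u (reflc i x) := by
  change fderiv ℝ (u ∘ reflc i) x _ = _
  rw [fderiv_comp x (hu.da _) (reflc i).differentiableAt]
  simp [D, refl_single, -ite_smul]

lemma Lap_refl {u : Ed d → ℝ} (hu : Sm u) (i : Fin d) (x : Ed d) :
    Lap (fun y => u (reflc i y)) x = Lap u (reflc i x) := by
  refine Finset.sum_congr rfl fun j _ => ?_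
  have : D j (fun y => u (reflc i y)) =
      fun y => (if i = j then (-1:ℝ) else 1) * D j u (reflc i y) := funext (D_refl hu i j)
  have hs : Sm (fun y => D j u (reflc i y)) := (hu.D j).comp (reflc i).contDiff
  rw [this, D_mul contDiff_const hs, D_const, D_refl (hu.D j)]
  split_ifs <;> ring

/-- Gradient estimate at the origin by comparing the odd part of `u` in `x i` with a quadratic
barrier on a half ball. -/
lemma grad_est_zero {u : Ed d → ℝ} (hu : Sm u) {M N : ℝ} (hM : ∀ x, |u x| ≤ M)
    (hN : ∀ x, |Lap u x| ≤ N) (i : Fin d) : D i u 0 ≤ d * M + (N + 1) / 2 := by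
  set k : ℝ := d * M + (N + 1) / 2 with hk
  have hM0 : 0 ≤ M := (abs_nonneg _).trans (hM 0)
  have hN0 : 0 ≤ N := (abs_nonneg _).trans (hN 0)
  have hk0 : 0 ≤ k := by positivity
  have hur : Sm (fun y => u (reflc i y)) := hu.comp (reflc i).contDiff
  set z : Ed d → ℝ := fun x => (1 / 2) * (u x - u (reflc i x)) -
    (M * ‖x‖ ^ 2 + k * (x i - x i * x i)) with hz
  have c1 : Sm (fun x => u x - u (reflc i x)) := hu.sub hur
  have c2 : Sm (fun x : Ed d => x i - x i * x i) :=
    (Sm_coord i).sub ((Sm_coord i).mul (Sm_coord i))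
  have c3 : Sm (fun x : Ed d => M * ‖x‖ ^ 2) := contDiff_const.mul Sm_normsq
  have c4 : Sm (fun x : Ed d => k * (x i - x i * x i)) := contDiff_const.mul c2
  have hzS : Sm z := (contDiff_const.mul c1).sub (c3.add c4)
  have hDz : ∀ j : Fin d, D j z = fun x => (1 / 2) * (D j u x - D j (fun y => u (reflc i y)) x) -
      (M * (2 * x j) + k * ((if j = i then 1 else 0) - 2 * (x i * if j = i then 1 else 0))) := by
    intro j; funext x
    rw [hz, D_sub (contDiff_const.mul c1) (c3.add c4), D_add c3 c4, D_mul contDiff_const c1,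
      D_sub hu hur, D_mul contDiff_const Sm_normsq, D_normsq, D_mul contDiff_const c2,
      D_sub (Sm_coord i) ((Sm_coord i).mul (Sm_coord i)), D_mul (Sm_coord i) (Sm_coord i),
      D_coord, D_const, D_const, D_const]
    ring
  have hLz : ∀ x, Lap z x = (1 / 2) * (Lap u x - Lap u (reflc i x)) - (2 * d * M - 2 * k) := by
    intro x
    have : ∀ j : Fin d, D j (D j z) x =
        (1 / 2) * (D j (D j u) x - D j (D j (fun y => u (reflc i y))) x) -
          (2 * M - if j = i then 2 * k else 0) := by
      intro j
      have e0 : Sm (fun x => D j u x - D j (fun y => u (reflc i y)) x) := (hu.D j).sub (hur.D j)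
      have e1 : Sm (fun x : Ed d => 2 * x j) := contDiff_const.mul (Sm_coord j)
      have e2 : Sm (fun x : Ed d => x i * if j = i then (1:ℝ) else 0) :=
        (Sm_coord i).mul contDiff_const
      have e3 : Sm (fun x : Ed d => 2 * (x i * if j = i then (1:ℝ) else 0)) :=
        contDiff_const.mul e2
      have e4 : Sm (fun x : Ed d =>
        (if j = i then (1:ℝ) else 0) - 2 * (x i * if j = i then (1:ℝ) else 0)) :=
        contDiff_const.sub e3
      rw [hDz, D_sub (contDiff_const.mul e0)
        ((contDiff_const.mul e1).add (contDiff_const.mul e4)),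
        D_add (contDiff_const.mul e1) (contDiff_const.mul e4), D_mul contDiff_const e0,
        D_sub (hu.D j) (hur.D j), D_mul contDiff_const e1, D_mul contDiff_const (Sm_coord j),
        D_mul contDiff_const e4, D_sub contDiff_const e3, D_mul contDiff_const e2,
        D_mul (Sm_coord i) contDiff_const]
      simp only [D_const, D_coord]
      split_ifs <;> simp <;> ring
    rw [← Lap_refl hu]
    simp only [Lap, this, Finset.sum_sub_distrib, ← Finset.mul_sum]
    simp; ring
  set K : Set (Ed d) := closedBall 0 1 ∩ {x | 0 ≤ x i} with hKdef
  have hcont : Continuous (fun x : Ed d => x i) := (Sm_coord i).continuous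
  have hK : IsCompact K :=
    (isCompact_closedBall _ _).inter_right (isClosed_le continuous_const hcont)
  have hmp := max_principle hK hzS (by
    rintro x ⟨hx1, hx2⟩ hpos
    have hx2 : 0 ≤ x i := hx2
    have hx1' : ‖x‖ ≤ 1 := by simpa using hx1
    have hxi : x i ≤ 1 := (le_abs_self _).trans ((PiLp.norm_apply_le x i).trans hx1')
    have hquad : 0 ≤ k * (x i - x i * x i) := mul_nonneg hk0 (by nlinarith)
    have hdiff : (1 / 2) * (u x - u (reflc i x)) ≤ M := by
      have := abs_le.1 (hM x); have := abs_le.1 (hM (reflc i x)); linarith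
    constructor
    · -- On both pieces of the boundary `z ≤ 0`, so `x` is an interior point.
      have hlt : ‖x‖ < 1 := by
        rcases hx1'.lt_or_eq with h | h
        · exact h
        · exfalso; simp only [hz, h] at hpos; linarith
      have hxi0 : 0 < x i := by
        rcases hx2.lt_or_eq with h | h
        · exact h
        · exfalso
          have : reflc i x = x := by rw [refl_apply, ← h]; simp
          simp only [hz, this, ← h] at hpos
          have : 0 ≤ M * ‖x‖ ^ 2 := by positivity
          linarith
      refine inter_mem (mem_of_superset (isOpen_ball.mem_nhds (by simpa using hlt))
        ball_subset_closedBall) ?_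
      exact mem_of_superset ((isOpen_lt continuous_const hcont).mem_nhds hxi0)
        fun y (hy : 0 < y i) => (show 0 ≤ y i from hy.le)
    · rw [hLz]
      have := abs_le.1 (hN x); have := abs_le.1 (hN (reflc i x))
      rw [hk]; linarith)
  -- `z` vanishes at the origin and is nonpositive along the `i`-th half axis.
  have hD0 : D i z 0 ≤ 0 := by
    have hder := hasDerivAt_line hzS i 0 0
    simp only [zero_smul, add_zero, zero_add] at hder
    have ht := (hasDerivAt_iff_tendsto_slope_zero.1 hder)
    have ht' : Tendsto (fun t : ℝ => t⁻¹ • (z ((0 + t) • EuclideanSpace.single i (1:ℝ))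
        - z ((0:ℝ) • EuclideanSpace.single i (1:ℝ)))) (𝓝[>] 0) (𝓝 (D i z 0)) :=
      ht.mono_left (nhdsWithin_mono _ fun t ht => ne_of_gt ht)
    refine le_of_tendsto ht' ?_
    filter_upwards [Ioo_mem_nhdsGT (zero_lt_one (α := ℝ))] with t ht
    have hz0 : z ((0:ℝ) • EuclideanSpace.single i (1:ℝ)) = 0 := by simp [hz]
    rw [hz0, sub_zero, zero_add, smul_eq_mul]
    refine mul_nonpos_of_nonneg_of_nonpos (inv_nonneg.2 ht.1.le) (hmp _ ⟨?_, ?_⟩)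
    · simp [norm_smul, abs_of_pos ht.1, ht.2.le]
    · simp [ht.1.le]
  rw [hDz] at hD0
  simp only [D_refl hu] at hD0
  simp at hD0
  linarith

/-- Gradient estimate for functions with values in a normed space. -/
lemma grad_est {F : Type*} [NormedAddCommGroup F] [NormedSpace ℝ F] {u : Ed d → F} (hu : Sm u)
    {M N : ℝ} (hM : ∀ x, ‖u x‖ ≤ M) (hN : ∀ x, ‖Lap u x‖ ≤ N) (x : Ed d) :
    ‖fderiv ℝ u x‖ ≤ d * (d * M + (N + 1) / 2) := by
  have hM0 : 0 ≤ M := (norm_nonneg _).trans (hM 0)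
  have hN0 : 0 ≤ N := (norm_nonneg _).trans (hN 0)
  have key : ∀ i : Fin d, ‖D i u x‖ ≤ d * M + (N + 1) / 2 := by
    intro i
    obtain ⟨l, hl1, hl2⟩ := exists_dual_vector'' ℝ (D i u x)
    have hb : ∀ y : F, |l y| ≤ ‖y‖ := fun y => by
      simpa using l.le_of_opNorm_le hl1 y
    have hv : Sm (fun y => u (y + x)) := hu.comp_add x
    have := grad_est_zero (u := fun y => l (u (y + x))) (hv.clm l)
      (fun y => (hb _).trans (hM _))
      (fun y => by rw [Lap_clm l hv, Lap_comp_add]; exact (hb _).trans (hN _)) i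
    rw [D_clm l hv, D_comp_add, zero_add, hl2] at this
    simpa using this
  refine ContinuousLinearMap.opNorm_le_bound _ (by positivity) fun v => ?_
  have hv : v = ∑ i, v i • EuclideanSpace.single i (1:ℝ) := by
    ext j; simp [Finset.sum_apply, Pi.single_apply]
  conv_lhs => rw [hv]
  rw [map_sum]
  refine (norm_sum_le _ _).trans ?_
  have : ∀ i ∈ Finset.univ, ‖fderiv ℝ u x (v i • EuclideanSpace.single i (1:ℝ))‖ ≤
      ‖v‖ * (d * M + (N + 1) / 2) := by
    intro i _
    rw [map_smul, norm_smul]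
    exact mul_le_mul (PiLp.norm_apply_le v i) (key i) (norm_nonneg _) (norm_nonneg _)
  refine (Finset.sum_le_sum this).trans (le_of_eq ?_)
  simp; ring

end bounds

/-! ### Uniform bounds on all derivatives -/

section uniform

variable {d : ℕ} {F G : Type*} [NormedAddCommGroup F] [NormedSpace ℝ F]
  [NormedAddCommGroup G] [NormedSpace ℝ G]

lemma Sm.iter {f : Ed d → F} (hf : Sm f) (k : ℕ) : Sm (iteratedFDeriv ℝ k f) :=
  hf.iteratedFDeriv_right (WithTop.coe_le_coe.2 (le_of_eq (top_add _)))

lemma nat_le_top' (k : ℕ) : ((k : ℕ) : WithTop ℕ∞) ≤ ((⊤ : ℕ∞) : WithTop ℕ∞) :=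
  WithTop.coe_le_coe.2 le_top

lemma D_fderiv {f : Ed d → F} (hf : Sm f) (i : Fin d) : D i (fderiv ℝ f) = fderiv ℝ (D i f) := by
  funext x
  ext v
  have h := hf.contDiffAt (x := x) |>.isSymmSndFDerivAt
    (by simp only [minSmoothness_of_isRCLikeNormedField]; exact WithTop.coe_le_coe.2 le_top)
  have : fderiv ℝ (D i f) x v = fderiv ℝ (fderiv ℝ f) x v (EuclideanSpace.single i 1) := by
    change fderiv ℝ (fun y => fderiv ℝ f y (EuclideanSpace.single i 1)) x v = _
    rw [fderiv_clm_apply (hf.fd.da x) (differentiableAt_const _)]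
    simp
  rw [this]
  exact h _ _

lemma Lap_fderiv {f : Ed d → F} (hf : Sm f) : Lap (fderiv ℝ f) = fderiv ℝ (Lap f) := by
  funext x
  have : fderiv ℝ (Lap f) x = ∑ i, fderiv ℝ (D i (D i f)) x :=
    fderiv_fun_sum fun i _ => ((hf.D i).D i).da x
  rw [this]
  refine Finset.sum_congr rfl fun i _ => ?_
  rw [D_fderiv hf, D_fderiv (hf.D i)]

lemma Lap_iteratedFDeriv {f : Ed d → F} (hf : Sm f) (k : ℕ) :
    Lap (iteratedFDeriv ℝ k f) = iteratedFDeriv ℝ k (Lap f) := by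
  induction k with
  | zero =>
    funext x
    exact Lap_clm (continuousMultilinearCurryFin0 ℝ (Ed d) F).symm.toContinuousLinearEquiv.toContinuousLinearMap hf x
  | succ k ih =>
    funext x
    have := Lap_clm (continuousMultilinearCurryLeftEquiv ℝ
      (fun _ : Fin (k + 1) => Ed d) F).symm.toContinuousLinearEquiv.toContinuousLinearMap
      (hf.iter k).fd x
    rw [Lap_fderiv (hf.iter k), ih] at this
    exact this

/-- All derivatives of order at most `k` of the family `u` are bounded, uniformly in the point and
in the index. -/
def UB (k : ℕ) (u : ℕ → Ed d → F) : Prop :=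
  ∀ l ≤ k, ∃ C, ∀ n x, ‖iteratedFDeriv ℝ l (u n) x‖ ≤ C

lemma UB.clm {k : ℕ} {u : ℕ → Ed d → F} (l : F →L[ℝ] G) (hu : UB k u) (hs : ∀ n, Sm (u n)) :
    UB k (fun n x => l (u n x)) := by
  intro j hj
  obtain ⟨C, hC⟩ := hu j hj
  exact ⟨‖l‖ * C, fun n x => (l.norm_iteratedFDeriv_comp_left ((hs n).contDiffAt)
    (nat_le_top' j)).trans (mul_le_mul_of_nonneg_left (hC n x) (norm_nonneg _))⟩

lemma UB.add {k : ℕ} {u v : ℕ → Ed d → F} (hu : UB k u) (hv : UB k v) (hus : ∀ n, Sm (u n))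
    (hvs : ∀ n, Sm (v n)) : UB k (fun n x => u n x + v n x) := by
  intro j hj
  obtain ⟨C, hC⟩ := hu j hj
  obtain ⟨C', hC'⟩ := hv j hj
  refine ⟨C + C', fun n x => ?_⟩
  rw [fun_iteratedFDeriv_add_apply ((hus n).contDiffAt.of_le (nat_le_top' j))
    ((hvs n).contDiffAt.of_le (nat_le_top' j))]
  exact (norm_add_le _ _).trans (add_le_add (hC n x) (hC' n x))

lemma UB.mul {k : ℕ} {u v : ℕ → Ed d → ℂ} (hu : UB k u) (hv : UB k v) (hus : ∀ n, Sm (u n))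
    (hvs : ∀ n, Sm (v n)) : UB k (fun n x => u n x * v n x) := by
  intro j hj
  choose! C hC using hu
  choose! C' hC' using hv
  refine ⟨∑ i ∈ Finset.range (j + 1), (j.choose i : ℝ) * C i * C' (j - i), fun n x => ?_⟩
  refine (norm_iteratedFDeriv_mul_le (hus n) (hvs n) x (nat_le_top' j)).trans ?_
  refine Finset.sum_le_sum fun i hi => ?_
  have hi' : i ≤ j := Nat.lt_succ_iff.1 (Finset.mem_range.1 hi)
  have h1 := hC i (hi'.trans hj) n x
  have h2 := hC' (j - i) ((Nat.sub_le _ _).trans hj) n x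
  have h0 := (norm_nonneg _).trans h1
  gcongr

lemma UB_const {k : ℕ} {c : ℕ → F} {B : ℝ} (hc : ∀ n, ‖c n‖ ≤ B) :
    UB k (fun n (_ : Ed d) => c n) := by
  intro j _
  refine ⟨max B 0, fun n x => ?_⟩
  rcases Nat.eq_zero_or_pos j with rfl | h
  · simpa using Or.inl (hc n)
  · rw [iteratedFDeriv_const_of_ne h.ne']; simp

/-- Bootstrap: a uniformly bounded family with `Δu = (|u|² - α)u` has uniformly bounded derivatives
of every order. -/
lemma UB_bootstrap {u : ℕ → Ed d → ℂ} (hu : ∀ n, Sm (u n)) {α : ℕ → ℝ} {B : ℝ}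
    (hα : ∀ n, |α n| ≤ B)
    (heq : ∀ n x, Lap (u n) x = ((‖u n x‖ ^ 2 - α n : ℝ) : ℂ) * u n x) (h0 : UB 0 u) (k : ℕ) :
    UB k u := by
  induction k with
  | zero => exact h0
  | succ k ih =>
    have hcs : ∀ n, Sm (fun x => (Complex.conjCLE : ℂ →L[ℝ] ℂ) (u n x)) := fun n => (hu n).clm _
    have hk : ∀ n, Sm (fun _ : Ed d => (-(α n) : ℂ)) := fun n => contDiff_const
    have hn2 : ∀ n, Sm (fun x => u n x * (Complex.conjCLE : ℂ →L[ℝ] ℂ) (u n x)) :=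
      fun n => (hu n).mul (hcs n)
    have hL : UB k (fun n => Lap (u n)) := by
      have h1 : UB k (fun n x =>
          (u n x * (Complex.conjCLE : ℂ →L[ℝ] ℂ) (u n x) + (-(α n) : ℂ)) * u n x) :=
        ((ih.mul (ih.clm (Complex.conjCLE : ℂ →L[ℝ] ℂ) hu) hu hcs).add
          (UB_const (c := fun n => (-(α n) : ℂ)) (B := B)
            (fun n => by simpa using hα n)) hn2 hk).mul ih
          (fun n => (hn2 n).add (hk n)) hu
      convert h1 using 3 with n x
      rw [heq]
      congr 1
      have : u n x * (Complex.conjCLE : ℂ →L[ℝ] ℂ) (u n x) = ((‖u n x‖ ^ 2 : ℝ) : ℂ) := by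
        rw [← Complex.normSq_eq_norm_sq]; exact Complex.mul_conj _
      rw [this]; push_cast; ring
    intro l hl
    rcases Nat.lt_or_ge l (k + 1) with h | h
    · exact ih l (Nat.lt_succ_iff.1 h)
    obtain rfl : l = k + 1 := le_antisymm hl h
    obtain ⟨M, hM⟩ := ih k le_rfl
    obtain ⟨N, hN⟩ := hL k le_rfl
    refine ⟨d * (d * M + (N + 1) / 2), fun n x => ?_⟩
    rw [← norm_fderiv_iteratedFDeriv]
    exact grad_est ((hu n).iter k) (hM n)
      (fun y => by rw [Lap_iteratedFDeriv (hu n)]; exact hN n y) x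

/-- The phase `exp(icx₁/2)`; multiplying by it removes the drift term of the equation. -/
def ph [NeZero d] (c : ℝ) (x : Ed d) : ℂ := Complex.exp (Complex.I * c / 2 * (x 0 : ℝ))

lemma ph_Sm [NeZero d] (c : ℝ) : Sm (ph c : Ed d → ℂ) := by
  unfold ph
  exact (contDiff_const.mul (Complex.ofRealCLM.contDiff.comp (Sm_coord 0))).cexp

lemma norm_ph [NeZero d] (c : ℝ) (x : Ed d) : ‖ph c x‖ = 1 := by
  have : Complex.I * c / 2 * (x 0 : ℝ) = ((c / 2 * x 0 : ℝ) : ℂ) * Complex.I := by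
    push_cast; ring
  rw [ph, this, Complex.norm_exp_ofReal_mul_I]

lemma fderiv_ph [NeZero d] (c : ℝ) (x : Ed d) :
    fderiv ℝ (ph c : Ed d → ℂ) x = ph c x • ((Complex.I * c / 2) •
      (Complex.ofRealCLM.comp (EuclideanSpace.proj 0 : Ed d →L[ℝ] ℝ))) := by
  have h : HasFDerivAt (fun x : Ed d => Complex.I * c / 2 * (x 0 : ℝ)) ((Complex.I * c / 2) •
      (Complex.ofRealCLM.comp (EuclideanSpace.proj 0 : Ed d →L[ℝ] ℝ))) x :=
    (Complex.ofRealCLM.comp (EuclideanSpace.proj 0 : Ed d →L[ℝ] ℝ)).hasFDerivAt.const_mul _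
  exact h.cexp.fderiv

lemma D_ph [NeZero d] (c : ℝ) (i : Fin d) (x : Ed d) :
    D i (ph c) x = (if i = 0 then Complex.I * c / 2 else 0) * ph c x := by
  rw [D, fderiv_ph]
  simp [eq_comm, mul_comm]
  split_ifs <;> simp

lemma norm_iter_ph [NeZero d] (c : ℝ) (k : ℕ) (x : Ed d) :
    ‖iteratedFDeriv ℝ k (ph c : Ed d → ℂ) x‖ ≤ (|c| / 2) ^ k := by
  induction k generalizing x with
  | zero => simp [norm_ph]
  | succ k ih =>
    rw [← norm_iteratedFDeriv_fderiv]
    set L : Ed d →L[ℝ] ℂ := (Complex.I * c / 2) •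
      (Complex.ofRealCLM.comp (EuclideanSpace.proj 0 : Ed d →L[ℝ] ℝ)) with hL
    have hLn : ‖L‖ ≤ |c| / 2 := by
      refine ContinuousLinearMap.opNorm_le_bound _ (by positivity) fun v => ?_
      have := PiLp.norm_apply_le v 0
      simp [hL]
      simp at this
      gcongr
    set T : ℂ →L[ℝ] (Ed d →L[ℝ] ℂ) := LinearMap.mkContinuous
      { toFun := fun z => z • L, map_add' := fun a b => add_smul a b L,
        map_smul' := fun r z => by simp only [RingHom.id_apply]; exact smul_assoc r z L } ‖L‖
      (fun z => by simp [norm_smul, mul_comm]) with hT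
    have hTn : ‖T‖ ≤ |c| / 2 := (LinearMap.mkContinuous_norm_le _ (norm_nonneg _) _).trans hLn
    have : fderiv ℝ (ph c : Ed d → ℂ) = T ∘ ph c := by
      funext y; rw [fderiv_ph]; rfl
    rw [this, pow_succ']
    exact (T.norm_iteratedFDeriv_comp_left (ph_Sm c).contDiffAt (nat_le_top' k)).trans
      (mul_le_mul hTn (ih x) (norm_nonneg _) (by positivity))

lemma UB_ph [NeZero d] {c : ℕ → ℝ} (hc : ∀ n, |c n| ≤ 2) (k : ℕ) :
    UB k (fun n => (ph (c n) : Ed d → ℂ)) := fun l _ =>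
  ⟨1, fun n x => (norm_iter_ph (c n) l x).trans
    (pow_le_one₀ (by positivity) (by linarith [hc n]))⟩

/-- Multiplication by the phase turns the travelling wave equation into `Δu = (|u|² - 1 - c²/4)u`. -/
lemma Lap_ph_mul [NeZero d] {c : ℝ} {ψ : Ed d → ℂ} (hψ : Sm ψ) (h : GPeq c ψ) (x : Ed d) :
    Lap (fun y => ph c y * ψ y) x =
      ((‖ph c x * ψ x‖ ^ 2 - (1 + c ^ 2 / 4) : ℝ) : ℂ) * (ph c x * ψ x) := by
  set κ : Fin d → ℂ := fun i => if i = 0 then Complex.I * c / 2 else 0 with hκ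
  have hp : ∀ i : Fin d, D i (ph c) = fun y => κ i * ph c y := fun i => funext (D_ph c i)
  have hpS := ph_Sm (d := d) c
  have h1 : ∀ i : Fin d, D i (fun y => ph c y * ψ y) =
      fun y => ph c y * D i ψ y + κ i * (ph c y * ψ y) := by
    intro i; funext y
    rw [D_mul hpS hψ, hp]; ring
  have h2 : ∀ i : Fin d, D i (D i (fun y => ph c y * ψ y)) x =
      ph c x * D i (D i ψ) x + (2 * κ i * ph c x * D i ψ x + κ i ^ 2 * (ph c x * ψ x)) := by
    intro i
    have e : Sm (fun y => ph c y * ψ y) := hpS.mul hψ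
    rw [h1, D_add (hpS.mul (hψ.D i)) (contDiff_const.mul e), D_mul hpS (hψ.D i),
      D_mul contDiff_const e, D_const, h1, hp]
    ring
  have h3 : Lap (fun y => ph c y * ψ y) x =
      ph c x * (Lap ψ x + Complex.I * c * D 0 ψ x - c ^ 2 / 4 * ψ x) := by
    simp only [Lap, h2, Finset.sum_add_distrib, ← Finset.mul_sum]
    have a1 : ∑ i, 2 * κ i * ph c x * D i ψ x = Complex.I * c * ph c x * D 0 ψ x := by
      rw [Finset.sum_eq_single 0] <;> simp +contextual [hκ]
      left; left; ring
    have a2 : ∑ i, κ i ^ 2 * (ph c x * ψ x) = - c ^ 2 / 4 * (ph c x * ψ x) := by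
      rw [Finset.sum_eq_single 0] <;> simp +contextual [hκ]
      left; rw [div_pow, mul_pow, Complex.I_sq]; ring
    rw [a1, a2]; ring
  have h4 : Complex.I * c * D 0 ψ x + Lap ψ x + (1 - (‖ψ x‖ : ℂ) ^ 2) * ψ x = 0 := h x
  rw [h3, norm_mul, norm_ph]
  push_cast
  linear_combination (ph c x) * h4

/-- Travelling waves with speeds in `(0, √2)` have uniformly bounded derivatives of all orders. -/
theorem UB_waves [NeZero d] {c : ℕ → ℝ} (hc : ∀ n, c n ∈ Set.Ioo 0 (Real.sqrt 2))
    {ψ : ℕ → Ed d → ℂ} (hψ : ∀ n, Sm (ψ n)) (h : ∀ n, GPeq (c n) (ψ n)) (k : ℕ) : UB k ψ := by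
  have hc2 : ∀ n, (c n) ^ 2 ≤ 2 := fun n => by
    have := Real.sq_sqrt (show (0:ℝ) ≤ 2 by norm_num)
    nlinarith [(hc n).1, (hc n).2]
  have hcabs : ∀ n, |c n| ≤ 2 := fun n => abs_le.2 ⟨by linarith [(hc n).1], by
    nlinarith [hc2 n, (hc n).1]⟩
  have hu : ∀ n, Sm (fun x => ph (c n) x * ψ n x) := fun n => (ph_Sm _).mul (hψ n)
  have heq := fun n x => Lap_ph_mul (hψ n) (h n) x
  have h0 : UB 0 (fun n x => ph (c n) x * ψ n x) := by
    intro l hl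
    obtain rfl : l = 0 := Nat.le_zero.1 hl
    refine ⟨14 + 2 * d, fun n x => ?_⟩
    rw [norm_iteratedFDeriv_zero]
    have := sup_bound (hu n) (α := 1 + (c n) ^ 2 / 4) (by linarith [hc2 n]) (heq n) x
    have hd : (0:ℝ) ≤ d := Nat.cast_nonneg d
    nlinarith [norm_nonneg (ph (c n) x * ψ n x)]
  have hb := UB_bootstrap hu (α := fun n => 1 + (c n) ^ 2 / 4) (B := 2) (fun n => by
    rw [abs_of_nonneg (by positivity)]; linarith [hc2 n]) heq h0 k
  have hb2 := (UB_ph (d := d) (c := fun n => - c n) (fun n => by simpa using hcabs n) k).mul hb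
    (fun n => ph_Sm _) hu
  convert hb2 using 3 with n x
  have e : Complex.I * ((-c n : ℝ) : ℂ) / 2 * (x 0 : ℝ) + Complex.I * (c n : ℂ) / 2 * (x 0 : ℝ) = 0 := by
    push_cast; ring
  rw [← mul_assoc, ph, ph, ← Complex.exp_add, e, Complex.exp_zero, one_mul]

end uniform

/-! ### Integral identities for square integrable fields -/

section integrals

variable {d : ℕ}

/-- A smooth cutoff, equal to `1` on the ball of radius `N + 1`, with gradient `O(1/N)`. -/
def cut (N : ℕ) (x : Ed d) : ℝ :=
  (⟨1, 2, one_pos, one_lt_two⟩ : ContDiffBump (0 : Ed d)) ((1 / ((N : ℝ) + 1)) • x)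

lemma cut_Sm (N : ℕ) : Sm (cut N : Ed d → ℝ) :=
  (ContDiffBump.contDiff _).comp (contDiff_id.const_smul (1 / ((N : ℝ) + 1)))

lemma cut_nonneg (N : ℕ) (x : Ed d) : 0 ≤ cut N x := ContDiffBump.nonneg _

lemma cut_le_one (N : ℕ) (x : Ed d) : cut N x ≤ 1 := ContDiffBump.le_one _

lemma cut_cs (N : ℕ) : HasCompactSupport (cut N : Ed d → ℝ) := by
  have h : (1 / ((N : ℝ) + 1)) ≠ 0 := by positivity
  exact (ContDiffBump.hasCompactSupport
    (⟨1, 2, one_pos, one_lt_two⟩ : ContDiffBump (0 : Ed d))).comp_smul h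

lemma cut_tendsto (x : Ed d) : Tendsto (fun N => cut N x) atTop (𝓝 1) := by
  have h : Tendsto (fun N : ℕ => (1 / ((N : ℝ) + 1)) • x) atTop (𝓝 0) := by
    simpa using (tendsto_one_div_add_atTop_nhds_zero_nat (𝕜 := ℝ)).smul_const x
  have h2 := ((⟨1, 2, one_pos, one_lt_two⟩ : ContDiffBump (0 : Ed d)).continuous.tendsto 0).comp h
  rwa [ContDiffBump.one_of_mem_closedBall _ (by simp)] at h2

lemma cut_deriv : ∃ C : ℝ, 0 ≤ C ∧ ∀ (N : ℕ) (i : Fin d) (x : Ed d),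
    |D i (cut N) x| ≤ C / ((N : ℝ) + 1) := by
  set b : ContDiffBump (0 : Ed d) := ⟨1, 2, one_pos, one_lt_two⟩ with hb
  have hbS : Sm (b : Ed d → ℝ) := b.contDiff
  obtain ⟨C, hC⟩ := hbS.fd.continuous.bounded_above_of_compact_support
    (b.hasCompactSupport.fderiv ℝ)
  refine ⟨C, (norm_nonneg _).trans (hC 0), fun N i x => ?_⟩
  have hp : (0:ℝ) < 1 / ((N : ℝ) + 1) := by positivity
  have : fderiv ℝ (cut N) x = (1 / ((N : ℝ) + 1)) • fderiv ℝ b ((1 / ((N : ℝ) + 1)) • x) :=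
    fderiv_comp_smul (f := b) (1 / ((N : ℝ) + 1))
  rw [D, this, _root_.smul_apply, smul_eq_mul, abs_mul, abs_of_pos hp, div_eq_mul_one_div C, mul_comm]
  refine mul_le_mul_of_nonneg_right ?_ hp.le
  refine ((fderiv ℝ b _).le_opNorm _).trans ?_
  simpa using hC _

lemma integrable_cut_mul (N : ℕ) {f : Ed d → ℝ} (hf : Continuous f) :
    Integrable (fun x => cut N x * f x) :=
  ((cut_Sm N).continuous.mul hf).integrable_of_hasCompactSupport ((cut_cs N).mul_right)

lemma cut_integral_tendsto {f : Ed d → ℝ} (hf : Integrable f) :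
    Tendsto (fun N => ∫ x, cut N x * f x) atTop (𝓝 (∫ x, f x)) := by
  refine tendsto_integral_of_dominated_convergence (fun x => ‖f x‖)
    (fun N => (cut_Sm N).continuous.aestronglyMeasurable.mul hf.1) hf.norm
    (fun N => ae_of_all _ fun x => ?_) (ae_of_all _ fun x => ?_)
  · rw [norm_mul, Real.norm_of_nonneg (cut_nonneg N x)]
    exact mul_le_of_le_one_left (norm_nonneg _) (cut_le_one N x)
  · simpa using (cut_tendsto x).mul_const (f x)

/-- The divergence theorem against the cutoff: only an `O(1/N)` error survives. -/
lemma cut_div : ∃ C : ℝ, 0 ≤ C ∧ ∀ (N : ℕ) (X : Fin d → Ed d → ℝ), (∀ i, Sm (X i)) →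
    (∀ i, Integrable (X i)) →
    |∫ x, cut N x * ∑ i, D i (X i) x| ≤ C / ((N : ℝ) + 1) * ∑ i, ∫ x, |X i x| := by
  obtain ⟨C, hC0, hC⟩ := cut_deriv (d := d)
  refine ⟨C, hC0, fun N X hX hXi => ?_⟩
  have h1 : ∫ x, cut N x * ∑ i, D i (X i) x = ∑ i, ∫ x, cut N x * D i (X i) x := by
    simp only [Finset.mul_sum]
    exact integral_finsetSum _ fun i _ => integrable_cut_mul N ((hX i).D i).continuous
  rw [h1, Finset.mul_sum]
  refine (Finset.abs_sum_le_sum_abs _ _).trans (Finset.sum_le_sum fun i _ => ?_)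
  have hi : Integrable fun x => D i (cut N) x * X i x :=
    (((cut_Sm N).D i).continuous.mul (hX i).continuous).integrable_of_hasCompactSupport
      (((cut_cs N).fderiv_apply ℝ _).mul_right)
  have h2 : ∫ x, cut N x * D i (X i) x = - ∫ x, D i (cut N) x * X i x :=
    integral_mul_fderiv_eq_neg_fderiv_mul_of_integrable hi
      (integrable_cut_mul N ((hX i).D i).continuous)
      (integrable_cut_mul N (hX i).continuous)
      (fun x _ => (cut_Sm N).da x) (fun x _ => (hX i).da x)
  rw [h2, abs_neg, ← integral_const_mul]
  refine (abs_integral_le_integral_abs).trans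
    (integral_mono hi.abs ((hXi i).abs.const_mul _) fun x => ?_)
  simp only [abs_mul]
  exact mul_le_mul_of_nonneg_right (hC N i x) (abs_nonneg _)

lemma tendsto_C_div (C : ℝ) : Tendsto (fun N : ℕ => C / ((N : ℝ) + 1)) atTop (𝓝 0) := by
  simpa [div_eq_mul_one_div C] using tendsto_one_div_add_atTop_nhds_zero_nat.const_mul C

/-- An integrable field with integrable divergence has divergence of integral zero. -/
lemma integral_div_eq_zero {X : Fin d → Ed d → ℝ} (hX : ∀ i, Sm (X i))
    (hXi : ∀ i, Integrable (X i)) (hdiv : Integrable fun x => ∑ i, D i (X i) x) :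
    ∫ x, ∑ i, D i (X i) x = 0 := by
  obtain ⟨C, -, hC⟩ := cut_div (d := d)
  have h1 := cut_integral_tendsto hdiv
  have h2 : Tendsto (fun N => ∫ x, cut N x * ∑ i, D i (X i) x) atTop (𝓝 0) :=
    squeeze_zero_norm (fun N => hC N X hX hXi)
      (by simpa using (tendsto_C_div C).mul_const (∑ i, ∫ x, |X i x|))
  exact tendsto_nhds_unique h1 h2

/-- Two square integrable functions, one of them translated to infinity, decouple. -/
lemma decouple {f g : Ed d → ℝ}
    (hf2 : Integrable fun x => f x ^ 2) (hg2 : Integrable fun x => g x ^ 2) {e : Ed d}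
    (he : ‖e‖ = 1) : Tendsto (fun n : ℕ => ∫ x, f x * g (x + (n : ℝ) • e)) atTop (𝓝 0) := by
  set A : ℕ → Set (Ed d) := fun n => {x | (n : ℝ) / 2 ≤ ‖x‖} with hA
  have hAm : ∀ n, MeasurableSet (A n) := fun n =>
    (isClosed_le continuous_const continuous_norm).measurableSet
  have tail : ∀ {k : Ed d → ℝ}, Integrable k →
      Tendsto (fun n => ∫ x, (A n).indicator k x) atTop (𝓝 0) := by
    intro k hk
    have := tendsto_integral_of_dominated_convergence (μ := volume)
      (F := fun n x => (A n).indicator k x) (f := fun _ => (0:ℝ)) (fun x => ‖k x‖)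
      (fun n => (hk.indicator (hAm n)).1) hk.norm
      (fun n => ae_of_all _ fun x => norm_indicator_le_norm_self _ _)
      (ae_of_all _ fun x => ?_)
    · simpa using this
    · refine tendsto_const_nhds.congr' ?_
      obtain ⟨m, hm⟩ := exists_nat_gt (2 * ‖x‖)
      filter_upwards [eventually_ge_atTop m] with n hn
      have : (m:ℝ) ≤ n := by exact_mod_cast hn
      rw [Set.indicator_of_notMem]
      simp only [hA, Set.mem_ofPred_eq, not_le]; linarith
  set a := ∫ x, f x ^ 2
  set b := ∫ x, g x ^ 2
  have ha : 0 ≤ a := integral_nonneg fun x => sq_nonneg _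
  have hb : 0 ≤ b := integral_nonneg fun x => sq_nonneg _
  -- Peter-Paul with a small weight `s` where both factors may be large
  have key : ∀ s : ℝ, 0 < s → ∀ n : ℕ, |∫ x, f x * g (x + (n : ℝ) • e)| ≤
      s / 2 * (a + b) + 1 / (2 * s) * ((∫ x, (A n).indicator (fun x => f x ^ 2) x) +
        ∫ x, (A n).indicator (fun x => g x ^ 2) x) := by
    intro s hs n
    set v : Ed d := (n : ℝ) • e with hv
    have hvn : ‖v‖ = n := by simp [hv, norm_smul, he]
    have hgi : Integrable fun x => g (x + v) ^ 2 := hg2.comp_add_right v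
    have i1 := hf2.indicator (hAm n)
    have i2 := hg2.indicator (hAm n)
    have i3 : Integrable fun x => (A n).indicator (fun x => g x ^ 2) (x + v) := i2.comp_add_right v
    have e1 : b = ∫ x, g (x + v) ^ 2 :=
      (integral_add_right_eq_self (μ := volume) (fun x => g x ^ 2) v).symm
    have j1 : Integrable fun x => s / 2 * (f x ^ 2 + g (x + v) ^ 2) := (hf2.add hgi).const_mul _
    have j2 : Integrable fun x => 1 / (2 * s) * ((A n).indicator (fun x => f x ^ 2) x +
        (A n).indicator (fun x => g x ^ 2) (x + v)) := (i1.add i3).const_mul _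
    have e2 : ∫ x, (A n).indicator (fun x => g x ^ 2) x =
        ∫ x, (A n).indicator (fun x => g x ^ 2) (x + v) :=
      (integral_add_right_eq_self (μ := volume) _ v).symm
    rw [e1, e2, ← integral_add hf2 hgi, ← integral_add i1 i3, ← integral_const_mul,
      ← integral_const_mul, ← integral_add j1 j2]
    rw [← Real.norm_eq_abs]
    refine norm_integral_le_of_norm_le (j1.add j2) (ae_of_all _ fun x => ?_)
    rw [Real.norm_eq_abs, abs_mul]
    have n1 : 0 ≤ (A n).indicator (fun x => f x ^ 2) x :=
      Set.indicator_nonneg (fun _ _ => sq_nonneg _) _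
    have n2 : 0 ≤ (A n).indicator (fun x => g x ^ 2) (x + v) :=
      Set.indicator_nonneg (fun _ _ => sq_nonneg _) _
    have hp : (0:ℝ) < 1 / (2 * s) := by positivity
    have pp : ∀ p q : ℝ, |p| * |q| ≤ s / 2 * q ^ 2 + 1 / (2 * s) * p ^ 2 := by
      intro p q
      rw [← sq_abs p, ← sq_abs q]
      have : s / 2 * |q| ^ 2 + 1 / (2 * s) * |p| ^ 2 - |p| * |q| = (s * |q| - |p|) ^ 2 / (2 * s) := by
        field_simp; ring
      have h2 : 0 ≤ (s * |q| - |p|) ^ 2 / (2 * s) := by positivity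
      linarith
    by_cases hx : x ∈ A n
    · rw [Set.indicator_of_mem hx]
      nlinarith [pp (f x) (g (x + v)), mul_nonneg hs.le (sq_nonneg (f x)),
        mul_nonneg hp.le n2]
    · have hx2 : x + v ∈ A n := by
        simp only [hA, Set.mem_ofPred_eq, not_le] at hx ⊢
        have := norm_sub_le (x + v) x
        rw [add_sub_cancel_left, hvn] at this
        linarith
      rw [Set.indicator_of_mem hx2 (f := fun x => g x ^ 2)]
      nlinarith [pp (g (x + v)) (f x), mul_nonneg hs.le (sq_nonneg (g (x + v))),
        mul_nonneg hp.le n1, mul_comm |f x| |g (x + v)|]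
  rw [Metric.tendsto_atTop]
  intro ε hε
  set s := ε / (a + b + 1) with hs
  have hs0 : 0 < s := by positivity
  have hlim := ((tail hf2).add (tail hg2)).const_mul (1 / (2 * s))
  rw [add_zero, mul_zero] at hlim
  obtain ⟨n₀, hn₀⟩ := eventually_atTop.1 (hlim.eventually (gt_mem_nhds (half_pos hε)))
  refine ⟨n₀, fun n hn => ?_⟩
  rw [dist_zero_right, Real.norm_eq_abs]
  have h1 : s / 2 * (a + b) ≤ ε / 2 := by
    rw [hs, div_div, div_mul_eq_mul_div, div_le_div_iff₀ (by positivity) (by norm_num)]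
    nlinarith
  linarith [key s hs0 n, hn₀ n hn]

/-- A square integrable divergence free field and a square integrable curl free field are
orthogonal. Translating the curl free field by `h` in a coordinate direction does not change the
pairing, since the derivative in `h` is the integral of a divergence; as `h → ∞` the pairing
vanishes. -/
lemma orth {W V : Fin d → Ed d → ℝ} (hW : ∀ i, Sm (W i)) (hV : ∀ i, Sm (V i))
    (hW2 : ∀ i, Integrable fun x => W i x ^ 2) (hV2 : ∀ i, Integrable fun x => V i x ^ 2)
    (hdiv : ∀ x, ∑ i, D i (W i) x = 0) (hcurl : ∀ i j x, D i (V j) x = D j (V i) x) (i₀ : Fin d) :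
    ∫ x, ∑ i, W i x * V i x = 0 := by
  obtain ⟨C, hC0, hC⟩ := cut_div (d := d)
  set e : Ed d := EuclideanSpace.single i₀ (1:ℝ) with he
  have hen : ‖e‖ = 1 := by simp [he]
  have hWVint : ∀ (t : ℝ) (i j : Fin d), Integrable fun x => W i x * V j (x + t • e) := by
    intro t i j
    refine ((hW2 i).add ((hV2 j).comp_add_right (t • e))).mono'
      ((hW i).continuous.mul ((hV j).comp_add _).continuous).aestronglyMeasurable
      (ae_of_all _ fun x => ?_)
    rw [Real.norm_eq_abs, abs_le]
    simp only [Pi.add_apply]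
    constructor <;> nlinarith [sq_nonneg (W i x + V j (x + t • e)),
      sq_nonneg (W i x - V j (x + t • e)), sq_nonneg (W i x), sq_nonneg (V j (x + t • e))]
  have hP : ∀ t : ℝ, Integrable fun x => ∑ i, W i x * V i (x + t • e) := fun t =>
    integrable_finsetSum _ fun i _ => hWVint t i i
  set B : ℝ := ∑ i, ((∫ x, W i x ^ 2) + ∫ x, V i₀ x ^ 2) with hB
  have hB0 : ∀ t : ℝ, ∑ i, ∫ x, |W i x * V i₀ (x + t • e)| ≤ B := by
    intro t
    refine Finset.sum_le_sum fun i _ => ?_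
    have hVt : Integrable fun x => V i₀ (x + t • e) ^ 2 := (hV2 i₀).comp_add_right (t • e)
    rw [← integral_add_right_eq_self (μ := volume) (fun x => V i₀ x ^ 2) (t • e),
      ← integral_add (hW2 i) hVt]
    refine integral_mono (hWVint t i i₀).abs ((hW2 i).add hVt) fun x => ?_
    rw [abs_le]
    constructor <;> nlinarith [sq_nonneg (W i x + V i₀ (x + t • e)),
      sq_nonneg (W i x - V i₀ (x + t • e)), sq_nonneg (W i x), sq_nonneg (V i₀ (x + t • e))]
  set FN : ℕ → ℝ → ℝ := fun N t => ∫ x, cut N x * ∑ i, W i x * V i (x + t • e) with hFN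
  have hWc : ∀ i, Continuous (W i) := fun i => (hW i).continuous
  have hVc : ∀ i, Continuous (V i) := fun i => (hV i).continuous
  have hDVc : ∀ i j, Continuous (D j (V i)) := fun i j => ((hV i).D j).continuous
  have hder : ∀ N t, HasDerivAt (FN N)
      (∫ x, cut N x * ∑ i, W i x * D i₀ (V i) (x + t • e)) t := by
    intro N t
    have hcc := (cut_Sm (d := d) N).continuous
    -- domination on the compact support of the cutoff
    obtain ⟨M, hM⟩ := (((cut_cs (d := d) N).isCompact).prod
      (isCompact_Icc (a := t - 1) (b := t + 1))).exists_bound_of_continuousOn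
      (f := fun p : Ed d × ℝ => ∑ i, W i p.1 * D i₀ (V i) (p.1 + p.2 • e))
      (by fun_prop)
    refine (hasDerivAt_integral_of_dominated_loc_of_deriv_le (μ := volume)
      (F := fun t x => cut N x * ∑ i, W i x * V i (x + t • e))
      (F' := fun t x => cut N x * ∑ i, W i x * D i₀ (V i) (x + t • e))
      (bound := fun x => cut N x * M) (Icc_mem_nhds (sub_one_lt t) (lt_add_one t))
      (Eventually.of_forall fun s => ?_) (integrable_cut_mul N (by fun_prop)) ?_
      (ae_of_all _ fun x s hs => ?_) (integrable_cut_mul N continuous_const)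
      (ae_of_all _ fun x s hs => ?_)).2
    · exact Continuous.aestronglyMeasurable (by fun_prop)
    · exact Continuous.aestronglyMeasurable (by fun_prop)
    · rw [norm_mul, Real.norm_of_nonneg (cut_nonneg N x)]
      by_cases hx : x ∈ tsupport (cut (d := d) N)
      · exact mul_le_mul_of_nonneg_left (hM (x, s) ⟨hx, hs⟩) (cut_nonneg N x)
      · simp [image_eq_zero_of_notMem_tsupport hx]
    · exact HasDerivAt.const_mul _ (HasDerivAt.fun_sum fun i _ =>
        (hasDerivAt_line (hV i) i₀ x s).const_mul _)
  have hbd : ∀ (N : ℕ) (t : ℝ), ‖∫ x, cut N x * ∑ i, W i x * D i₀ (V i) (x + t • e)‖ ≤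
      C / ((N : ℝ) + 1) * B := by
    intro N t
    have h1 := hC N (fun i x => W i x * V i₀ (x + t • e))
      (fun i => (hW i).mul ((hV i₀).comp_add _)) (fun i => hWVint t i i₀)
    have h2 : ∀ x, ∑ i, D i (fun x => W i x * V i₀ (x + t • e)) x =
        ∑ i, W i x * D i₀ (V i) (x + t • e) := by
      intro x
      have : ∀ i, D i (fun x => W i x * V i₀ (x + t • e)) x =
          W i x * D i₀ (V i) (x + t • e) + V i₀ (x + t • e) * D i (W i) x := by
        intro i
        rw [D_mul (hW i) ((hV i₀).comp_add _), D_comp_add, hcurl]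
      simp only [this, Finset.sum_add_distrib, ← Finset.mul_sum, hdiv, mul_zero, add_zero]
    simp only [h2] at h1
    exact h1.trans (mul_le_mul_of_nonneg_left (hB0 t) (by positivity))
  have hconst : ∀ h : ℝ, ∫ x, ∑ i, W i x * V i (x + h • e) = ∫ x, ∑ i, W i x * V i x := by
    intro h
    have h1 := cut_integral_tendsto (hP h)
    have h2 := cut_integral_tendsto (hP 0)
    have h3 : Tendsto (fun N => FN N h - FN N 0) atTop (𝓝 0) := by
      refine squeeze_zero_norm (a := fun N : ℕ => C / ((N : ℝ) + 1) * B * ‖h - 0‖) (fun N => ?_) ?_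
      · exact Convex.norm_image_sub_le_of_norm_hasDerivWithin_le (f := FN N)
          (f' := fun t => ∫ x, cut N x * ∑ i, W i x * D i₀ (V i) (x + t • e)) (s := Set.univ)
          (fun t _ => (hder N t).hasDerivWithinAt) (fun t _ => hbd N t) convex_univ
          (Set.mem_univ _) (Set.mem_univ _)
      · simpa using ((tendsto_C_div C).mul_const B).mul_const ‖h - 0‖
    have := tendsto_nhds_unique (h1.sub h2) h3
    simp only [zero_smul, add_zero] at this
    linarith
  have hlim : Tendsto (fun n : ℕ => ∫ x, ∑ i, W i x * V i (x + (n : ℝ) • e)) atTop (𝓝 0) := by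
    have : ∀ n : ℕ, ∫ x, ∑ i, W i x * V i (x + (n : ℝ) • e) =
        ∑ i, ∫ x, W i x * V i (x + (n : ℝ) • e) := fun n =>
      integral_finsetSum _ fun i _ => hWVint n i i
    simp only [this]
    simpa using tendsto_finsetSum Finset.univ fun (i : Fin d) _ =>
      decouple (hW2 i) (hV2 i) hen
  simp only [hconst] at hlim
  exact tendsto_nhds_unique tendsto_const_nhds hlim

end integrals

/-! ### A subsonic wave close to or above modulus one is constant -/

section nonvanishing

variable {d : ℕ}

/-- The pointwise coercivity behind the vanishing theorem. Here `r = |ψ|²`, `S = |∇|ψ|²|²`,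
`T = |v|²` for the velocity field `v`, and `v₀` is one component of `v`. -/
lemma coercive {c δ r S T v₀ q : ℝ} (hδ : 0 < δ) (hc : c ^ 2 + 4 * δ < 2) (hr : 1 - δ < r)
    (hS : 0 ≤ S) (hT : v₀ ^ 2 ≤ T)
    (hq : 4 * r * q = S * (3 * r - 1) + 4 * r * ((1 - r) ^ 2 * r + r * (1 + r) * T
      - c * (1 - r) * (1 + r) * v₀)) : 0 ≤ q ∧ (q = 0 → S = 0 ∧ T = 0 ∧ r = 1) := by
  have hδ2 : δ < 1 / 2 := by nlinarith [sq_nonneg c]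
  have hr0 : 0 < r := by linarith
  have h1 : 0 < 3 * r - 1 := by linarith
  have h2 : 0 < 4 * r ^ 2 - c ^ 2 * (1 + r) := by
    have e1 : 0 ≤ (r - (1 - δ)) * (4 * (r + (1 - δ)) - c ^ 2) :=
      mul_nonneg (by linarith) (by nlinarith)
    nlinarith [mul_pos hδ hδ]
  have hid : 4 * r * q = S * (3 * r - 1) + (2 * r * (1 - r) - c * (1 + r) * v₀) ^ 2 +
      (1 + r) * (4 * r ^ 2 - c ^ 2 * (1 + r)) * v₀ ^ 2 + 4 * r ^ 2 * (1 + r) * (T - v₀ ^ 2) := by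
    rw [hq]; ring
  have p1 : 0 ≤ S * (3 * r - 1) := mul_nonneg hS h1.le
  have p2 := sq_nonneg (2 * r * (1 - r) - c * (1 + r) * v₀)
  have hm : 0 < (1 + r) * (4 * r ^ 2 - c ^ 2 * (1 + r)) := mul_pos (by linarith) h2
  have p3 := mul_nonneg hm.le (sq_nonneg v₀)
  have hm2 : 0 < 4 * r ^ 2 * (1 + r) := by positivity
  have p4 := mul_nonneg hm2.le (sub_nonneg.2 hT)
  refine ⟨?_, fun h0 => ?_⟩
  · by_contra! hneg
    nlinarith [mul_pos_of_neg_of_neg hneg (neg_lt_zero.2 hr0)]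
  · rw [h0, mul_zero] at hid
    have s1 : S = 0 := by
      have : S * (3 * r - 1) = 0 := by linarith
      exact (mul_eq_zero.1 this).resolve_right h1.ne'
    have s2 : v₀ ^ 2 = 0 := by
      have : (1 + r) * (4 * r ^ 2 - c ^ 2 * (1 + r)) * v₀ ^ 2 = 0 := by linarith
      exact (mul_eq_zero.1 this).resolve_left hm.ne'
    have s3 : T - v₀ ^ 2 = 0 := by
      have : 4 * r ^ 2 * (1 + r) * (T - v₀ ^ 2) = 0 := by linarith
      exact (mul_eq_zero.1 this).resolve_left hm2.ne'
    have s4 : v₀ = 0 := by simpa using s2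
    refine ⟨s1, by linarith, ?_⟩
    have : (2 * r * (1 - r) - c * (1 + r) * v₀) ^ 2 = 0 := by linarith
    rw [s4, mul_zero, sub_zero] at this
    have := (mul_eq_zero.1 (pow_eq_zero_iff two_ne_zero |>.1 this)).resolve_left (by positivity)
    linarith

/-- The vanishing theorem in terms of the real and imaginary parts `a`, `b` of the wave. The density
`Q = div (η∇η) / 2 + 2 W · V`, where `η = 1 - r`, has integral zero; after the equation is used it
contains no second derivatives, and by `coercive` it is nonnegative. -/
lemma real_core [NeZero d] {c δ M : ℝ} (hδ : 0 < δ) (hcδ : c ^ 2 + 4 * δ < 2)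
    {a b : Ed d → ℝ} (ha : Sm a) (hb : Sm b)
    (eq1 : ∀ x, -c * D 0 b x + Lap a x + (1 - (a x * a x + b x * b x)) * a x = 0)
    (eq2 : ∀ x, c * D 0 a x + Lap b x + (1 - (a x * a x + b x * b x)) * b x = 0)
    (hG : Integrable fun x => ∑ i, (D i a x ^ 2 + D i b x ^ 2))
    (hη : Integrable fun x => (1 - (a x * a x + b x * b x)) ^ 2)
    (hM : ∀ x, a x * a x + b x * b x ≤ M) (hr : ∀ x, 1 - δ < a x * a x + b x * b x) (x : Ed d) :
    a x * a x + b x * b x = 1 ∧ ∀ i, D i a x = 0 ∧ D i b x = 0 := by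
  have hδ2 : δ < 1 / 2 := by nlinarith [sq_nonneg c]
  have hM0 : 0 ≤ M := by linarith [hM x, hr x]
  set r : Ed d → ℝ := fun x => a x * a x + b x * b x with hrdef
  have hrS : Sm r := (ha.mul ha).add (hb.mul hb)
  have hrpos : ∀ x, 0 < r x := fun x => by linarith [hr x]
  set η : Ed d → ℝ := fun x => 1 - r x with hηdef
  have hηS : Sm η := contDiff_const.sub hrS
  -- momentum `J`, velocity `V = J / r`, and the divergence free field `W`
  set J : Fin d → Ed d → ℝ := fun i x => a x * D i b x - b x * D i a x with hJ
  have hJS : ∀ i, Sm (J i) := fun i => (ha.mul (hb.D i)).sub (hb.mul (ha.D i))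
  set V : Fin d → Ed d → ℝ := fun i x => J i x / r x with hV
  have hVS : ∀ i, Sm (V i) := fun i => (hJS i).div hrS fun x => (hrpos x).ne'
  have hVr : ∀ i x, r x * V i x = J i x := fun i x => by
    simp only [hV]; field_simp [(hrpos x).ne']
  set W : Fin d → Ed d → ℝ := fun i x => J i x - (if i = 0 then c / 2 else 0) * η x with hW
  have hWS : ∀ i, Sm (W i) := fun i => (hJS i).sub (contDiff_const.mul hηS)
  have hDr : ∀ i x, D i r x = 2 * (a x * D i a x + b x * D i b x) := fun i x => by
    rw [hrdef, D_add (ha.mul ha) (hb.mul hb), D_mul ha ha, D_mul hb hb]; ring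
  have hDη : ∀ i x, D i η x = -2 * (a x * D i a x + b x * D i b x) := fun i x => by
    rw [hηdef, D_sub contDiff_const hrS, D_const, hDr]; ring
  have hDJ : ∀ i j x, D j (J i) x = a x * D j (D i b) x + D i b x * D j a x
      - (b x * D j (D i a) x + D i a x * D j b x) := fun i j x => by
    rw [hJ]
    rw [D_sub (ha.mul (hb.D i)) (hb.mul (ha.D i)), D_mul ha (hb.D i), D_mul hb (ha.D i)]
  have hcurl : ∀ i j x, D i (V j) x = D j (V i) x := by
    intro i j x
    have key : ∀ i j, r x * D j (V i) x + V i x * D j r x = D j (J i) x := fun i j => by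
      rw [← D_mul hrS (hVS i)]
      congr 1; funext y; exact hVr i y
    have k1 := key i j
    have k2 := key j i
    rw [hDr, hDJ] at k1 k2
    have v1 := hVr i x
    have v2 := hVr j x
    have c1 := D_comm ha i j x
    have c2 := D_comm hb i j x
    have hr2 : r x = a x * a x + b x * b x := rfl
    have hz : r x ^ 2 * (D i (V j) x - D j (V i) x) = 0 := by
      simp only [hJ] at v1 v2
      rw [c1, c2] at k2
      linear_combination r x * (k2 - k1) -
        2 * (a x * D i a x + b x * D i b x) * v2 + 2 * (a x * D j a x + b x * D j b x) * v1
        + 2 * (D i a x * D j b x - D j a x * D i b x) * hr2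
    have := (mul_eq_zero.1 hz).resolve_left (pow_ne_zero _ (hrpos x).ne')
    linarith
  have hdiv : ∀ x, ∑ i, D i (W i) x = 0 := by
    intro x
    have h1 : ∀ i, D i (W i) x = (a x * D i (D i b) x - b x * D i (D i a) x)
        - (if i = 0 then c / 2 else 0) * D i η x := fun i => by
      rw [hW]
      rw [D_sub (hJS i) (contDiff_const.mul hηS), D_mul contDiff_const hηS, D_const, hDJ]; ring
    simp only [h1, Finset.sum_sub_distrib, ← Finset.mul_sum]
    have h2 : ∑ i, (if i = 0 then c / 2 else 0) * D i η x = c / 2 * D 0 η x := by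
      simp
    rw [h2, hDη]
    have e1 := eq1 x
    have e2 := eq2 x
    simp only [Lap] at e1 e2
    linear_combination a x * e2 - b x * e1
  -- everything is controlled by the energy density
  have hai : ∀ i, Integrable fun x => D i a x ^ 2 + D i b x ^ 2 := fun i =>
    hG.mono' (((ha.D i).continuous.pow 2).add ((hb.D i).continuous.pow 2)).aestronglyMeasurable
      (ae_of_all _ fun x => by
        rw [Real.norm_of_nonneg (by positivity)]
        exact Finset.single_le_sum (f := fun i => D i a x ^ 2 + D i b x ^ 2)
          (fun i _ => by positivity) (Finset.mem_univ i))
  have hJsq : ∀ i x, J i x ^ 2 ≤ r x * (D i a x ^ 2 + D i b x ^ 2) := fun i x => by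
    simp only [hJ, hrdef]
    nlinarith [sq_nonneg (a x * D i a x + b x * D i b x)]
  have hJ2 : ∀ i, Integrable fun x => J i x ^ 2 := fun i =>
    ((hai i).const_mul M).mono' ((hJS i).continuous.pow 2).aestronglyMeasurable
      (ae_of_all _ fun x => by
        rw [Real.norm_of_nonneg (by positivity)]
        exact (hJsq i x).trans (mul_le_mul_of_nonneg_right (hM x) (by positivity)))
  have hV2 : ∀ i, Integrable fun x => V i x ^ 2 := fun i =>
    ((hJ2 i).const_mul 4).mono' ((hVS i).continuous.pow 2).aestronglyMeasurable
      (ae_of_all _ fun x => by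
        rw [Real.norm_of_nonneg (by positivity)]
        have : 1 / 4 ≤ r x ^ 2 := by nlinarith [hr x]
        rw [← hVr i x, mul_pow]
        nlinarith [sq_nonneg (V i x)])
  have hη2 : Integrable fun x => η x ^ 2 := hη
  have hW2 : ∀ i, Integrable fun x => W i x ^ 2 := fun i =>
    (((hJ2 i).const_mul 2).add (hη2.const_mul (2 * (c / 2) ^ 2))).mono'
      ((hWS i).continuous.pow 2).aestronglyMeasurable
      (ae_of_all _ fun x => by
        rw [Real.norm_of_nonneg (by positivity)]
        simp only [Pi.add_apply, hW]
        split_ifs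
        · nlinarith [sq_nonneg (J i x + c / 2 * η x)]
        · nlinarith [sq_nonneg (J i x), sq_nonneg (c / 2 * η x)])
  have hDη2 : ∀ i, Integrable fun x => D i η x ^ 2 := fun i =>
    ((hai i).const_mul (4 * M)).mono' (((hηS.D i).continuous).pow 2).aestronglyMeasurable
      (ae_of_all _ fun x => by
        rw [Real.norm_of_nonneg (by positivity), hDη]
        have h1 : (-2 * (a x * D i a x + b x * D i b x)) ^ 2 ≤
            4 * (r x * (D i a x ^ 2 + D i b x ^ 2)) := by
          simp only [hrdef]
          nlinarith [sq_nonneg (a x * D i b x - b x * D i a x)]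
        have h2 := mul_le_mul_of_nonneg_right (hM x)
          (show 0 ≤ D i a x ^ 2 + D i b x ^ 2 by positivity)
        linarith)
  have hmul : ∀ {f g : Ed d → ℝ}, Continuous f → Continuous g → Integrable (fun x => f x ^ 2) →
      Integrable (fun x => g x ^ 2) → Integrable fun x => f x * g x := by
    intro f g hf hg hf2 hg2
    refine (hf2.add hg2).mono' (hf.mul hg).aestronglyMeasurable (ae_of_all _ fun x => ?_)
    rw [Real.norm_eq_abs, abs_le]
    simp only [Pi.add_apply]
    constructor <;> nlinarith [sq_nonneg (f x + g x), sq_nonneg (f x - g x)]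
  have hWV : Integrable fun x => ∑ i, W i x * V i x := integrable_finsetSum _ fun i _ =>
    hmul (hWS i).continuous (hVS i).continuous (hW2 i) (hV2 i)
  have I1 : ∫ x, ∑ i, W i x * V i x = 0 := orth hWS hVS hW2 hV2 hdiv hcurl 0
  set X : Fin d → Ed d → ℝ := fun i x => η x * D i η x with hX
  have hXS : ∀ i, Sm (X i) := fun i => hηS.mul (hηS.D i)
  have hXi : ∀ i, Integrable (X i) := fun i =>
    hmul hηS.continuous (hηS.D i).continuous hη2 (hDη2 i)
  set G : Ed d → ℝ := fun x => ∑ i, (D i a x ^ 2 + D i b x ^ 2) with hGdef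
  have hGc : Continuous G := continuous_finsetSum _ fun i _ =>
    ((ha.D i).continuous.pow 2).add ((hb.D i).continuous.pow 2)
  have hG0 : ∀ x, 0 ≤ G x := fun x => Finset.sum_nonneg fun i _ => by positivity
  have hdivX : ∀ x, ∑ i, D i (X i) x = ∑ i, D i η x ^ 2
      + (-2 * c * (η x * J 0 x) + 2 * (r x * η x ^ 2) - 2 * (η x * G x)) := by
    intro x
    have h1 : ∀ i, D i (D i η) x = -2 * (a x * D i (D i a) x + b x * D i (D i b) x +
        (D i a x ^ 2 + D i b x ^ 2)) := fun i => by
      have : D i η = fun x => (-2) * (a x * D i a x + b x * D i b x) := funext (hDη i)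
      rw [this, D_mul contDiff_const ((ha.mul (ha.D i)).add (hb.mul (hb.D i))), D_const,
        D_add (ha.mul (ha.D i)) (hb.mul (hb.D i)), D_mul ha (ha.D i), D_mul hb (hb.D i)]
      ring
    have h2 : ∀ i, D i (X i) x = D i η x ^ 2 + η x * (-2 * (a x * D i (D i a) x +
        b x * D i (D i b) x + (D i a x ^ 2 + D i b x ^ 2))) := fun i => by
      rw [hX]
      rw [D_mul hηS (hηS.D i), h1]; ring
    simp only [h2, Finset.sum_add_distrib, ← Finset.mul_sum]
    have e1 := eq1 x
    have e2 := eq2 x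
    simp only [Lap] at e1 e2
    simp only [hGdef, hJ, Finset.sum_add_distrib]
    have hη' : η x = 1 - (a x * a x + b x * b x) := rfl
    have hr' : r x = a x * a x + b x * b x := rfl
    rw [← hη'] at e1 e2
    rw [hr']
    linear_combination -2 * η x * (a x * e1 + b x * e2)
  have hdivXi : Integrable fun x => ∑ i, D i (X i) x := by
    simp only [hdivX]
    have j1 : Integrable fun x => ∑ i, D i η x ^ 2 := integrable_finsetSum _ fun i _ => hDη2 i
    have j2 : Integrable fun x => η x * J 0 x :=
      hmul hηS.continuous (hJS 0).continuous hη2 (hJ2 0)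
    have j3 : Integrable fun x => r x * η x ^ 2 :=
      (hη2.const_mul M).mono' (hrS.continuous.mul (hηS.continuous.pow 2)).aestronglyMeasurable
        (ae_of_all _ fun x => by
          rw [Real.norm_of_nonneg (mul_nonneg (hrpos x).le (sq_nonneg _))]
          exact mul_le_mul_of_nonneg_right (hM x) (sq_nonneg _))
    have j4 : Integrable fun x => η x * G x :=
      (hG.const_mul (1 + M)).mono' (hηS.continuous.mul hGc).aestronglyMeasurable
        (ae_of_all _ fun x => by
          rw [norm_mul, Real.norm_of_nonneg (hG0 x), Real.norm_eq_abs]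
          refine mul_le_mul_of_nonneg_right ?_ (hG0 x)
          have h1 : r x ≤ M := hM x
          have h2 := hrpos x
          rw [abs_le]; simp only [hηdef]; constructor <;> linarith)
    exact j1.add (((j2.const_mul (-2 * c)).add (j3.const_mul 2)).sub (j4.const_mul 2))
  have I2 : ∫ x, ∑ i, D i (X i) x = 0 := integral_div_eq_zero hXS hXi hdivXi
  set Q : Ed d → ℝ := fun x => 1 / 2 * ∑ i, D i (X i) x + 2 * ∑ i, W i x * V i x with hQ
  have hQi : Integrable Q := (hdivXi.const_mul _).add (hWV.const_mul _)
  have hQ0 : ∫ x, Q x = 0 := by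
    simp only [hQ]
    rw [integral_add (hdivXi.const_mul _) (hWV.const_mul _), integral_const_mul,
      integral_const_mul, I1, I2]
    ring
  have hQc : Continuous Q :=
    (continuous_const.mul (continuous_finsetSum _ fun i _ => ((hXS i).D i).continuous)).add
      (continuous_const.mul (continuous_finsetSum _ fun i _ =>
        (hWS i).continuous.mul (hVS i).continuous))
  have hrG : ∀ x, ∑ i, D i η x ^ 2 + 4 * r x ^ 2 * ∑ i, V i x ^ 2 = 4 * (r x * G x) := by
    intro x
    simp only [hGdef, Finset.mul_sum, ← Finset.sum_add_distrib]
    refine Finset.sum_congr rfl fun i _ => ?_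
    have : 4 * r x ^ 2 * V i x ^ 2 = 4 * J i x ^ 2 := by rw [← hVr i x]; ring
    rw [this, hDη]
    simp only [hJ, hrdef]; ring
  have hco : ∀ x, 0 ≤ Q x ∧
      (Q x = 0 → ∑ i, D i η x ^ 2 = 0 ∧ ∑ i, V i x ^ 2 = 0 ∧ r x = 1) := by
    intro x
    refine coercive (v₀ := V 0 x) hδ hcδ (hr x) (Finset.sum_nonneg fun i _ => sq_nonneg _)
      (Finset.single_le_sum (f := fun i => V i x ^ 2) (fun i _ => sq_nonneg _)
        (Finset.mem_univ 0)) ?_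
    have h1 : ∑ i, W i x * V i x = r x * ∑ i, V i x ^ 2 - c / 2 * η x * V 0 x := by
      have : ∀ i, W i x * V i x = r x * V i x ^ 2 - (if i = 0 then c / 2 else 0) * η x * V i x :=
        fun i => by simp only [hW]; rw [← hVr i x]; ring
      simp only [this, Finset.sum_sub_distrib, ← Finset.mul_sum]
      simp
    simp only [hQ]
    rw [hdivX, h1, ← hVr 0 x]
    have h2 := hrG x
    have hη' : η x = 1 - r x := rfl
    rw [hη']
    linear_combination (1 - r x) * h2
  have hQz : Q x = 0 := by
    have h1 := (integral_eq_zero_iff_of_nonneg (fun x => (hco x).1) hQi).1 hQ0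
    have h2 := (hQc.ae_eq_iff_eq (μ := volume) continuous_const).1 h1
    exact congrFun h2 x
  obtain ⟨s1, s2, s3⟩ := (hco x).2 hQz
  refine ⟨s3, ?_⟩
  have h3 := hrG x
  rw [s1, s2, s3] at h3
  have h4 : G x = 0 := by linarith
  intro i
  have h5 := (Finset.sum_eq_zero_iff_of_nonneg (fun i _ => by positivity)).1 h4 i
    (Finset.mem_univ i)
  constructor
  · nlinarith [sq_nonneg (D i a x), sq_nonneg (D i b x)]
  · nlinarith [sq_nonneg (D i a x), sq_nonneg (D i b x)]

/-- A bounded finite energy travelling wave with `|ψ|² > 1 - δ` everywhere, `c² + 4δ < 2`, is a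
constant of modulus one. -/
theorem trivial_of_close [NeZero d] {c δ M : ℝ} (hδ : 0 < δ) (hcδ : c ^ 2 + 4 * δ < 2)
    {ψ : Ed d → ℂ} (hψ : Sm ψ) (h : GPeq c ψ) (hE : FiniteEnergy ψ) (hM : ∀ x, ‖ψ x‖ ≤ M)
    (hη : ∀ x, 1 - ‖ψ x‖ ^ 2 < δ) : ¬ Nontriv ψ := by
  have hn : ∀ x, (ψ x).re * (ψ x).re + (ψ x).im * (ψ x).im = ‖ψ x‖ ^ 2 := fun x => by
    rw [← Complex.normSq_eq_norm_sq, Complex.normSq_apply]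
  have hgrad : ∀ x, ∑ i, (D i (fun y => (ψ y).re) x ^ 2 + D i (fun y => (ψ y).im) x ^ 2) =
      gradSq ψ x := fun x => Finset.sum_congr rfl fun i _ => by
    rw [D_re hψ, D_im hψ, ← Complex.normSq_eq_norm_sq, Complex.normSq_apply, D, pd]; ring
  have hg0 : ∀ x, 0 ≤ gradSq ψ x := fun x => Finset.sum_nonneg fun i _ => by positivity
  have heq : ∀ x, Complex.I * c * D 0 ψ x + Lap ψ x + (1 - ((‖ψ x‖ ^ 2 : ℝ) : ℂ)) * ψ x = 0 :=
    fun x => by rw [Complex.ofReal_pow]; exact h x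
  have key := real_core (c := c) (M := M ^ 2) hδ hcδ hψ.re hψ.im
    (fun x => by
      have := congrArg Complex.re (heq x)
      rw [D_im hψ, Lap_re hψ, hn]
      simp [-Complex.ofReal_pow] at this
      linarith)
    (fun x => by
      have := congrArg Complex.im (heq x)
      rw [D_re hψ, Lap_im hψ, hn]
      simp [-Complex.ofReal_pow] at this
      linarith)
    (by
      refine (hE.const_mul 2).mono' (Continuous.aestronglyMeasurable
        (continuous_finsetSum _ fun i _ => ((hψ.re.D i).continuous.pow 2).add
          ((hψ.im.D i).continuous.pow 2))) (ae_of_all _ fun x => ?_)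
      rw [hgrad, Real.norm_of_nonneg (hg0 x), eDen]
      nlinarith [sq_nonneg (1 - ‖ψ x‖ ^ 2)])
    (by
      simp only [hn]
      refine (hE.const_mul 4).mono' (Continuous.aestronglyMeasurable
        ((continuous_const.sub (hψ.continuous.norm.pow 2)).pow 2)) (ae_of_all _ fun x => ?_)
      rw [Real.norm_of_nonneg (sq_nonneg _), eDen]
      nlinarith [hg0 x])
    (fun x => by rw [hn]; exact pow_le_pow_left₀ (norm_nonneg _) (hM x) 2)
    (fun x => by rw [hn]; linarith [hη x])
  have hf : ∀ x, fderiv ℝ ψ x = 0 := by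
    intro x
    have hz : ∀ i, fderiv ℝ ψ x (EuclideanSpace.single i 1) = 0 := fun i => by
      obtain ⟨h1, h2⟩ := (key x).2 i
      rw [D_re hψ] at h1
      rw [D_im hψ] at h2
      exact Complex.ext h1 h2
    ext1 v
    have := congrArg (fderiv ℝ ψ x) ((EuclideanSpace.basisFun (Fin d) ℝ).sum_repr v)
    rw [← this]
    simp [hz]
  unfold Nontriv
  rw [not_not]
  refine ⟨ψ 0, ?_, funext fun x => is_const_of_fderiv_eq_zero (hψ.differentiable (by simp)) hf x 0⟩
  have := (key 0).1
  rw [hn] at this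
  nlinarith [norm_nonneg (ψ 0)]

end nonvanishing

/-! ### Compactness and passage to the limit -/

section compactness

variable {d : ℕ}

lemma properSpace_multilinear (k : ℕ) : ProperSpace (Ed d [×k]→L[ℝ] ℂ) := by
  have : FiniteDimensional ℝ (Ed d [×k]→L[ℝ] ℂ) :=
    FiniteDimensional.of_injective
      (ContinuousMultilinearMap.toMultilinearMapLinear (R' := ℝ) (A := ℝ)
        (M₁ := fun _ : Fin k => Ed d) (M₂ := ℂ))
      ContinuousMultilinearMap.toMultilinearMap_injective
  exact FiniteDimensional.proper_real _

/-- An equi-Lipschitz sequence converging on a dense set converges uniformly on compact sets. -/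
lemma tendsto_of_lipschitz {F : Type*} [NormedAddCommGroup F] [CompleteSpace F]
    {h : ℕ → Ed d → F} {C : ℝ} (hL : ∀ n x y, ‖h n x - h n y‖ ≤ C * ‖x - y‖) {q : ℕ → Ed d}
    (hq : DenseRange q) (hconv : ∀ j, ∃ l, Tendsto (fun n => h n (q j)) atTop (𝓝 l)) :
    ∃ g : Ed d → F, ∀ K, IsCompact K → TendstoUniformlyOn h g atTop K := by
  have hL' : ∀ n x y, dist (h n x) (h n y) ≤ max C 1 * dist x y := fun n x y => by
    rw [dist_eq_norm, dist_eq_norm]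
    exact (hL n x y).trans (mul_le_mul_of_nonneg_right (le_max_left _ _) (norm_nonneg _))
  have hC : 0 < max C 1 := lt_of_lt_of_le one_pos (le_max_right _ _)
  have hpt : ∀ x, ∃ l, Tendsto (fun n => h n x) atTop (𝓝 l) := by
    intro x
    refine cauchySeq_tendsto_of_complete (Metric.cauchySeq_iff'.2 fun ε hε => ?_)
    obtain ⟨j, hj⟩ := hq.exists_dist_lt x (show 0 < ε / (3 * max C 1) by positivity)
    obtain ⟨l, hl⟩ := hconv j
    obtain ⟨N, hN⟩ := Metric.cauchySeq_iff'.1 hl.cauchySeq (ε / 3) (by positivity)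
    refine ⟨N, fun n hn => ?_⟩
    have e : max C 1 * dist x (q j) < ε / 3 := by
      rw [lt_div_iff₀ (by positivity)] at hj
      rw [lt_div_iff₀ (by norm_num)]; linarith
    have h1 := hL' n x (q j)
    have h2 := hL' N x (q j)
    have h3 := hN n hn
    have h4 := dist_triangle4 (h n x) (h n (q j)) (h N (q j)) (h N x)
    rw [dist_comm (h N (q j))] at h4
    linarith
  choose g hg using hpt
  refine ⟨g, fun K hK => ?_⟩
  have heq : Equicontinuous h := by
    refine Metric.equicontinuous_of_continuity_modulus (fun t => max C 1 * t) ?_ h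
      (fun x y n => hL' n x y)
    have : Continuous fun t : ℝ => max C 1 * t := by fun_prop
    simpa using this.tendsto 0
  have := (EquicontinuousOn.tendsto_uniformOnFun_iff_pi (𝔖 := {K | IsCompact K})
    (fun _ h => h) (Set.eq_univ_of_forall fun x => ⟨{x}, isCompact_singleton, rfl⟩)
    (fun K _ => heq.equicontinuousOn K) atTop g).2 (tendsto_pi_nhds.2 hg)
  exact UniformOnFun.tendsto_iff_tendstoUniformlyOn.1 this K hK

/-- A sequence with uniformly bounded derivatives of all orders has a subsequence converging
locally uniformly with all derivatives. The Taylor series of the limit is assembled from the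
limits of the iterated derivatives. -/
theorem exists_subseq_LocCk {u : ℕ → Ed d → ℂ} (hu : ∀ n, Sm (u n)) (hb : ∀ k, UB k u) :
    ∃ φ : ℕ → ℕ, StrictMono φ ∧ ∃ ψ₀ : Ed d → ℂ, Sm ψ₀ ∧ LocCk (fun n => u (φ n)) ψ₀ := by
  have hb' : ∀ k, ∃ C, ∀ n x, ‖iteratedFDeriv ℝ k (u n) x‖ ≤ C := fun k => hb k k le_rfl
  choose C hC using hb'
  set q := TopologicalSpace.denseSeq (Ed d) with hq
  -- diagonal extraction, as sequential compactness of a countable product of balls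
  have hcomp : IsCompact (Set.univ.pi fun p : ℕ × ℕ =>
      Metric.closedBall (0 : Ed d [×p.1]→L[ℝ] ℂ) (C p.1)) :=
    isCompact_univ_pi fun p => by
      have := properSpace_multilinear (d := d) p.1
      exact isCompact_closedBall _ _
  let X : ℕ → (p : ℕ × ℕ) → (Ed d [×p.1]→L[ℝ] ℂ) :=
    fun n p => iteratedFDeriv ℝ p.1 (u n) (q p.2)
  have hX : ∀ n, X n ∈ Set.univ.pi fun p : ℕ × ℕ =>
      Metric.closedBall (0 : Ed d [×p.1]→L[ℝ] ℂ) (C p.1) := fun n p _ =>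
    mem_closedBall_zero_iff.2 (hC p.1 n (q p.2))
  obtain ⟨L, -, φ, hφ, hlim⟩ := hcomp.tendsto_subseq hX
  rw [tendsto_pi_nhds] at hlim
  have hex : ∀ k, ∃ g : Ed d → (Ed d [×k]→L[ℝ] ℂ), ∀ K, IsCompact K →
      TendstoUniformlyOn (fun n => iteratedFDeriv ℝ k (u (φ n))) g atTop K := by
    intro k
    refine tendsto_of_lipschitz (C := C (k + 1)) (fun n x y => ?_)
      (TopologicalSpace.denseRange_denseSeq (Ed d)) (fun j => ⟨L (k, j), hlim (k, j)⟩)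
    exact Convex.norm_image_sub_le_of_norm_fderiv_le (𝕜 := ℝ) (s := Set.univ)
      (fun z _ => ((hu (φ n)).iter k).da z)
      (fun z _ => by rw [norm_fderiv_iteratedFDeriv]; exact hC (k + 1) (φ n) z)
      convex_univ (Set.mem_univ _) (Set.mem_univ _)
  choose g hg using hex
  have hloc : ∀ k, TendstoLocallyUniformlyOn (fun n => iteratedFDeriv ℝ k (u (φ n))) (g k) atTop
      Set.univ := fun k =>
    (tendstoLocallyUniformlyOn_iff_forall_isCompact isOpen_univ).2 fun K _ hK => hg k K hK
  have hpt : ∀ k x, Tendsto (fun n => iteratedFDeriv ℝ k (u (φ n)) x) atTop (𝓝 (g k x)) :=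
    fun k x => (hloc k).tendsto_at (Set.mem_univ x)
  have hder : ∀ k x, HasFDerivAt (g k) ((g (k + 1) x).curryLeft) x := by
    intro k x
    let T := (continuousMultilinearCurryLeftEquiv ℝ (fun _ : Fin (k + 1) => Ed d) ℂ)
    refine hasFDerivAt_of_tendstoLocallyUniformlyOn (l := atTop) (𝕜 := ℝ)
      (f := fun n => iteratedFDeriv ℝ k (u (φ n)))
      (f' := fun n => fderiv ℝ (iteratedFDeriv ℝ k (u (φ n))))
      (g' := fun x => (g (k + 1) x).curryLeft) isOpen_univ ?_
      (fun n x _ => (((hu (φ n)).iter k).da x).hasFDerivAt) (fun x _ => hpt k x) (Set.mem_univ x)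
    have h1 := T.isometry.uniformContinuous.comp_tendstoLocallyUniformlyOn (hloc (k + 1))
    refine h1.congr fun n x _ => ?_
    exact T.apply_symm_apply _
  set p : Ed d → FormalMultilinearSeries ℝ (Ed d) ℂ := fun x k => g k x with hp
  have hT : HasFTaylorSeriesUpTo ((⊤ : ℕ∞) : WithTop ℕ∞) (fun x => (g 0 x).curry0) p :=
    ⟨fun x => rfl, fun m _ x => hder m x,
      fun m _ => continuous_iff_continuousAt.2 fun x => (hder m x).continuousAt⟩
  refine ⟨φ, hφ, fun x => (g 0 x).curry0, hT.contDiff, fun k K hK => ?_⟩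
  have : iteratedFDeriv ℝ k (fun x => (g 0 x).curry0) = g k :=
    funext fun x => (hT.eq_iteratedFDeriv (nat_le_top' k) x).symm
  rw [this]
  exact hg k K hK

lemma LocCk.tendsto_iter {u : ℕ → Ed d → ℂ} {ψ : Ed d → ℂ} (h : LocCk u ψ) (k : ℕ) (x : Ed d)
    (m : Fin k → Ed d) : Tendsto (fun n => iteratedFDeriv ℝ k (u n) x m) atTop
      (𝓝 (iteratedFDeriv ℝ k ψ x m)) :=
  ((ContinuousMultilinearMap.apply ℝ (fun _ : Fin k => Ed d) ℂ m).continuous.tendsto _).comp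
    ((h k {x} isCompact_singleton).tendsto_at rfl)

lemma D_eq_iter {f : Ed d → ℂ} (i : Fin d) (x : Ed d) :
    D i f x = iteratedFDeriv ℝ 1 f x (fun _ => EuclideanSpace.single i 1) := by
  rw [iteratedFDeriv_one_apply, D]

lemma Lap_eq_iter {f : Ed d → ℂ} (hf : Sm f) (x : Ed d) :
    Lap f x = ∑ i, iteratedFDeriv ℝ 2 f x (fun _ => EuclideanSpace.single i 1) := by
  refine Finset.sum_congr rfl fun i _ => ?_
  rw [iteratedFDeriv_two_apply]
  change fderiv ℝ (fun y => fderiv ℝ f y (EuclideanSpace.single i 1)) x _ = _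
  rw [fderiv_clm_apply (hf.fd.da x) (differentiableAt_const _)]
  simp

lemma LocCk.tendsto_pt {u : ℕ → Ed d → ℂ} {ψ : Ed d → ℂ} (h : LocCk u ψ) (x : Ed d) :
    Tendsto (fun n => u n x) atTop (𝓝 (ψ x)) := by
  simpa using h.tendsto_iter 0 x (fun _ => 0)

/-- The equation passes to the limit. -/
lemma GPeq_of_LocCk [NeZero d] {c : ℝ} {cn : ℕ → ℝ} (hc : Tendsto cn atTop (𝓝 c))
    {u : ℕ → Ed d → ℂ} {ψ : Ed d → ℂ} (hu : ∀ n, Sm (u n)) (hψ : Sm ψ) (h : LocCk u ψ)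
    (heq : ∀ n, GPeq (cn n) (u n)) : GPeq c ψ := by
  intro x
  have h1 : Tendsto (fun n => D 0 (u n) x) atTop (𝓝 (D 0 ψ x)) := by
    simp only [D_eq_iter]; exact h.tendsto_iter 1 x _
  have h2 : Tendsto (fun n => Lap (u n) x) atTop (𝓝 (Lap ψ x)) := by
    simp only [Lap_eq_iter (hu _), Lap_eq_iter hψ]
    exact tendsto_finsetSum _ fun i _ => h.tendsto_iter 2 x _
  have h3 := h.tendsto_pt x
  have hcc : Tendsto (fun n => (cn n : ℂ)) atTop (𝓝 (c : ℂ)) :=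
    (Complex.continuous_ofReal.tendsto c).comp hc
  have hnn : Tendsto (fun n => (‖u n x‖ : ℂ)) atTop (𝓝 (‖ψ x‖ : ℂ)) :=
    (Complex.continuous_ofReal.tendsto _).comp h3.norm
  have h4 := (((hcc.const_mul Complex.I).mul h1).add h2).add
    (((hnn.pow 2).const_sub 1).mul h3)
  exact tendsto_nhds_unique h4 (tendsto_const_nhds.congr fun n => (heq n x).symm)

lemma GPeq_comp_add [NeZero d] {c : ℝ} {ψ : Ed d → ℂ} (h : GPeq c ψ) (a : Ed d) :
    GPeq c (fun x => ψ (x + a)) := by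
  intro x
  have h1 := D_comp_add (f := ψ) a 0 x
  have h2 := Lap_comp_add (f := ψ) a x
  have h3 : Complex.I * c * D 0 (fun x => ψ (x + a)) x + Lap (fun x => ψ (x + a)) x +
      (1 - (‖ψ (x + a)‖ : ℂ) ^ 2) * ψ (x + a) = 0 := by
    rw [h1, h2]; exact h (x + a)
  exact h3

end compactness

/-- local compactness of sequences of nontrivial finite energy traveling
waves, up to translations and a subsequence; the limit may have infinite energy. -/
theorem statement12 (d : ℕ) [NeZero d] (hd : d = 2 ∨ d = 3)
    (c : ℝ) (hc : c ∈ Set.Ioo 0 (Real.sqrt 2))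
    (cn : ℕ → ℝ) (hcn : ∀ n, cn n ∈ Set.Ioo 0 (Real.sqrt 2))
    (hclim : Tendsto cn atTop (𝓝 c))
    (ψn : ℕ → Ed d → ℂ)
    (hsol : ∀ n, ContDiff ℝ (⊤ : ℕ∞) (ψn n) ∧ GPeq (cn n) (ψn n) ∧
      FiniteEnergy (ψn n) ∧ Nontriv (ψn n)) :
    ∃ (ξ : ℕ → Ed d) (φ : ℕ → ℕ), StrictMono φ ∧
      ∃ ψ₀ : Ed d → ℂ, ContDiff ℝ (⊤ : ℕ∞) ψ₀ ∧ GPeq c ψ₀ ∧ Nontriv ψ₀ ∧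
        LocCk (fun n x => ψn (φ n) (x - ξ (φ n))) ψ₀ := by
  have hc2 : c ^ 2 < 2 := by
    have := Real.sq_sqrt (show (0:ℝ) ≤ 2 by norm_num)
    nlinarith [hc.1, hc.2]
  -- `δ` leaves room for the speeds to vary: eventually `cn n ^ 2 + 4 * δ < 2`
  set δ : ℝ := (2 - c ^ 2) / 8 with hδ
  have hδ0 : 0 < δ := by rw [hδ]; linarith
  have hev : ∀ᶠ n in atTop, cn n ^ 2 + 4 * δ < 2 :=
    ((hclim.pow 2).add_const (4 * δ)).eventually (gt_mem_nhds (by rw [hδ]; linarith))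
  have hUB := UB_waves hcn (fun n => (hsol n).1) (fun n => (hsol n).2.1)
  -- where the speed is close to `c`, the modulus must drop to `1 - δ` at some point `y n`
  have hpoint : ∀ n, ∃ y, cn n ^ 2 + 4 * δ < 2 → ‖ψn n y‖ ^ 2 ≤ 1 - δ := by
    intro n
    by_contra! hcon
    have hcδ := (hcon 0).1
    obtain ⟨M, hM⟩ := hUB 0 0 le_rfl
    exact trivial_of_close hδ0 hcδ (hsol n).1 (hsol n).2.1 (hsol n).2.2.1
      (fun x => by simpa using hM n x) (fun x => by linarith [(hcon x).2]) (hsol n).2.2.2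
  choose y hy using hpoint
  set v : ℕ → Ed d → ℂ := fun n x => ψn n (x + y n) with hv
  have hvS : ∀ n, Sm (v n) := fun n => Sm.comp_add (hsol n).1 (y n)
  have hvUB : ∀ k, UB k v := fun k l hl => by
    obtain ⟨C, hC⟩ := hUB k l hl
    exact ⟨C, fun n x => by rw [hv, iteratedFDeriv_comp_add_right]; exact hC n _⟩
  obtain ⟨φ, hφ, ψ₀, hψ₀, hloc⟩ := exists_subseq_LocCk hvS hvUB
  refine ⟨fun n => -y n, φ, hφ, ψ₀, hψ₀, ?_, ?_, ?_⟩
  · exact GPeq_of_LocCk (hclim.comp hφ.tendsto_atTop) (fun n => hvS (φ n)) hψ₀ hloc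
      (fun n => GPeq_comp_add (hsol (φ n)).2.1 _)
  · rintro ⟨z, hz, rfl⟩
    have h1 := (hloc.tendsto_pt 0).norm.pow 2
    have h2 : ‖z‖ ^ 2 ≤ 1 - δ := by
      refine le_of_tendsto h1 ?_
      filter_upwards [hφ.tendsto_atTop.eventually hev] with n hn
      simpa [hv] using hy (φ n) hn
    rw [hz] at h2
    linarith
  · simpa only [sub_neg_eq_add] using hloc
end
end
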